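/- For fixed ρ > 0, limsup_{n→∞} ( n^{1/2} D_V ) ≤ ((1 − e^{−φ})/(5 g_V(ρ))) · ( √( 11 φ²/g_V(ρ)^{1/2} + 5 η_V(ρ)^{1/2} ) + 2φ/g_V(ρ)^{1/4} )², where η_V(ρ) := lim_{n→∞} η_V(n,ρ). -/

import Mathlib

open MeasureTheory ProbabilityTheory Filter Set Metric
open scoped ENNReal NNReal BigOperators Topology Classical

noncomputable section

/-- Side length `n^(1/d)` of the cube `C_n` of volume `n` in dimension `d`. -/
def sideLen (d n : ℕ) : ℝ := (n : ℝ) ^ ((d : ℝ)⁻¹)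

/-- The cube `C_n = [0, L)^d`. -/
def box (d : ℕ) (L : ℝ) : Set (Fin d → ℝ) := Set.univ.pi fun _ => Set.Ico (0 : ℝ) L

/-- The Euclidean toroidal distance on the cube `[0, L)^d`. -/
def torDist {d : ℕ} (L : ℝ) (x y : Fin d → ℝ) : ℝ :=
  Real.sqrt (∑ i, (⨅ k : ℤ, |x i - y i - k * L|) ^ 2)

/-- The toroidal ball `B_r(x) = {y ∈ C_n : D(x,y) ≤ r}`. -/
def torBall {d : ℕ} (L : ℝ) (x : Fin d → ℝ) (r : ℝ) : Set (Fin d → ℝ) :=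
  {y ∈ box d L | torDist L x y ≤ r}

/-- Addition (translation) in the torus `[0, L)^d`. -/
def torAdd {d : ℕ} (L : ℝ) (y x : Fin d → ℝ) : Fin d → ℝ :=
  fun i => L * Int.fract ((y i + x i) / L)

/-- The uniform probability measure on the cube `[0, L)^d`. -/
def uniformBox (d : ℕ) (L : ℝ) : Measure (Fin d → ℝ) :=
  ((L.toNNReal ^ d)⁻¹ : ℝ≥0) • volume.restrict (box d L)

/-- The joint law of `n` independent points uniformly distributed on the cube `C_n`
of volume `n`; a point configuration is `ω : Fin n → (Fin d → ℝ)`, with `U_i = ω i`. -/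
def binppLaw (d n : ℕ) : Measure (Fin n → Fin d → ℝ) :=
  Measure.pi fun _ => uniformBox d (sideLen d n)

/-- The total covered volume `V` of the union of toroidal balls of radius `ρ`
centered at the `n` points. -/
def coveredVol (d n : ℕ) (ρ : ℝ) (ω : Fin n → Fin d → ℝ) : ℝ :=
  (volume (⋃ i, torBall (sideLen d n) (ω i) ρ)).toReal

/-- The number `S` of isolated points: indices `i` with `𝒰_n ∩ B_ρ(U_i) = {U_i}`. -/
def isolCount (d n : ℕ) (ρ : ℝ) (ω : Fin n → Fin d → ℝ) : ℝ :=
  ∑ i, if Set.range ω ∩ torBall (sideLen d n) (ω i) ρ = {ω i} then 1 else 0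

/-- `π_d`: the volume of the unit ball in `ℝ^d`. -/
def unitBallVol (d : ℕ) : ℝ :=
  (volume (Metric.closedBall (0 : EuclideanSpace ℝ (Fin d)) 1)).toReal

/-- `φ = π_d ρ^d`. -/
def phi (d : ℕ) (ρ : ℝ) : ℝ := unitBallVol d * ρ ^ d

/-- The standard normal cumulative distribution function. -/
def stdGaussCDF (t : ℝ) : ℝ := (gaussianReal 0 1 (Set.Iic t)).toReal

/-- The Kolmogorov distance `D_X` between the law of the standardized version of `X`
and the standard normal. -/
def kolDist {Ω : Type*} [MeasurableSpace Ω] (P : Measure Ω) (X : Ω → ℝ) : ℝ :=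
  ⨆ t : ℝ,
    |(P {ω | (X ω - ∫ x, X x ∂P) / Real.sqrt (variance X P) ≤ t}).toReal - stdGaussCDF t|

/-- A fixed unit vector in `ℝ^d` (junk value `0` if `d = 0`). -/
def unitVec (d : ℕ) : EuclideanSpace ℝ (Fin d) :=
  if h : 0 < d then EuclideanSpace.single (⟨0, h⟩ : Fin d) 1 else 0

/-- `ω_d(r)`: the volume of the union of two unit balls in `ℝ^d` whose centers are
at distance `r` apart. -/
def omegaVol (d : ℕ) (r : ℝ) : ℝ :=
  (volume (Metric.closedBall (0 : EuclideanSpace ℝ (Fin d)) 1 ∪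
      Metric.closedBall (r • unitVec d) 1)).toReal

/-- The integral `J_{r,d}(ρ) = d π_d ∫_0^r exp(-ρ^d ω_d(t)) t^{d-1} dt`. -/
def Jint (r : ℝ) (d : ℕ) (ρ : ℝ) : ℝ :=
  d * unitBallVol d * ∫ t in (0:ℝ)..r, Real.exp (-(ρ ^ d * omegaVol d t)) * t ^ (d - 1)

/-- The limiting variance density `g_V(ρ)`. -/
def gV (d : ℕ) (ρ : ℝ) : ℝ :=
  ρ ^ d * Jint 2 d ρ - (2 ^ d * phi d ρ + phi d ρ ^ 2) * Real.exp (-(2 * phi d ρ))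

/-- The limiting variance density `g_S(ρ)`. -/
def gS (d : ℕ) (ρ : ℝ) : ℝ :=
  Real.exp (-phi d ρ) - (1 + (2 ^ d - 2) * phi d ρ + phi d ρ ^ 2) * Real.exp (-(2 * phi d ρ))
    + ρ ^ d * (Jint 2 d ρ - Jint 1 d ρ)

/-- `κ_d`: the maximum number of closed unit balls in `ℝ^d` that can be packed so that
they all intersect a closed unit ball at the origin but are pairwise disjoint. -/
def kappa (d : ℕ) : ℕ :=
  sSup {k : ℕ | ∃ c : Fin k → EuclideanSpace ℝ (Fin d),
    (∀ i, (Metric.closedBall (c i) 1 ∩ Metric.closedBall 0 1).Nonempty) ∧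
    Pairwise fun i j => Disjoint (Metric.closedBall (c i) 1) (Metric.closedBall (c j) 1)}

/-- `η_V(n, ρ)`. -/
def etaV (d n : ℕ) (ρ : ℝ) : ℝ :=
  2 * phi d ρ ^ 2 * ((3 ^ d + 1) * phi d ρ + 1) ^ 2 *
      (1 + (2 ^ d + 1) * 6 ^ d * phi d ρ +
        ((2 * n - 6 ^ d * phi d ρ) / (n - 6 ^ d * phi d ρ)) * 6 ^ (2 * d) * phi d ρ ^ 2) +
    2 * phi d ρ ^ 4 *
      (3 * (4 ^ d + 2 ^ d) * phi d ρ +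
        3 * 4 ^ d * phi d ρ ^ 2 * ((2 * n - 3 * 2 ^ d * phi d ρ) / (n - 3 * 2 ^ d * phi d ρ)) +
        4 + 2 / n)

/-- `η_S(n, ρ)`. -/
def etaS (d n : ℕ) (ρ : ℝ) : ℝ :=
  2 * (1 + 2 * (kappa d : ℝ)) ^ 2 *
      (1 + (2 ^ d + 1) * 3 ^ d * phi d ρ +
        ((2 * n - 3 ^ d * phi d ρ) / (n - 3 ^ d * phi d ρ)) * 9 ^ d * phi d ρ ^ 2) +
    (((1 : ℝ) + kappa d) ^ 2 / 2) *
      ((2 ^ d + 2 * 3 ^ d + 3) * phi d ρ +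
        (2 ^ (d + 1) + 1) *
          ((2 * n - (2 ^ (d + 1) + 1) * phi d ρ) / (n - (2 ^ (d + 1) + 1) * phi d ρ)) *
          phi d ρ ^ 2 +
        (4 * n - 2) / (n - 1))

/-!
Revealing the points one at a time writes the centred volume `V - E V` as the sum of its Doob
martingale increments. The increment due to `U_j` has mean zero given the other points, and
removing `U_j` replaces `V` by a quantity independent of `U_j` that is smaller by at most `φ`. So
the increments, paired with these changes, form a Stein coupling with nonnegative shifts bounded by
`φ / SD V`. Stein's method with a piecewise linear smoothing of half-line indicators then bounds
the Kolmogorov distance by the fluctuations of the sum of the products of increments and changes,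
plus a smoothing error controlled by the distance itself. These fluctuations are of order `√n` by
the Efron–Stein inequality, because a point only affects the terms whose balls overlap its ball.

The variance of `V` is explicit: two sites both stay uncovered with probability
`(1 - (2 φ - l) / n) ^ n`, where `l` is the volume common to the balls around them. On a torus wider
than `4 ρ` lens volumes are Euclidean, and dominated convergence and polar coordinates turn
`Var V / n` into `g_V(ρ)`.
-/

/-! ### The standard normal law -/

section Gaussian

lemma hasDerivAt_gaussianPDFReal (μ : ℝ) (v : ℝ≥0) (x : ℝ) :
    HasDerivAt (gaussianPDFReal μ v) (-((x - μ) / v) * gaussianPDFReal μ v x) x := by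
  have hexponent : HasDerivAt (fun x : ℝ => -(x - μ) ^ 2 / (2 * v)) (-((x - μ) / v)) x := by
    refine ((((hasDerivAt_id x).sub_const μ).pow 2).neg.div_const _).congr_deriv ?_
    simp only [id, Nat.add_one_sub_one, pow_one, mul_one, Nat.cast_ofNat]
    rw [neg_div, mul_div_mul_left _ _ two_ne_zero]
  refine (hexponent.exp.const_mul _).congr_deriv ?_
  rw [gaussianPDFReal]
  ring

lemma continuous_gaussianPDFReal (μ : ℝ) (v : ℝ≥0) : Continuous (gaussianPDFReal μ v) :=
  continuous_iff_continuousAt.2 fun x => (hasDerivAt_gaussianPDFReal μ v x).continuousAt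

lemma setIntegral_gaussianReal_eq_setIntegral_smul {E : Type*} [NormedAddCommGroup E]
    [NormedSpace ℝ E] {μ : ℝ} {v : ℝ≥0} (hv : v ≠ 0) {s : Set ℝ} (hs : MeasurableSet s)
    (f : ℝ → E) :
    ∫ x in s, f x ∂gaussianReal μ v = ∫ x in s, gaussianPDFReal μ v x • f x := by
  rw [← integral_indicator hs, ← integral_indicator hs, integral_gaussianReal_eq_integral_smul hv]
  simp only [indicator_apply, smul_ite, smul_zero]

lemma integrable_gaussianReal_iff {E : Type*} [NormedAddCommGroup E] [NormedSpace ℝ E]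
    {μ : ℝ} {v : ℝ≥0} (hv : v ≠ 0) (f : ℝ → E) :
    Integrable f (gaussianReal μ v) ↔ Integrable fun x => gaussianPDFReal μ v x • f x := by
  rw [gaussianReal_of_var_ne_zero μ hv, integrable_withDensity_iff_integrable_smul'
    (measurable_gaussianPDF μ v) (ae_of_all _ fun _ => ENNReal.ofReal_lt_top)]
  simp only [toReal_gaussianPDF]

lemma hasDerivAt_setIntegral_Iic {E : Type*} [NormedAddCommGroup E] [NormedSpace ℝ E]
    [CompleteSpace E] {f : ℝ → E} (hf : Continuous f) (hfi : Integrable f) (w : ℝ) :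
    HasDerivAt (fun w => ∫ x in Iic w, f x) (f w) w := by
  have hsplit : (fun w => ∫ x in Iic w, f x) =
      fun w => (∫ x in Iic 0, f x) + ∫ x in (0 : ℝ)..w, f x := by
    ext w
    rw [← intervalIntegral.integral_Iic_sub_Iic hfi.integrableOn hfi.integrableOn,
      add_sub_cancel]
  rw [hsplit]
  exact (intervalIntegral.integral_hasDerivAt_right hfi.intervalIntegrable
    (hf.stronglyMeasurableAtFilter _ _) hf.continuousAt).const_add _

/-- The standard normal law. -/
abbrev stdGauss : Measure ℝ := gaussianReal 0 1

/-- The density of the standard normal law. -/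
abbrev stdGaussPDF : ℝ → ℝ := gaussianPDFReal 0 1

lemma stdGaussPDF_eq (x : ℝ) : stdGaussPDF x = (√(2 * Real.pi))⁻¹ * Real.exp (-x ^ 2 / 2) := by
  simp [gaussianPDFReal]

lemma stdGaussPDF_pos (x : ℝ) : 0 < stdGaussPDF x := gaussianPDFReal_pos 0 1 x one_ne_zero

lemma stdGaussPDF_neg (x : ℝ) : stdGaussPDF (-x) = stdGaussPDF x := by simp [stdGaussPDF_eq]

lemma hasDerivAt_stdGaussPDF (x : ℝ) : HasDerivAt stdGaussPDF (-x * stdGaussPDF x) x := by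
  simpa using hasDerivAt_gaussianPDFReal 0 1 x

lemma stdGaussPDF_le (x : ℝ) : stdGaussPDF x ≤ 2 / 5 := by
  have hexp : Real.exp (-x ^ 2 / 2) ≤ 1 := Real.exp_le_one_iff.2 (by nlinarith [sq_nonneg x])
  have hsqrt : 5 / 2 ≤ √(2 * Real.pi) := Real.le_sqrt_of_sq_le (by nlinarith [Real.pi_gt_d4])
  calc stdGaussPDF x ≤ (5 / 2)⁻¹ * 1 := by rw [stdGaussPDF_eq]; gcongr
    _ = 2 / 5 := by norm_num

lemma le_stdGaussPDF {x : ℝ} (hx : |x| ≤ 1) : 9 / 50 ≤ stdGaussPDF x := by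
  have hexp : 1 / 2 ≤ Real.exp (-x ^ 2 / 2) := by
    linarith [Real.add_one_le_exp (-x ^ 2 / 2), (sq_le_one_iff_abs_le_one x).2 hx]
  have hsqrt : √(2 * Real.pi) ≤ 13 / 5 :=
    (Real.sqrt_le_left (by norm_num)).2 (by nlinarith [Real.pi_lt_d4])
  calc (9 / 50 : ℝ) ≤ (13 / 5)⁻¹ * (1 / 2) := by norm_num
    _ ≤ stdGaussPDF x := by rw [stdGaussPDF_eq]; gcongr

lemma tendsto_stdGaussPDF_atTop : Tendsto stdGaussPDF atTop (𝓝 0) := by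
  have hsq : Tendsto (fun x : ℝ => -(x ^ 2 / 2)) atTop atBot :=
    tendsto_neg_atTop_atBot.comp
      ((tendsto_pow_atTop two_ne_zero).atTop_div_const two_pos)
  have hlim := (Real.tendsto_exp_atBot.comp hsq).const_mul (√(2 * Real.pi))⁻¹
  rw [mul_zero] at hlim
  exact hlim.congr fun x => by rw [stdGaussPDF_eq, Function.comp_apply, neg_div]

lemma integrable_mul_stdGaussPDF : Integrable fun x => x * stdGaussPDF x := by
  refine ((integrable_mul_exp_neg_mul_sq (b := 1 / 2) (by norm_num)).const_mul
    (√(2 * Real.pi))⁻¹).congr (ae_of_all _ fun x => ?_)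
  beta_reduce
  rw [stdGaussPDF_eq, show -x ^ 2 / 2 = -(1 / 2) * x ^ 2 by ring]
  ring

lemma setIntegral_Ioi_mul_stdGaussPDF (w : ℝ) :
    ∫ x in Ioi w, x * stdGaussPDF x = stdGaussPDF w := by
  simpa using integral_Ioi_of_hasDerivAt_of_tendsto' (a := w)
    (fun x _ => (hasDerivAt_stdGaussPDF x).fun_neg.congr_deriv
      (by ring : -(-x * stdGaussPDF x) = x * stdGaussPDF x))
    integrable_mul_stdGaussPDF.integrableOn tendsto_stdGaussPDF_atTop.neg

lemma stdGauss_real_eq_setIntegral {s : Set ℝ} (hs : MeasurableSet s) :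
    stdGauss.real s = ∫ x in s, stdGaussPDF x := by
  simpa using setIntegral_gaussianReal_eq_setIntegral_smul (μ := 0) one_ne_zero hs fun _ => (1 : ℝ)

/-- Mills' inequality. -/
lemma mul_stdGauss_Ioi_le (w : ℝ) : w * stdGauss.real (Ioi w) ≤ stdGaussPDF w := by
  rw [stdGauss_real_eq_setIntegral measurableSet_Ioi, ← integral_const_mul,
    ← setIntegral_Ioi_mul_stdGaussPDF w]
  exact setIntegral_mono_on ((integrable_gaussianPDFReal 0 1).const_mul w).integrableOn
    integrable_mul_stdGaussPDF.integrableOn measurableSet_Ioi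
    fun x hx => mul_le_mul_of_nonneg_right (le_of_lt hx) (stdGaussPDF_pos x).le

lemma neg_mul_stdGauss_Iic_le (w : ℝ) : -w * stdGauss.real (Iic w) ≤ stdGaussPDF w := by
  have hreflect : stdGauss.real (Ioi (-w)) = stdGauss.real (Iic w) := by
    rw [stdGauss_real_eq_setIntegral measurableSet_Ioi,
      stdGauss_real_eq_setIntegral measurableSet_Iic, ← integral_comp_neg_Iic]
    simp only [stdGaussPDF_neg]
  simpa only [hreflect, stdGaussPDF_neg] using mul_stdGauss_Ioi_le (-w)

lemma stdGauss_real_Ioi (w : ℝ) : stdGauss.real (Ioi w) = 1 - stdGauss.real (Iic w) := by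
  rw [← compl_Iic, probReal_compl_eq_one_sub measurableSet_Iic]

lemma stdGauss_Iic_mul_Ioi_le (w : ℝ) :
    stdGauss.real (Iic w) * (1 - stdGauss.real (Iic w)) ≤ 7 / 5 * stdGaussPDF w := by
  have hpdf := stdGaussPDF_pos w
  have hright := mul_stdGauss_Ioi_le w
  have hleft := neg_mul_stdGauss_Iic_le w
  rw [stdGauss_real_Ioi] at hright
  set P := stdGauss.real (Iic w)
  have hP0 : 0 ≤ P := measureReal_nonneg
  have hP1 : P ≤ 1 := measureReal_le_one
  rcases le_or_gt |w| 1 with hw | hw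
  · nlinarith [le_stdGaussPDF hw, sq_nonneg (P - 1 / 2)]
  · rcases lt_abs.1 hw with hw | hw
    · nlinarith [mul_le_mul_of_nonneg_right hw.le (sub_nonneg.2 hP1)]
    · nlinarith [mul_le_mul_of_nonneg_right hw.le hP0]

lemma lipschitzWith_cdf_stdGauss : LipschitzWith (2 / 5) (cdf stdGauss) := by
  refine LipschitzWith.of_le_add_mul _ fun x y => ?_
  rcases le_total x y with hxy | hxy
  · exact (monotone_cdf _ hxy).trans (le_add_of_nonneg_right (by positivity))
  · have hi := integrable_gaussianPDFReal 0 1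
    have hdiff : cdf stdGauss x - cdf stdGauss y = ∫ t in y..x, stdGaussPDF t := by
      rw [cdf_eq_real, cdf_eq_real, stdGauss_real_eq_setIntegral measurableSet_Iic,
        stdGauss_real_eq_setIntegral measurableSet_Iic,
        intervalIntegral.integral_Iic_sub_Iic hi.integrableOn hi.integrableOn]
    have hbound : ∫ t in y..x, stdGaussPDF t ≤ ∫ _ in y..x, (2 / 5 : ℝ) :=
      intervalIntegral.integral_mono_on hxy hi.intervalIntegrable intervalIntegrable_const
        fun t _ => stdGaussPDF_le t
    rw [intervalIntegral.integral_const, smul_eq_mul, ← hdiff] at hbound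
    rw [Real.dist_eq, abs_of_nonneg (sub_nonneg.2 hxy)]
    push_cast
    linarith

end Gaussian

/-! ### The Stein equation -/

section SteinEquation

/-- The bounded solution `f` of Stein's equation `f'(w) - w f(w) = h(w) - E h(Z)`, with `Z`
standard normal. -/
def steinSolution (h : ℝ → ℝ) (w : ℝ) : ℝ :=
  (∫ x in Iic w, (h x - ∫ y, h y ∂stdGauss) ∂stdGauss) / stdGaussPDF w

lemma hasDerivAt_steinSolution {h : ℝ → ℝ} (hc : Continuous h) (hi : Integrable h stdGauss)
    (w : ℝ) : HasDerivAt (steinSolution h)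
      (w * steinSolution h w + h w - ∫ x, h x ∂stdGauss) w := by
  set N := ∫ x, h x ∂stdGauss with hN
  have hnum : (fun w => ∫ x in Iic w, (h x - N) ∂stdGauss) =
      fun w => ∫ x in Iic w, stdGaussPDF x • (h x - N) :=
    funext fun w => setIntegral_gaussianReal_eq_setIntegral_smul one_ne_zero measurableSet_Iic _
  have hinteg : Integrable fun x => stdGaussPDF x • (h x - N) :=
    (integrable_gaussianReal_iff one_ne_zero _).1 (hi.sub (integrable_const N))
  have hderiv := hasDerivAt_setIntegral_Iic (f := fun x => stdGaussPDF x • (h x - N))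
    ((continuous_gaussianPDFReal 0 1).smul (hc.sub continuous_const)) hinteg w
  rw [← hnum] at hderiv
  refine (hderiv.div (hasDerivAt_stdGaussPDF w) (stdGaussPDF_pos w).ne').congr_deriv ?_
  have := (stdGaussPDF_pos w).ne'
  rw [steinSolution, ← hN, smul_eq_mul]
  field_simp
  ring

variable {h : ℝ → ℝ}

lemma steinSolution_eq (hi : Integrable h stdGauss) (w : ℝ) :
    steinSolution h w =
      ((∫ x in Iic w, h x ∂stdGauss) * (1 - stdGauss.real (Iic w)) -
        (∫ x in Ioi w, h x ∂stdGauss) * stdGauss.real (Iic w)) / stdGaussPDF w := by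
  rw [steinSolution, integral_sub hi.integrableOn (integrable_const _), setIntegral_const,
    smul_eq_mul, ← integral_add_compl (measurableSet_Iic (a := w)) hi, compl_Iic]
  ring

lemma abs_steinSolution_le (hm : Measurable h) (h01 : ∀ x, h x ∈ Icc 0 1) (w : ℝ) :
    |steinSolution h w| ≤ 7 / 5 := by
  have hi : Integrable h stdGauss := Integrable.of_mem_Icc 0 1 hm.aemeasurable (ae_of_all _ h01)
  have hle : ∀ s, ∫ x in s, h x ∂stdGauss ≤ stdGauss.real s := fun s => by
    simpa using integral_mono hi.integrableOn (integrable_const (1 : ℝ)) fun x => (h01 x).2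
  have hnonneg : ∀ s, 0 ≤ ∫ x in s, h x ∂stdGauss := fun s => integral_nonneg fun x => (h01 x).1
  rw [steinSolution_eq hi, abs_div, abs_of_pos (stdGaussPDF_pos w), div_le_iff₀ (stdGaussPDF_pos w)]
  refine le_trans ?_ (stdGauss_Iic_mul_Ioi_le w)
  have hright := hle (Ioi w)
  rw [stdGauss_real_Ioi] at hright
  have hP0 : 0 ≤ stdGauss.real (Iic w) := measureReal_nonneg
  have hP1 : stdGauss.real (Iic w) ≤ 1 := measureReal_le_one
  rw [abs_le]
  constructor <;>
    nlinarith [mul_nonneg (hnonneg (Iic w)) (sub_nonneg.2 hP1), mul_nonneg (hnonneg (Ioi w)) hP0,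
      mul_le_mul_of_nonneg_right (hle (Iic w)) (sub_nonneg.2 hP1),
      mul_le_mul_of_nonneg_right hright hP0]

lemma mul_measureReal_Iic_le_setIntegral_of_antitone {μ : Measure ℝ} [IsFiniteMeasure μ]
    (hi : Integrable h μ) (hm : Antitone h) (w : ℝ) :
    h w * μ.real (Iic w) ≤ ∫ x in Iic w, h x ∂μ := by
  simpa [mul_comm] using setIntegral_mono_on (integrable_const (h w)).integrableOn hi.integrableOn
    (measurableSet_Iic (a := w)) fun x hx => hm hx

lemma setIntegral_Ioi_le_mul_measureReal_of_antitone {μ : Measure ℝ} [IsFiniteMeasure μ]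
    (hi : Integrable h μ) (hm : Antitone h) (w : ℝ) :
    ∫ x in Ioi w, h x ∂μ ≤ h w * μ.real (Ioi w) := by
  simpa [mul_comm] using setIntegral_mono_on hi.integrableOn (integrable_const (h w)).integrableOn
    (measurableSet_Ioi (a := w)) fun x hx => hm (le_of_lt hx)

lemma abs_mul_steinSolution_add_sub_le (hm : Antitone h) (h01 : ∀ x, h x ∈ Icc 0 1) (w : ℝ) :
    |w * steinSolution h w + h w - ∫ x, h x ∂stdGauss| ≤ 1 := by
  have hi : Integrable h stdGauss :=
    Integrable.of_mem_Icc 0 1 hm.measurable.aemeasurable (ae_of_all _ h01)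
  have hpdf := stdGaussPDF_pos w
  have hright := mul_stdGauss_Ioi_le w
  have hleft := neg_mul_stdGauss_Iic_le w
  have ha_le : ∫ x in Iic w, h x ∂stdGauss ≤ stdGauss.real (Iic w) := by
    simpa using integral_mono hi.integrableOn (integrable_const (1 : ℝ)) fun x => (h01 x).2
  have hle_a := mul_measureReal_Iic_le_setIntegral_of_antitone hi hm w
  have hb_nonneg : 0 ≤ ∫ x in Ioi w, h x ∂stdGauss := integral_nonneg fun x => (h01 x).1
  have hb_le := setIntegral_Ioi_le_mul_measureReal_of_antitone hi hm w
  rw [steinSolution_eq hi, ← integral_add_compl (measurableSet_Iic (a := w)) hi, compl_Iic]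
  rw [stdGauss_real_Ioi] at hright hb_le
  set P := stdGauss.real (Iic w)
  set a := ∫ x in Iic w, h x ∂stdGauss
  set b := ∫ x in Ioi w, h x ∂stdGauss
  set m := w * (1 - P) / stdGaussPDF w with hm_def
  set m' := -w * P / stdGaussPDF w with hm'_def
  have hP0 : 0 ≤ P := measureReal_nonneg
  have hP1 : P ≤ 1 := measureReal_le_one
  have hm_le : m ≤ 1 := (div_le_one hpdf).2 hright
  have hm'_le : m' ≤ 1 := (div_le_one hpdf).2 hleft
  have hexpand : w * ((a * (1 - P) - b * P) / stdGaussPDF w) + h w - (a + b) =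
      a * (m - 1) + b * (m' - 1) + h w := by
    rw [hm_def, hm'_def]; field_simp; ring
  have hmP : m * P = -(m' * (1 - P)) := by rw [hm_def, hm'_def]; field_simp
  have hw0 := (h01 w).1
  have hw1 := (h01 w).2
  rw [hexpand, abs_le]
  constructor
  · have := mul_le_mul_of_nonpos_right ha_le (sub_nonpos.2 hm_le)
    have := mul_le_mul_of_nonpos_right hb_le (sub_nonpos.2 hm'_le)
    have := mul_le_mul_of_nonneg_right hm'_le (sub_nonneg.2 hP1)
    nlinarith
  · have := mul_le_mul_of_nonpos_right hle_a (sub_nonpos.2 hm_le)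
    have := mul_nonpos_of_nonneg_of_nonpos hb_nonneg (sub_nonpos.2 hm'_le)
    have := mul_le_mul_of_nonneg_right hm_le hP0
    nlinarith

/-- The term involving `h` appears because `f'` is only as regular as `h`. -/
lemma abs_deriv_sub_deriv_le_of_steinEquation {f f' : ℝ → ℝ} {N B δ t : ℝ} (hm : Antitone h)
    (hf : ∀ w, HasDerivAt f (f' w) w) (hstein : ∀ w, f' w = w * f w + h w - N)
    (hB : ∀ w, |f w| ≤ B) (hf' : ∀ w, |f' w| ≤ 1) (ht : t ∈ Icc 0 δ) (w : ℝ) :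
    |f' (w - t) - f' w| ≤ (B + |w|) * t + (h (w - δ) - h w) := by
  obtain ⟨ht0, htδ⟩ := ht
  have hf'_sub : f' (w - t) - f' w =
      w * (f (w - t) - f w) + -(t * f (w - t)) + (h (w - t) - h w) := by
    rw [hstein, hstein]; ring
  have hlip : |f (w - t) - f w| ≤ 1 * |w - t - w| :=
    convex_univ.norm_image_sub_le_of_norm_hasDerivWithin_le
      (fun x _ => (hf x).hasDerivWithinAt) (fun x _ => hf' x) (mem_univ w) (mem_univ (w - t))
  have hfirst : |w * (f (w - t) - f w)| ≤ |w| * t := by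
    rw [sub_sub_cancel_left, abs_neg, abs_of_nonneg ht0, one_mul] at hlip
    rw [abs_mul]
    gcongr
  have hsecond : |-(t * f (w - t))| ≤ t * B := by
    rw [abs_neg, abs_mul, abs_of_nonneg ht0]
    gcongr
    exact hB _
  have hthird : |h (w - t) - h w| ≤ h (w - δ) - h w := by
    rw [abs_of_nonneg (sub_nonneg.2 (hm (by linarith)))]
    exact sub_le_sub_right (hm (by linarith)) _
  rw [hf'_sub]
  linarith [abs_add_three (w * (f (w - t) - f w)) (-(t * f (w - t))) (h (w - t) - h w)]

lemma abs_sub_sub_mul_deriv_le_of_steinEquation {f f' : ℝ → ℝ} {N B δ w g : ℝ} (hm : Antitone h)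
    (hf : ∀ w, HasDerivAt f (f' w) w) (hstein : ∀ w, f' w = w * f w + h w - N)
    (hB : ∀ w, |f w| ≤ B) (hf' : ∀ w, |f' w| ≤ 1) (hg : g ∈ Icc 0 δ) :
    |f w - f (w - g) - g * f' w| ≤ δ ^ 2 / 2 * (B + |w|) + δ * (h (w - δ) - h w) := by
  have hdiff : 0 ≤ h (w - δ) - h w := sub_nonneg.2 (hm (by linarith [hg.1, hg.2]))
  have hslope : 0 ≤ B + |w| := add_nonneg ((abs_nonneg _).trans (hB 0)) (abs_nonneg w)
  have hderiv : ∀ t, HasDerivAt (fun t => f w - f (w - t) - t * f' w) (f' (w - t) - f' w) t :=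
    fun t => ((((hf (w - t)).comp_const_sub w t).const_sub (f w)).sub
      ((hasDerivAt_id t).mul_const (f' w))).congr_deriv (by ring)
  have hremainder : |f w - f (w - g) - g * f' w| ≤
      (B + |w|) * g ^ 2 / 2 + (h (w - δ) - h w) * g :=
    image_norm_le_of_norm_deriv_right_le_deriv_boundary
      (B := fun t => (B + |w|) * t ^ 2 / 2 + (h (w - δ) - h w) * t)
      (fun t _ => (hderiv t).continuousAt.continuousWithinAt)
      (fun t _ => (hderiv t).hasDerivWithinAt) (by simp)
      (fun t => ((((hasDerivAt_pow 2 t).const_mul _).div_const 2).add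
        ((hasDerivAt_id t).const_mul _)).congr_deriv (by
          simp only [Nat.cast_ofNat, Nat.add_one_sub_one, pow_one, mul_one]; ring))
      (fun t ht => abs_deriv_sub_deriv_le_of_steinEquation hm hf hstein hB hf'
        ⟨ht.1, ht.2.le.trans hg.2⟩ w) (right_mem_Icc.2 hg.1)
  have hsq : g ^ 2 ≤ δ ^ 2 := pow_le_pow_left₀ hg.1 hg.2 2
  nlinarith [hg.2]

end SteinEquation

/-! ### Kolmogorov distance -/

section KolmogorovDistance

/-- The Kolmogorov distance between two laws on `ℝ`, the uniform distance of their
distribution functions. -/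
def kolmogorovDist (μ ν : Measure ℝ) : ℝ := ⨆ t, |cdf μ t - cdf ν t|

/-- The continuous, piecewise linear majorant of `𝟙 (w ≤ z)` that vanishes beyond `z + α`. -/
def ramp (z α w : ℝ) : ℝ := max 0 (min 1 ((z + α - w) / α))

variable {μ ν : Measure ℝ} {z α δ : ℝ}

lemma abs_cdf_sub_cdf_le_kolmogorovDist (μ ν : Measure ℝ) (t : ℝ) :
    |cdf μ t - cdf ν t| ≤ kolmogorovDist μ ν := by
  refine le_ciSup (f := fun t => |cdf μ t - cdf ν t|) ⟨1, ?_⟩ t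
  rintro _ ⟨t, rfl⟩
  exact abs_sub_le_of_nonneg_of_le (cdf_nonneg μ t) (cdf_le_one μ t) (cdf_nonneg ν t)
    (cdf_le_one ν t)

lemma continuous_ramp : Continuous (ramp z α) := by
  unfold ramp; fun_prop

lemma ramp_mem_Icc (z α w : ℝ) : ramp z α w ∈ Icc 0 1 :=
  ⟨le_max_left _ _, max_le zero_le_one (min_le_left _ _)⟩

lemma antitone_ramp (hα : 0 < α) : Antitone (ramp z α) := by
  intro x y hxy
  unfold ramp
  gcongr

lemma ramp_sub_right (z α w δ : ℝ) : ramp z α (w - δ) = ramp (z + δ) α w := by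
  unfold ramp
  congr 3
  ring

lemma integrable_ramp [IsFiniteMeasure μ] : Integrable (ramp z α) μ :=
  .of_bound continuous_ramp.aestronglyMeasurable 1 <| ae_of_all _ fun w => by
    rw [Real.norm_of_nonneg (ramp_mem_Icc z α w).1]
    exact (ramp_mem_Icc z α w).2

lemma ramp_eq_setIntegral (hα : 0 < α) (w : ℝ) :
    ramp z α w = α⁻¹ * ∫ u in Ioc z (z + α), (Ici w).indicator 1 u := by
  have hlen : volume.real (Ioc z (z + α) ∩ Ici w) = max 0 (min α (z + α - w)) := by
    rw [measureReal_congr ((ae_eq_refl _).inter Ioi_ae_eq_Ici.symm), Ioc_inter_Ioi,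
      Real.volume_real_Ioc, max_comm, ← min_sub_sub_left, add_sub_cancel_left]
  rw [integral_indicator_one measurableSet_Ici, measureReal_restrict_apply measurableSet_Ici,
    inter_comm, hlen, ← div_eq_inv_mul, ← max_div_div_right hα.le, ← min_div_div_right hα.le,
    zero_div, div_self hα.ne', ramp]

lemma intervalIntegrable_cdf (a b : ℝ) : IntervalIntegrable (cdf μ) volume a b :=
  (monotone_cdf μ).intervalIntegrable

lemma integral_ramp [IsProbabilityMeasure μ] (hα : 0 < α) :
    ∫ x, ramp z α x ∂μ = α⁻¹ * ∫ u in z..z + α, cdf μ u := by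
  have hmeas : MeasurableSet {p : ℝ × ℝ | p.1 ≤ p.2} :=
    measurableSet_le measurable_fst measurable_snd
  have hinteg : Integrable (Function.uncurry fun w u : ℝ => (Ici w).indicator (1 : ℝ → ℝ) u)
      (μ.prod (volume.restrict (Ioc z (z + α)))) :=
    (integrable_const (1 : ℝ)).indicator hmeas
  have hcdf (u : ℝ) : ∫ w, (Ici w).indicator (1 : ℝ → ℝ) u ∂μ = cdf μ u := by
    rw [cdf_eq_real, ← integral_indicator_one measurableSet_Iic]
    rfl
  simp_rw [ramp_eq_setIntegral hα]
  rw [integral_const_mul, intervalIntegral.integral_of_le (by linarith),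
    integral_integral_swap hinteg]
  simp_rw [hcdf]

lemma cdf_le_integral_ramp [IsProbabilityMeasure μ] (hα : 0 < α) (t : ℝ) :
    cdf μ t ≤ ∫ x, ramp t α x ∂μ := by
  have h := intervalIntegral.integral_mono_on (by linarith : t ≤ t + α) intervalIntegrable_const
    (intervalIntegrable_cdf t (t + α)) fun u hu => monotone_cdf μ hu.1
  rw [intervalIntegral.integral_const, add_sub_cancel_left, smul_eq_mul] at h
  rw [integral_ramp hα]
  exact (le_inv_mul_iff₀ hα).2 h

lemma integral_ramp_le_cdf [IsProbabilityMeasure μ] (hα : 0 < α) (t : ℝ) :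
    ∫ x, ramp (t - α) α x ∂μ ≤ cdf μ t := by
  have h := intervalIntegral.integral_mono_on (by linarith : t - α ≤ t)
    (intervalIntegrable_cdf (t - α) t) intervalIntegrable_const fun u hu => monotone_cdf μ hu.2
  rw [intervalIntegral.integral_const, sub_sub_cancel, smul_eq_mul] at h
  rw [integral_ramp hα, sub_add_cancel]
  exact (inv_mul_le_iff₀ hα).2 h

lemma integral_ramp_le_of_lipschitz [IsProbabilityMeasure ν] {K : ℝ≥0}
    (hν : LipschitzWith K (cdf ν)) (hα : 0 < α) (t : ℝ) :
    ∫ x, ramp t α x ∂ν ≤ cdf ν t + K / 2 * α := by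
  have h := intervalIntegral.integral_mono_on (by linarith : t ≤ t + α)
    (intervalIntegrable_cdf t (t + α))
    (Continuous.intervalIntegrable (by fun_prop : Continuous fun u => cdf ν t + K * (u - t)) _ _)
    fun u hu => by
      have hdist := hν.dist_le_mul u t
      rw [Real.dist_eq, Real.dist_eq, abs_of_nonneg (sub_nonneg.2 hu.1)] at hdist
      linarith [le_abs_self (cdf ν u - cdf ν t)]
  rw [integral_ramp hα, inv_mul_le_iff₀ hα]
  refine h.trans_eq ?_
  rw [intervalIntegral.integral_add (by simp) (Continuous.intervalIntegrable (by fun_prop) _ _)]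
  simp only [intervalIntegral.integral_const, add_sub_cancel_left, smul_eq_mul,
    intervalIntegral.integral_const_mul, intervalIntegral.intervalIntegrable_id,
    intervalIntegrable_const, intervalIntegral.integral_sub, integral_id]
  ring

lemma le_integral_ramp_of_lipschitz [IsProbabilityMeasure ν] {K : ℝ≥0}
    (hν : LipschitzWith K (cdf ν)) (hα : 0 < α) (t : ℝ) :
    cdf ν t - K / 2 * α ≤ ∫ x, ramp (t - α) α x ∂ν := by
  have h := intervalIntegral.integral_mono_on (by linarith : t - α ≤ t)
    (Continuous.intervalIntegrable (by fun_prop : Continuous fun u => cdf ν t + K * (u - t)) _ _)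
    (intervalIntegrable_cdf (t - α) t) fun u hu => by
      have hdist := hν.dist_le_mul t u
      rw [Real.dist_eq, Real.dist_eq, abs_of_nonneg (sub_nonneg.2 hu.2)] at hdist
      linarith [le_abs_self (cdf ν t - cdf ν u)]
  rw [integral_ramp hα, sub_add_cancel, le_inv_mul_iff₀ hα]
  refine h.trans_eq' ?_
  rw [intervalIntegral.integral_add (by simp) (Continuous.intervalIntegrable (by fun_prop) _ _)]
  simp only [intervalIntegral.integral_const, sub_sub_cancel, smul_eq_mul,
    intervalIntegral.integral_const_mul, intervalIntegral.intervalIntegrable_id,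
    intervalIntegrable_const, intervalIntegral.integral_sub, integral_id]
  ring

lemma kolmogorovDist_le_of_ramp [IsProbabilityMeasure μ] [IsProbabilityMeasure ν] {K : ℝ≥0}
    (hν : LipschitzWith K (cdf ν)) (hα : 0 < α) {ε : ℝ}
    (h : ∀ z, |∫ x, ramp z α x ∂μ - ∫ x, ramp z α x ∂ν| ≤ ε) :
    kolmogorovDist μ ν ≤ K / 2 * α + ε := by
  refine ciSup_le fun t => abs_le.2 ⟨?_, ?_⟩
  · linarith [(abs_le.1 (h (t - α))).1, integral_ramp_le_cdf (μ := μ) hα t,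
      le_integral_ramp_of_lipschitz hν hα t]
  · linarith [(abs_le.1 (h t)).2, cdf_le_integral_ramp (μ := μ) hα t,
      integral_ramp_le_of_lipschitz hν hα t]

lemma cdf_add_sub_cdf_le {K : ℝ≥0} (hν : LipschitzWith K (cdf ν)) (hα : 0 ≤ α) (t : ℝ) :
    cdf μ (t + α) - cdf μ t ≤ K * α + 2 * kolmogorovDist μ ν := by
  have hdist := hν.dist_le_mul (t + α) t
  rw [Real.dist_eq, Real.dist_eq, add_sub_cancel_left, abs_of_nonneg hα] at hdist
  linarith [le_abs_self (cdf ν (t + α) - cdf ν t),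
    (abs_le.1 (abs_cdf_sub_cdf_le_kolmogorovDist μ ν (t + α))).2,
    (abs_le.1 (abs_cdf_sub_cdf_le_kolmogorovDist μ ν t)).1]

lemma integral_ramp_sub_sub_ramp_le [IsProbabilityMeasure μ] {K : ℝ≥0}
    (hν : LipschitzWith K (cdf ν)) (hα : 0 < α) (hδ : 0 ≤ δ) (z : ℝ) :
    ∫ x, (ramp z α (x - δ) - ramp z α x) ∂μ ≤ δ / α * (K * α + 2 * kolmogorovDist μ ν) := by
  have hshift : IntervalIntegrable (fun u => cdf μ (u + α)) volume z (z + δ) :=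
    Monotone.intervalIntegrable fun u v huv => monotone_cdf μ (by linarith)
  have hswap : (∫ u in z + δ..z + δ + α, cdf μ u) - ∫ u in z..z + α, cdf μ u =
      ∫ u in z..z + δ, (cdf μ (u + α) - cdf μ u) := by
    rw [intervalIntegral.integral_sub hshift (intervalIntegrable_cdf _ _),
      intervalIntegral.integral_comp_add_right (cdf μ) α,
      intervalIntegral.integral_interval_sub_interval_comm' (intervalIntegrable_cdf _ _)
        (intervalIntegrable_cdf _ _) (intervalIntegrable_cdf _ _), add_right_comm]
  have hle : ∫ u in z..z + δ, (cdf μ (u + α) - cdf μ u) ≤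
      δ * (K * α + 2 * kolmogorovDist μ ν) := by
    have h := intervalIntegral.integral_mono_on (by linarith : z ≤ z + δ)
      (hshift.sub (intervalIntegrable_cdf _ _)) intervalIntegrable_const
      fun u _ => cdf_add_sub_cdf_le (μ := μ) hν hα.le u
    rwa [intervalIntegral.integral_const, add_sub_cancel_left, smul_eq_mul] at h
  simp_rw [ramp_sub_right]
  rw [integral_sub integrable_ramp integrable_ramp, integral_ramp hα, integral_ramp hα,
    ← mul_sub, hswap, div_mul_eq_mul_div, div_eq_inv_mul]
  gcongr

end KolmogorovDistance

/-! ### Stein couplings -/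

section SteinCoupling

variable {Ω ι : Type*} [MeasurableSpace Ω] {Q : Measure Ω} [Fintype ι]

lemma integrable_of_measurable_of_abs_le [IsFiniteMeasure Q] {F : Ω → ℝ} (hF : Measurable F)
    {C : ℝ} (hC : ∀ ω, |F ω| ≤ C) : Integrable F Q :=
  .of_bound hF.aestronglyMeasurable C (ae_of_all _ hC)

/-- A Stein coupling of `W` with nonnegative bounded shifts: the weights `a j` and the shifts
`g j ∈ [0, δ]` satisfy `E[W f(W)] = E[∑ a j (f(W) - f(W - g j))]`, and `∑ |a j| ≤ A`. -/
structure SteinCoupling (Q : Measure Ω) (W : Ω → ℝ) (a g : ι → Ω → ℝ) (A δ : ℝ) : Prop where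
  measurable : Measurable W
  integrable : Integrable W Q
  measurable_weight : ∀ j, Measurable (a j)
  measurable_shift : ∀ j, Measurable (g j)
  sum_abs_weight_le : ∀ ω, ∑ j, |a j ω| ≤ A
  shift_mem_Icc : ∀ j ω, g j ω ∈ Icc 0 δ
  integral_mul_eq : ∀ f : ℝ → ℝ, Continuous f → (∃ C, ∀ x, |f x| ≤ C) →
    ∫ ω, W ω * f (W ω) ∂Q = ∫ ω, ∑ j, a j ω * (f (W ω) - f (W ω - g j ω)) ∂Q

namespace SteinCoupling

variable {W : Ω → ℝ} {a g : ι → Ω → ℝ} {A δ : ℝ}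

lemma abs_sum_weight_mul_le (hS : SteinCoupling Q W a g A δ) (ω : Ω) {x : ι → ℝ} {C : ℝ}
    (hx : ∀ j, |x j| ≤ C) (hC : 0 ≤ C) : |∑ j, a j ω * x j| ≤ A * C :=
  calc |∑ j, a j ω * x j| ≤ ∑ j, |a j ω| * |x j| := by
        simpa only [abs_mul] using Finset.abs_sum_le_sum_abs (fun j => a j ω * x j) Finset.univ
    _ ≤ ∑ j, |a j ω| * C := by gcongr; exact hx _
    _ = (∑ j, |a j ω|) * C := (Finset.sum_mul ..).symm
    _ ≤ A * C := by gcongr; exact hS.sum_abs_weight_le ω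

lemma measurable_sum_weight_mul (hS : SteinCoupling Q W a g A δ) {x : ι → Ω → ℝ}
    (hx : ∀ j, Measurable (x j)) : Measurable fun ω => ∑ j, a j ω * x j ω :=
  Finset.measurable_sum _ fun j _ => (hS.measurable_weight j).mul (hx j)

lemma abs_shift_le (hS : SteinCoupling Q W a g A δ) (j : ι) (ω : Ω) : |g j ω| ≤ δ := by
  rw [abs_of_nonneg (hS.shift_mem_Icc j ω).1]
  exact (hS.shift_mem_Icc j ω).2

lemma integrable_sum_weight_mul_shift [IsFiniteMeasure Q] (hS : SteinCoupling Q W a g A δ)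
    (hδ : 0 ≤ δ) : Integrable (fun ω => ∑ j, a j ω * g j ω) Q :=
  integrable_of_measurable_of_abs_le (hS.measurable_sum_weight_mul hS.measurable_shift)
    fun ω => hS.abs_sum_weight_mul_le ω (hS.abs_shift_le · ω) hδ

lemma abs_sum_sub_mul_sum_le (hS : SteinCoupling Q W a g A δ) (hδ : 0 ≤ δ) {h f f' : ℝ → ℝ}
    {N B : ℝ} (hm : Antitone h) (hf : ∀ w, HasDerivAt f (f' w) w)
    (hstein : ∀ w, f' w = w * f w + h w - N) (hB : ∀ w, |f w| ≤ B) (hf' : ∀ w, |f' w| ≤ 1)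
    (ω : Ω) :
    |∑ j, a j ω * (f (W ω) - f (W ω - g j ω)) - f' (W ω) * ∑ j, a j ω * g j ω| ≤
      A * (δ ^ 2 / 2 * (B + |W ω|) + δ * (h (W ω - δ) - h (W ω))) := by
  have hB0 : 0 ≤ B := (abs_nonneg _).trans (hB 0)
  have hdrop : 0 ≤ h (W ω - δ) - h (W ω) := sub_nonneg.2 (hm (by linarith))
  have hsum : ∑ j, a j ω * (f (W ω) - f (W ω - g j ω)) - f' (W ω) * ∑ j, a j ω * g j ω =
      ∑ j, a j ω * (f (W ω) - f (W ω - g j ω) - g j ω * f' (W ω)) := by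
    rw [Finset.mul_sum, ← Finset.sum_sub_distrib]
    exact Finset.sum_congr rfl fun j _ => by ring
  rw [hsum]
  exact hS.abs_sum_weight_mul_le ω (fun j => abs_sub_sub_mul_deriv_le_of_steinEquation hm hf hstein
    hB hf' (hS.shift_mem_Icc j ω)) (by positivity)

lemma integrable_sum_weight_mul_sub [IsFiniteMeasure Q] (hS : SteinCoupling Q W a g A δ)
    {f : ℝ → ℝ} (hf : Continuous f) {B : ℝ} (hB : ∀ w, |f w| ≤ B) :
    Integrable (fun ω => ∑ j, a j ω * (f (W ω) - f (W ω - g j ω))) Q :=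
  integrable_of_measurable_of_abs_le
    (hS.measurable_sum_weight_mul fun j => (hf.measurable.comp hS.measurable).sub
      (hf.measurable.comp (hS.measurable.sub (hS.measurable_shift j))))
    fun ω => hS.abs_sum_weight_mul_le ω (C := B + B)
      (fun _ => (abs_sub _ _).trans (add_le_add (hB _) (hB _)))
      (add_nonneg ((abs_nonneg _).trans (hB 0)) ((abs_nonneg _).trans (hB 0)))

lemma integrable_comp_sub_const [IsFiniteMeasure Q] (hS : SteinCoupling Q W a g A δ)
    {h : ℝ → ℝ} (hc : Continuous h) {B : ℝ} (hB : ∀ w, |h w| ≤ B) (c : ℝ) :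
    Integrable (fun ω => h (W ω - c)) Q :=
  integrable_of_measurable_of_abs_le (hc.measurable.comp (hS.measurable.sub_const c)) fun _ => hB _

lemma integral_comp_sub_eq_of_steinEquation [IsProbabilityMeasure Q]
    (hS : SteinCoupling Q W a g A δ) (hδ : 0 ≤ δ) {h f f' : ℝ → ℝ} {N B C : ℝ}
    (hf : Continuous f) (hf' : Continuous f') (hstein : ∀ w, f' w = w * f w + h w - N)
    (hB : ∀ w, |f w| ≤ B) (hC : ∀ w, |f' w| ≤ C) :
    ∫ ω, h (W ω) ∂Q - N = ∫ ω, f' (W ω) * (1 - ∑ j, a j ω * g j ω) ∂Q -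
      ∫ ω, (∑ j, a j ω * (f (W ω) - f (W ω - g j ω)) - f' (W ω) * ∑ j, a j ω * g j ω) ∂Q := by
  have hf'W : Integrable (fun ω => f' (W ω)) Q := by
    simpa only [sub_zero] using hS.integrable_comp_sub_const hf' hC 0
  have hf'T : Integrable (fun ω => f' (W ω) * ∑ j, a j ω * g j ω) Q :=
    (hS.integrable_sum_weight_mul_shift hδ).bdd_mul hf'W.aestronglyMeasurable
      (ae_of_all _ fun ω => hC _)
  have hWf : Integrable (fun ω => W ω * f (W ω)) Q :=
    hS.integrable.mul_bdd (hf.measurable.comp hS.measurable).aestronglyMeasurable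
      (ae_of_all _ fun ω => hB _)
  have hh : ∀ ω, h (W ω) = f' (W ω) - W ω * f (W ω) + N := fun ω => by rw [hstein]; ring
  simp only [hh, mul_one_sub]
  rw [integral_add (by exact hf'W.sub hWf) (integrable_const _), integral_sub hf'W hWf,
    integral_sub hf'W hf'T, integral_sub (hS.integrable_sum_weight_mul_sub hf hB) hf'T,
    hS.integral_mul_eq f hf ⟨_, hB⟩, integral_const, probReal_univ, one_smul]
  ring

lemma abs_integral_comp_sub_integral_stdGauss_le [IsProbabilityMeasure Q]
    (hS : SteinCoupling Q W a g A δ) (hδ : 0 ≤ δ) {h : ℝ → ℝ} (hc : Continuous h)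
    (hm : Antitone h) (h01 : ∀ x, h x ∈ Icc 0 1) :
    |∫ ω, h (W ω) ∂Q - ∫ x, h x ∂stdGauss| ≤ ∫ ω, |1 - ∑ j, a j ω * g j ω| ∂Q +
      A * (δ ^ 2 / 2 * (7 / 5 + ∫ ω, |W ω| ∂Q) + δ * ∫ ω, (h (W ω - δ) - h (W ω)) ∂Q) := by
  have habs : ∀ x, |h x| ≤ 1 := fun x => abs_le.2 ⟨by linarith [(h01 x).1], (h01 x).2⟩
  have hf := hasDerivAt_steinSolution hc
    (integrable_of_measurable_of_abs_le (Q := stdGauss) hc.measurable habs)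
  set f := steinSolution h
  set f' : ℝ → ℝ := fun w => w * f w + h w - ∫ x, h x ∂stdGauss
  have hfb : ∀ w, |f w| ≤ 7 / 5 := abs_steinSolution_le hc.measurable h01
  have hf'b : ∀ w, |f' w| ≤ 1 := abs_mul_steinSolution_add_sub_le hm h01
  have hfc : Continuous f := continuous_iff_continuousAt.2 fun w => (hf w).continuousAt
  have hf'c : Continuous f' := by fun_prop
  set T : Ω → ℝ := fun ω => ∑ j, a j ω * g j ω
  set R : Ω → ℝ := fun ω => A * (δ ^ 2 / 2 * (7 / 5 + |W ω|) + δ * (h (W ω - δ) - h (W ω)))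
  have hdrop : Integrable (fun ω => h (W ω - δ) - h (W ω)) Q := by
    have h0 := hS.integrable_comp_sub_const hc habs 0
    simp only [sub_zero] at h0
    exact (hS.integrable_comp_sub_const hc habs δ).sub h0
  have hsize : Integrable (fun ω => 7 / 5 + |W ω|) Q := (integrable_const _).add hS.integrable.abs
  have hR : Integrable R Q := ((hsize.const_mul _).add (hdrop.const_mul _)).const_mul _
  have hlinear : |∫ ω, f' (W ω) * (1 - T ω) ∂Q| ≤ ∫ ω, |1 - T ω| ∂Q :=
    norm_integral_le_of_norm_le (f := fun ω => f' (W ω) * (1 - T ω)) (g := fun ω => |1 - T ω|)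
      ((integrable_const 1).sub (hS.integrable_sum_weight_mul_shift hδ)).abs <|
      ae_of_all _ fun ω => by
        rw [Real.norm_eq_abs, abs_mul]
        exact mul_le_of_le_one_left (abs_nonneg _) (hf'b _)
  have hremainder : |∫ ω, (∑ j, a j ω * (f (W ω) - f (W ω - g j ω)) - f' (W ω) * T ω) ∂Q| ≤
      ∫ ω, R ω ∂Q :=
    norm_integral_le_of_norm_le
      (f := fun ω => ∑ j, a j ω * (f (W ω) - f (W ω - g j ω)) - f' (W ω) * T ω) hR <|
      ae_of_all _ (hS.abs_sum_sub_mul_sum_le hδ hm hf (fun _ => rfl) hfb hf'b)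
  have hR_eq : ∫ ω, R ω ∂Q = A * (δ ^ 2 / 2 * (7 / 5 + ∫ ω, |W ω| ∂Q) +
      δ * ∫ ω, (h (W ω - δ) - h (W ω)) ∂Q) := by
    rw [integral_const_mul, integral_add (hsize.const_mul _) (hdrop.const_mul _),
      integral_const_mul, integral_const_mul,
      integral_add (integrable_const _) hS.integrable.abs, integral_const, probReal_univ, one_smul]
  rw [hS.integral_comp_sub_eq_of_steinEquation hδ hfc hf'c (fun _ => rfl) hfb hf'b, ← hR_eq]
  exact (abs_sub _ _).trans (add_le_add hlinear hremainder)

end SteinCoupling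

/-- Optimisation of the smoothing width; the choice is `α = 5 x (x + y)` with `x`, `y` the two
square roots. -/
lemma le_sq_sqrt_add_sqrt_of_forall_smoothing {A e D : ℝ} (hA : 0 < A) (he : 0 ≤ e)
    (h : ∀ α > 0, D ≤ 1 / 5 * α + (e + A * (8 / 5 + 2 * D / α))) :
    D ≤ (√(2 / 5 * A) + √(2 * A + e)) ^ 2 := by
  set x := √(2 / 5 * A)
  set y := √(2 * A + e)
  have hx_sq : x ^ 2 = 2 / 5 * A := Real.sq_sqrt (by positivity)
  have hy_sq : y ^ 2 = 2 * A + e := Real.sq_sqrt (by positivity)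
  have hx_pos : 0 < x := Real.sqrt_pos.2 (by positivity)
  have hy_pos : 0 < y := Real.sqrt_pos.2 (by positivity)
  have hoptimal := h (5 * x * (x + y)) (by positivity)
  have hterm : A * (2 * D / (5 * x * (x + y))) = x * D / (x + y) := by
    rw [show A = 5 / 2 * x ^ 2 by linarith]
    field_simp
  have hdiv : D ≤ x * (x + y) + (y ^ 2 - x ^ 2) + x * D / (x + y) := by
    linarith
  have hmul : D * (x + y) ≤ (x * (x + y) + (y ^ 2 - x ^ 2)) * (x + y) + x * D := by
    have := mul_le_mul_of_nonneg_right hdiv (by positivity : 0 ≤ x + y)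
    rwa [add_mul, div_mul_cancel₀ _ (by positivity)] at this
  have hfactor : D * y ≤ (x + y) ^ 2 * y := by linarith
  exact le_of_mul_le_mul_right hfactor hy_pos

/-- The bound for the Kolmogorov distance `D` is self-improving: smoothing costs a concentration
estimate, which is itself controlled by `D`. -/
theorem SteinCoupling.kolmogorovDist_le [IsProbabilityMeasure Q] {W : Ω → ℝ} {a g : ι → Ω → ℝ}
    {A δ e : ℝ} (hS : SteinCoupling Q W a g A δ) (hA : 0 < A) (hδ : 0 < δ)
    (hW : ∫ ω, |W ω| ∂Q ≤ 1) (he : ∫ ω, |1 - ∑ j, a j ω * g j ω| ∂Q ≤ e) :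
    kolmogorovDist (Q.map W) stdGauss ≤
      (√(2 / 5 * (A * δ ^ 2)) + √(2 * (A * δ ^ 2) + e)) ^ 2 := by
  have := Measure.isProbabilityMeasure_map (μ := Q) hS.measurable.aemeasurable
  have he0 : 0 ≤ e := (integral_nonneg fun _ => abs_nonneg _).trans he
  set D := kolmogorovDist (Q.map W) stdGauss
  refine le_sq_sqrt_add_sqrt_of_forall_smoothing (by positivity) he0 fun α hα => ?_
  have hramp : ∀ z, |∫ x, ramp z α x ∂Q.map W - ∫ x, ramp z α x ∂stdGauss| ≤
      e + A * δ ^ 2 * (8 / 5 + 2 * D / α) := fun z => by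
    have hconc := integral_ramp_sub_sub_ramp_le (μ := Q.map W) lipschitzWith_cdf_stdGauss hα hδ.le z
    have hmap := integral_map (μ := Q) (f := fun x => ramp z α (x - δ) - ramp z α x)
      hS.measurable.aemeasurable
      ((continuous_ramp.comp (continuous_sub_right δ)).sub continuous_ramp).aestronglyMeasurable
    rw [integral_map hS.measurable.aemeasurable continuous_ramp.aestronglyMeasurable]
    refine (hS.abs_integral_comp_sub_integral_stdGauss_le hδ.le continuous_ramp (antitone_ramp hα)
      (ramp_mem_Icc z α)).trans ?_
    rw [← hmap]
    calc _ ≤ e + A * (δ ^ 2 / 2 * (7 / 5 + 1) + δ * (δ / α * ((2 / 5 : ℝ≥0) * α + 2 * D))) := by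
          gcongr
      _ = _ := by push_cast; field_simp; ring
  have hsmooth := kolmogorovDist_le_of_ramp lipschitzWith_cdf_stdGauss hα hramp
  push_cast at hsmooth
  linarith

end SteinCoupling

/-! ### The Efron–Stein inequality -/

section EfronStein

section Moments

variable {Ω : Type*} [MeasurableSpace Ω] {Q : Measure Ω} [IsProbabilityMeasure Q] {F : Ω → ℝ}
  {K : ℝ}

lemma abs_integral_le_of_forall_abs_le (hK : ∀ ω, |F ω| ≤ K) : |∫ ω, F ω ∂Q| ≤ K := by
  simpa using norm_integral_le_of_norm_le_const (μ := Q) (f := F) (C := K) (ae_of_all _ hK)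

lemma integral_sub_const_sq (hF : MemLp F 2 Q) (c : ℝ) :
    ∫ ω, (F ω - c) ^ 2 ∂Q = Var[F; Q] + (∫ ω, F ω ∂Q - c) ^ 2 := by
  have hvar := variance_sub_const hF.aestronglyMeasurable c
  have hsub : MemLp (fun ω => F ω - c) 2 Q := hF.sub (memLp_const c)
  rw [variance_eq_sub hsub, integral_sub (hF.integrable (by norm_num))
    (integrable_const c), integral_const, probReal_univ, one_smul] at hvar
  simp only [Pi.pow_apply] at hvar
  linarith

lemma variance_le_integral_sub_const_sq (hF : MemLp F 2 Q) (c : ℝ) :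
    Var[F; Q] ≤ ∫ ω, (F ω - c) ^ 2 ∂Q := by
  rw [integral_sub_const_sq hF]
  exact le_add_of_nonneg_right (sq_nonneg _)

lemma sq_integral_le_integral_sq (hF : MemLp F 2 Q) :
    (∫ ω, F ω ∂Q) ^ 2 ≤ ∫ ω, F ω ^ 2 ∂Q := by
  have h := integral_sub_const_sq hF 0
  simp only [sub_zero] at h
  rw [h]
  exact le_add_of_nonneg_left (variance_nonneg _ _)

lemma memLp_of_measurable_of_abs_le (hF : Measurable F) (hK : ∀ ω, |F ω| ≤ K) : MemLp F 2 Q :=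
  .of_bound hF.aestronglyMeasurable K (ae_of_all _ hK)

lemma integral_abs_sub_integral_le_sqrt_variance (hF : MemLp F 2 Q) :
    ∫ ω, |F ω - ∫ ω, F ω ∂Q| ∂Q ≤ √Var[F; Q] := by
  have hdev : MemLp (fun ω => |F ω - ∫ ω, F ω ∂Q|) 2 Q := (hF.sub (memLp_const _)).abs
  refine Real.le_sqrt_of_sq_le ((sq_integral_le_integral_sq hdev).trans_eq ?_)
  simp_rw [sq_abs]
  exact (variance_eq_integral hF.aemeasurable).symm

lemma abs_sub_sq_le {a b K : ℝ} (ha : |a| ≤ K) (hb : |b| ≤ K) : |(a - b) ^ 2| ≤ (2 * K) ^ 2 := by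
  rw [abs_pow]
  exact pow_le_pow_left₀ (abs_nonneg _) (by linarith [abs_sub a b]) 2

end Moments

section Product

variable {X Y : Type*} [MeasurableSpace X] [MeasurableSpace Y] (P : Measure X)
  [IsProbabilityMeasure P] (Q : Measure Y) [IsProbabilityMeasure Q]

lemma measurable_variance_prodMk_left {f : X × Y → ℝ} (hf : Measurable f) :
    Measurable fun x => Var[fun y => f (x, y); Q] := by
  have hmean : Measurable fun x => ∫ y, f (x, y) ∂Q :=
    hf.stronglyMeasurable.integral_prod_right'.measurable
  have hvar (x : X) : Var[fun y => f (x, y); Q] = ∫ y, (f (x, y) - ∫ y, f (x, y) ∂Q) ^ 2 ∂Q :=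
    variance_eq_integral (hf.comp measurable_prodMk_left).aemeasurable
  simp_rw [hvar]
  have hsq : Measurable fun z : X × Y => (f z - ∫ y, f (z.1, y) ∂Q) ^ 2 :=
    (hf.sub (hmean.comp measurable_fst)).pow_const 2
  exact hsq.stronglyMeasurable.integral_prod_right'.measurable

lemma integrable_variance_prodMk_left {f : X × Y → ℝ} (hf : Measurable f) {K : ℝ}
    (hK : ∀ z, |f z| ≤ K) : Integrable (fun x => Var[fun y => f (x, y); Q]) P :=
  integrable_of_measurable_of_abs_le (measurable_variance_prodMk_left Q hf) (C := (2 * K) ^ 2)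
    fun x => by
      have hfx : Measurable fun y => f (x, y) := hf.comp measurable_prodMk_left
      rw [variance_eq_integral hfx.aemeasurable]
      exact abs_integral_le_of_forall_abs_le fun y => abs_sub_sq_le (hK _)
        (abs_integral_le_of_forall_abs_le fun y => hK _)

lemma variance_prod_eq {f : X × Y → ℝ} (hf : Measurable f) {K : ℝ} (hK : ∀ z, |f z| ≤ K) :
    Var[f; P.prod Q] =
      ∫ x, Var[fun y => f (x, y); Q] ∂P + Var[fun x => ∫ y, f (x, y) ∂Q; P] := by
  have hmean : Measurable fun x => ∫ y, f (x, y) ∂Q :=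
    hf.stronglyMeasurable.integral_prod_right'.measurable
  have hmeanK (x : X) : |∫ y, f (x, y) ∂Q| ≤ K := abs_integral_le_of_forall_abs_le fun y => hK _
  set m := ∫ z, f z ∂P.prod Q
  have hm : m = ∫ x, ∫ y, f (x, y) ∂Q ∂P :=
    integral_prod f (integrable_of_measurable_of_abs_le hf hK)
  have hmK : |m| ≤ K := abs_integral_le_of_forall_abs_le hK
  calc Var[f; P.prod Q] = ∫ x, ∫ y, (f (x, y) - m) ^ 2 ∂Q ∂P := by
        rw [variance_eq_integral hf.aemeasurable]
        exact integral_prod _ (integrable_of_measurable_of_abs_le ((hf.sub_const m).pow_const 2)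
          fun z => abs_sub_sq_le (hK z) hmK)
    _ = ∫ x, (Var[fun y => f (x, y); Q] + (∫ y, f (x, y) ∂Q - m) ^ 2) ∂P := by
        congr 1 with x
        exact integral_sub_const_sq (memLp_of_measurable_of_abs_le
          (hf.comp measurable_prodMk_left) fun y => hK _) m
    _ = _ := by
        rw [integral_add (integrable_variance_prodMk_left P Q hf hK)
          (integrable_of_measurable_of_abs_le ((hmean.sub_const m).pow_const 2)
            fun x => abs_sub_sq_le (hmeanK x) hmK), variance_eq_integral hmean.aemeasurable, hm]

lemma variance_integral_le_integral_variance {f : X × Y → ℝ} (hf : Measurable f) {K : ℝ}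
    (hK : ∀ z, |f z| ≤ K) :
    Var[fun x => ∫ y, f (x, y) ∂Q; P] ≤ ∫ y, Var[fun x => f (x, y); P] ∂Q := by
  have hmean : Measurable fun x => ∫ y, f (x, y) ∂Q :=
    hf.stronglyMeasurable.integral_prod_right'.measurable
  set G : Y → ℝ := fun y => ∫ x, f (x, y) ∂P
  have hG : Measurable G := hf.stronglyMeasurable.integral_prod_left'.measurable
  have hGK (y : Y) : |G y| ≤ K := abs_integral_le_of_forall_abs_le fun x => hK _
  have hmean_eq : ∫ x, ∫ y, f (x, y) ∂Q ∂P = ∫ y, G y ∂Q :=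
    integral_integral_swap (integrable_of_measurable_of_abs_le hf hK)
  have hsub : Measurable fun z : X × Y => f z - G z.2 := hf.sub (hG.comp measurable_snd)
  have hsq : Integrable (fun z : X × Y => (f z - G z.2) ^ 2) (P.prod Q) :=
    integrable_of_measurable_of_abs_le (hsub.pow_const 2) fun z => abs_sub_sq_le (hK z) (hGK _)
  calc Var[fun x => ∫ y, f (x, y) ∂Q; P]
      = ∫ x, (∫ y, (f (x, y) - G y) ∂Q) ^ 2 ∂P := by
        rw [variance_eq_integral hmean.aemeasurable, hmean_eq]
        congr 1 with x
        have hfx : Measurable fun y => f (x, y) := hf.comp measurable_prodMk_left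
        rw [integral_sub (integrable_of_measurable_of_abs_le hfx fun y => hK _)
          (integrable_of_measurable_of_abs_le hG hGK)]
    _ ≤ ∫ x, ∫ y, (f (x, y) - G y) ^ 2 ∂Q ∂P :=
        integral_mono_of_nonneg (ae_of_all _ fun _ => sq_nonneg _) hsq.integral_prod_left <|
          ae_of_all _ fun x => sq_integral_le_integral_sq <|
            memLp_of_measurable_of_abs_le (hsub.comp measurable_prodMk_left) (K := K + K)
              fun y => (abs_sub _ _).trans (add_le_add (hK _) (hGK _))
    _ = ∫ y, ∫ x, (f (x, y) - G y) ^ 2 ∂P ∂Q := integral_integral_swap hsq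
    _ = _ := by
        congr 1 with y
        exact (variance_eq_integral (hf.comp measurable_prodMk_right).aemeasurable).symm

lemma variance_prod_le_integral_add_integral {f : X × Y → ℝ} (hf : Measurable f) {K : ℝ}
    (hK : ∀ z, |f z| ≤ K) {U : Y → ℝ} {V : X → ℝ} (hU : Integrable U Q) (hV : Integrable V P)
    (hfU : ∀ y, Var[fun x => f (x, y); P] ≤ U y) (hfV : ∀ x, Var[fun y => f (x, y); Q] ≤ V x) :
    Var[f; P.prod Q] ≤ ∫ y, U y ∂Q + ∫ x, V x ∂P := by
  rw [variance_prod_eq P Q hf hK, add_comm]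
  exact add_le_add
    ((variance_integral_le_integral_variance P Q hf hK).trans <| integral_mono_of_nonneg
      (ae_of_all _ fun _ => variance_nonneg _ _) hU (ae_of_all _ hfU))
    (integral_mono_of_nonneg (ae_of_all _ fun _ => variance_nonneg _ _) hV (ae_of_all _ hfV))

end Product

lemma measurePreserving_cons {X : Type*} [MeasurableSpace X] (P : Measure X)
    [IsProbabilityMeasure P] (n : ℕ) :
    MeasurePreserving (fun z : X × (Fin n → X) => (Fin.cons z.1 z.2 : Fin (n + 1) → X))
      (P.prod (Measure.pi fun _ => P)) (Measure.pi fun _ => P) := by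
  convert (measurePreserving_piFinSuccAbove (fun _ : Fin (n + 1) => P) 0).symm using 1
  funext z
  simp [MeasurableEquiv.piFinSuccAbove, Fin.insertNthEquiv]

lemma integral_pi_eq_integral_cons {X : Type*} [MeasurableSpace X] (P : Measure X)
    [IsProbabilityMeasure P] {n : ℕ} {f : (Fin (n + 1) → X) → ℝ} (hf : Measurable f) :
    ∫ ω, f ω ∂(Measure.pi fun _ => P) =
      ∫ z, f (Fin.cons z.1 z.2) ∂P.prod (Measure.pi fun _ => P) := by
  have hcons := measurePreserving_cons P n
  rw [← hcons.map_eq, integral_map hcons.measurable.aemeasurable hf.aestronglyMeasurable]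

/-- The Efron–Stein inequality, with arbitrary functions `g k` not depending on the `k`-th
coordinate in place of the conditional expectations. -/
theorem variance_pi_le_sum_integral_sub_sq {X : Type*} [MeasurableSpace X] (P : Measure X)
    [IsProbabilityMeasure P] (K : ℝ) (n : ℕ) {f : (Fin n → X) → ℝ} (hf : Measurable f)
    (hfK : ∀ ω, |f ω| ≤ K) {g : Fin n → (Fin n → X) → ℝ} (hg : ∀ k, Measurable (g k))
    (hgK : ∀ k ω, |g k ω| ≤ K) (hgu : ∀ k ω x, g k (Function.update ω k x) = g k ω) :
    Var[f; Measure.pi fun _ => P] ≤ ∑ k, ∫ ω, (f ω - g k ω) ^ 2 ∂(Measure.pi fun _ => P) := by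
  induction n with
  | zero =>
    have hconst : f = fun _ => f default := funext fun ω => congrArg f (Subsingleton.elim _ _)
    rw [hconst, variance_eq_integral aemeasurable_const]
    simp
  | succ n ih =>
    set Q : Measure (Fin n → X) := Measure.pi fun _ => P
    have hcons := measurePreserving_cons P n
    set F : X × (Fin n → X) → ℝ := fun z => f (Fin.cons z.1 z.2)
    have hF : Measurable F := hf.comp hcons.measurable
    have hsection (x : X) : Measurable fun ω : Fin n → X => (Fin.cons x ω : Fin (n + 1) → X) :=
      hcons.measurable.comp measurable_prodMk_left
    have hinteg (k : Fin (n + 1)) :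
        Integrable (fun z => (F z - g k (Fin.cons z.1 z.2)) ^ 2) (P.prod Q) :=
      integrable_of_measurable_of_abs_le ((hF.sub ((hg k).comp hcons.measurable)).pow_const 2)
        fun z => abs_sub_sq_le (hfK _) (hgK _ _)
    have hterm (k : Fin (n + 1)) : ∫ ω, (f ω - g k ω) ^ 2 ∂(Measure.pi fun _ => P) =
        ∫ z, (F z - g k (Fin.cons z.1 z.2)) ^ 2 ∂P.prod Q :=
      integral_pi_eq_integral_cons P ((hf.sub (hg k)).pow_const 2)
    have hhead (ω : Fin n → X) :
        Var[fun x => F (x, ω); P] ≤ ∫ x, (F (x, ω) - g 0 (Fin.cons x ω)) ^ 2 ∂P := by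
      obtain ⟨x₀⟩ := nonempty_of_isProbabilityMeasure P
      have hconst (x : X) : g 0 (Fin.cons x ω) = g 0 (Fin.cons x₀ ω) := by
        rw [← hgu 0 (Fin.cons x ω) x₀, Fin.update_cons_zero]
      simp_rw [hconst]
      exact variance_le_integral_sub_const_sq (memLp_of_measurable_of_abs_le
        (hF.comp measurable_prodMk_right) fun x => hfK _) _
    have htail (x : X) : Var[fun ω => F (x, ω); Q] ≤
        ∑ k : Fin n, ∫ ω, (F (x, ω) - g k.succ (Fin.cons x ω)) ^ 2 ∂Q :=
      ih (hf.comp (hsection x)) (fun ω => hfK _) (fun k => (hg k.succ).comp (hsection x))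
        (fun k ω => hgK _ _) fun k ω y => by simp only [Fin.cons_update, hgu]
    rw [← hcons.variance_fun_comp hf.aemeasurable, Fin.sum_univ_succ]
    simp_rw [hterm]
    refine (variance_prod_le_integral_add_integral P Q hF (fun z => hfK _)
      (hinteg 0).integral_prod_right
      (integrable_finsetSum _ fun k _ => (hinteg k.succ).integral_prod_left)
      hhead htail).trans_eq ?_
    rw [integral_finsetSum _ fun k _ => (hinteg k.succ).integral_prod_left,
      ← integral_prod_symm _ (hinteg 0)]
    simp_rw [← fun k : Fin n => integral_prod _ (hinteg k.succ)]

end EfronStein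

section Resampling

variable {ι : Type*} [Fintype ι] [DecidableEq ι] {X : ι → Type*} [∀ i, MeasurableSpace (X i)]
  (P : ∀ i, Measure (X i)) [∀ i, IsProbabilityMeasure (P i)]

lemma measurePreserving_update (j : ι) :
    MeasurePreserving (fun z : (∀ i, X i) × X j => Function.update z.1 j z.2)
      ((Measure.pi P).prod (P j)) (Measure.pi P) := by
  refine ⟨measurable_update', (Measure.pi_eq fun s hs => ?_).symm⟩
  have hpreimage : (fun z : (∀ i, X i) × X j => Function.update z.1 j z.2) ⁻¹' univ.pi s =
      univ.pi (Function.update s j univ) ×ˢ s j := by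
    ext ⟨ω, x⟩
    simp only [mem_preimage, mem_univ_pi, mem_prod,
      Function.forall_update_iff ω fun i y => y ∈ s i,
      Function.forall_update_iff s fun i t => ω i ∈ t, mem_univ, true_and]
    exact and_comm
  rw [Measure.map_apply measurable_update' (MeasurableSet.univ_pi hs), hpreimage,
    Measure.prod_prod, Measure.pi_pi]
  simp_rw [Function.apply_update fun i (t : Set (X i)) => P i t]
  rw [Finset.prod_update_of_mem (Finset.mem_univ j), measure_univ, one_mul,
    Finset.sdiff_singleton_eq_erase, Finset.prod_erase_mul _ _ (Finset.mem_univ j)]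

lemma integral_pi_eq_integral_integral_update (j : ι) {F : (∀ i, X i) → ℝ} (hF : Measurable F)
    {K : ℝ} (hK : ∀ ω, |F ω| ≤ K) :
    ∫ ω, F ω ∂Measure.pi P = ∫ ω, ∫ x, F (Function.update ω j x) ∂P j ∂Measure.pi P := by
  have h := measurePreserving_update P j
  conv_lhs => rw [← h.map_eq]
  rw [integral_map h.measurable.aemeasurable hF.aestronglyMeasurable]
  exact integral_prod _
    (integrable_of_measurable_of_abs_le (hF.comp h.measurable) fun z => hK _)

end Resampling

/-! ### Coverage models -/

section Coverage

variable {X : Type*} [MeasurableSpace X] {n : ℕ}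

/-- A soft coverage model: `k x y` is the degree to which a particle at `x` covers the site `y`.
Every particle covers the mass `p`, and every site is covered by a random particle to the mean
degree `p`. -/
structure CoverageKernel (P : Measure X) (k : X → X → ℝ) (p : ℝ) : Prop where
  measurable : Measurable (Function.uncurry k)
  nonneg : ∀ x y, 0 ≤ k x y
  le_one : ∀ x y, k x y ≤ 1
  integral_right : ∀ x, ∫ y, k x y ∂P = p
  integral_left : ∀ y, ∫ x, k x y ∂P = p

/-- The degree to which the particles `ω i`, `i ∈ J`, leave the site `y` uncovered. -/
def uncovered (k : X → X → ℝ) (J : Finset (Fin n)) (ω : Fin n → X) (y : X) : ℝ :=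
  ∏ i ∈ J, (1 - k (ω i) y)

/-- The mass left uncovered by the particles `ω i`, `i ∈ J`. -/
def vacancy (P : Measure X) (k : X → X → ℝ) (J : Finset (Fin n)) (ω : Fin n → X) : ℝ :=
  ∫ y, uncovered k J ω y ∂P

/-- The mass covered by all `n` particles together. -/
def coverage (P : Measure X) (k : X → X → ℝ) (ω : Fin n → X) : ℝ :=
  1 - vacancy P k Finset.univ ω

/-- The mass covered by the particle `ω j` but not by the particles `ω i`, `i ∈ J`. -/
def newCover (P : Measure X) (k : X → X → ℝ) (J : Finset (Fin n)) (j : Fin n) (ω : Fin n → X) :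
    ℝ :=
  ∫ y, uncovered k J ω y * k (ω j) y ∂P

/-- The mass covered jointly by two particles. -/
def overlap (P : Measure X) (k : X → X → ℝ) (x x' : X) : ℝ :=
  ∫ y, k x y * k x' y ∂P

/-- For `J = {i | i < j}`, the increment `E[V | ω₀, …, ω_j] - E[V | ω₀, …, ω_{j-1}]` of the Doob
martingale of the coverage `V`. -/
def coverIncrement (P : Measure X) (k : X → X → ℝ) (p : ℝ) (J : Finset (Fin n)) (j : Fin n)
    (ω : Fin n → X) : ℝ :=
  (1 - p) ^ (n - 1 - (j : ℕ)) * (newCover P k J j ω - p * vacancy P k J ω)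

/-- For `S = univ`, the sum of the Doob increments, each weighted by the change in coverage when
the particle is removed; a general `S` discards the other particles. -/
def steinSum (P : Measure X) (k : X → X → ℝ) (p : ℝ) (S : Finset (Fin n)) (ω : Fin n → X) : ℝ :=
  ∑ j ∈ S, coverIncrement P k p {i ∈ S | i < j} j ω * newCover P k (S.erase j) j ω

/-- The total overlap of the particle `ω l` with the particles `ω j`, `j ∈ S`. -/
def overlapSum (P : Measure X) (k : X → X → ℝ) (S : Finset (Fin n)) (l : Fin n) (ω : Fin n → X) :
    ℝ :=
  ∑ j ∈ S, overlap P k (ω j) (ω l)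

section Update

variable {P : Measure X} {k : X → X → ℝ} {p : ℝ} {J : Finset (Fin n)} {j : Fin n}

lemma uncovered_update {Y : Type*} {k : Y → Y → ℝ} (hj : j ∉ J) (ω : Fin n → Y) (x y : Y) :
    uncovered k J (Function.update ω j x) y = uncovered k J ω y :=
  Finset.prod_congr rfl fun i hi => by
    rw [Function.update_of_ne (ne_of_mem_of_not_mem hi hj)]

lemma vacancy_update (hj : j ∉ J) (ω : Fin n → X) (x : X) :
    vacancy P k J (Function.update ω j x) = vacancy P k J ω := by
  simp only [vacancy, uncovered_update hj]

lemma newCover_update (hj : j ∉ J) {i : Fin n} (hij : i ≠ j) (ω : Fin n → X) (x : X) :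
    newCover P k J i (Function.update ω j x) = newCover P k J i ω := by
  simp only [newCover, uncovered_update hj, Function.update_of_ne hij]

lemma coverIncrement_update (hj : j ∉ J) {i : Fin n} (hij : i ≠ j) (ω : Fin n → X) (x : X) :
    coverIncrement P k p J i (Function.update ω j x) = coverIncrement P k p J i ω := by
  simp only [coverIncrement, newCover_update hj hij, vacancy_update hj]

lemma steinSum_update (hj : j ∉ J) (ω : Fin n → X) (x : X) :
    steinSum P k p J (Function.update ω j x) = steinSum P k p J ω :=
  Finset.sum_congr rfl fun i hi => by
    have hij : i ≠ j := ne_of_mem_of_not_mem hi hj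
    rw [newCover_update (fun h => hj (Finset.mem_of_mem_erase h)) hij,
      coverIncrement_update (fun h => hj (Finset.mem_of_mem_filter _ h)) hij]

end Update

namespace CoverageKernel

section Pointwise

variable {P : Measure X} {k : X → X → ℝ} {p : ℝ}

lemma abs_le_one (h : CoverageKernel P k p) (x y : X) : |k x y| ≤ 1 :=
  (abs_of_nonneg (h.nonneg x y)).trans_le (h.le_one x y)

lemma measurable_eval (h : CoverageKernel P k p) (j : Fin n) :
    Measurable fun z : (Fin n → X) × X => k (z.1 j) z.2 :=
  h.measurable.comp (f := fun z : (Fin n → X) × X => (z.1 j, z.2))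
    (((measurable_pi_apply j).comp measurable_fst).prodMk measurable_snd)

lemma uncovered_nonneg (h : CoverageKernel P k p) (J : Finset (Fin n)) (ω : Fin n → X) (y : X) :
    0 ≤ uncovered k J ω y :=
  Finset.prod_nonneg fun _ _ => sub_nonneg.2 (h.le_one _ _)

lemma uncovered_le_one (h : CoverageKernel P k p) (J : Finset (Fin n)) (ω : Fin n → X) (y : X) :
    uncovered k J ω y ≤ 1 :=
  Finset.prod_le_one (fun _ _ => sub_nonneg.2 (h.le_one _ _))
    fun _ _ => sub_le_self _ (h.nonneg _ _)

lemma abs_uncovered_le_one (h : CoverageKernel P k p) (J : Finset (Fin n)) (ω : Fin n → X)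
    (y : X) : |uncovered k J ω y| ≤ 1 :=
  (abs_of_nonneg (h.uncovered_nonneg J ω y)).trans_le (h.uncovered_le_one J ω y)

lemma abs_uncovered_mul_le_one (h : CoverageKernel P k p) (J : Finset (Fin n)) (ω : Fin n → X)
    (x y : X) : |uncovered k J ω y * k x y| ≤ 1 := by
  rw [abs_mul]
  exact mul_le_one₀ (h.abs_uncovered_le_one J ω y) (abs_nonneg _) (h.abs_le_one x y)

lemma measurable_uncovered (h : CoverageKernel P k p) (J : Finset (Fin n)) :
    Measurable fun z : (Fin n → X) × X => uncovered k J z.1 z.2 :=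
  Finset.measurable_prod _ fun i _ => (h.measurable_eval i).const_sub 1

lemma measurable_uncovered_right (h : CoverageKernel P k p) (J : Finset (Fin n))
    (ω : Fin n → X) : Measurable (uncovered k J ω) :=
  (h.measurable_uncovered J).comp measurable_prodMk_left

lemma measurable_uncovered_mul_uncovered (h : CoverageKernel P k p) :
    Measurable fun w : (Fin n → X) × (X × X) =>
      uncovered k Finset.univ w.1 w.2.1 * uncovered k Finset.univ w.1 w.2.2 :=
  ((h.measurable_uncovered _).comp (measurable_fst.prodMk measurable_snd.fst)).mul
    ((h.measurable_uncovered _).comp (measurable_fst.prodMk measurable_snd.snd))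

lemma abs_uncovered_mul_uncovered_le_one (h : CoverageKernel P k p) (ω : Fin n → X) (y z : X) :
    |uncovered k Finset.univ ω y * uncovered k Finset.univ ω z| ≤ 1 := by
  rw [abs_mul]
  exact mul_le_one₀ (h.abs_uncovered_le_one _ ω y) (abs_nonneg _) (h.abs_uncovered_le_one _ ω z)

lemma overlap_nonneg (h : CoverageKernel P k p) (x x' : X) : 0 ≤ overlap P k x x' :=
  integral_nonneg fun _ => mul_nonneg (h.nonneg _ _) (h.nonneg _ _)

lemma vacancy_nonneg (h : CoverageKernel P k p) (J : Finset (Fin n)) (ω : Fin n → X) :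
    0 ≤ vacancy P k J ω :=
  integral_nonneg fun _ => h.uncovered_nonneg _ _ _

lemma newCover_nonneg (h : CoverageKernel P k p) (J : Finset (Fin n)) (j : Fin n)
    (ω : Fin n → X) : 0 ≤ newCover P k J j ω :=
  integral_nonneg fun _ => mul_nonneg (h.uncovered_nonneg _ _ _) (h.nonneg _ _)

lemma abs_uncovered_sub_erase_le (h : CoverageKernel P k p) (J : Finset (Fin n)) (l : Fin n)
    (ω : Fin n → X) (y : X) : |uncovered k J ω y - uncovered k (J.erase l) ω y| ≤ k (ω l) y := by
  by_cases hl : l ∈ J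
  · have hfactor : uncovered k J ω y - uncovered k (J.erase l) ω y =
        -(uncovered k (J.erase l) ω y * k (ω l) y) := by
      rw [uncovered, ← Finset.mul_prod_erase J _ hl, ← uncovered]
      ring
    rw [hfactor, abs_neg, abs_of_nonneg (mul_nonneg (h.uncovered_nonneg _ _ _) (h.nonneg _ _))]
    exact mul_le_of_le_one_left (h.nonneg _ _) (h.uncovered_le_one _ _ _)
  · rw [Finset.erase_eq_of_notMem hl, sub_self, abs_zero]
    exact h.nonneg _ _

end Pointwise

section Bounds

variable {P : Measure X} [IsProbabilityMeasure P] {k : X → X → ℝ} {p : ℝ}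

lemma integrable_right (h : CoverageKernel P k p) (x : X) : Integrable (k x) P :=
  integrable_of_measurable_of_abs_le h.measurable.of_uncurry_left (h.abs_le_one x)

lemma integrable_left (h : CoverageKernel P k p) (y : X) : Integrable (fun x => k x y) P :=
  integrable_of_measurable_of_abs_le h.measurable.of_uncurry_right (h.abs_le_one · y)

lemma integrable_mul (h : CoverageKernel P k p) (x x' : X) :
    Integrable (fun y => k x y * k x' y) P :=
  (h.integrable_right x').bdd_mul h.measurable.of_uncurry_left.aestronglyMeasurable
    (ae_of_all _ (h.abs_le_one x))

lemma integrable_uncovered (h : CoverageKernel P k p) (J : Finset (Fin n)) (ω : Fin n → X) :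
    Integrable (uncovered k J ω) P :=
  integrable_of_measurable_of_abs_le (h.measurable_uncovered_right J ω)
    (h.abs_uncovered_le_one J ω)

lemma integrable_uncovered_mul (h : CoverageKernel P k p) (J : Finset (Fin n)) (ω : Fin n → X)
    (x : X) : Integrable (fun y => uncovered k J ω y * k x y) P :=
  integrable_of_measurable_of_abs_le
    ((h.measurable_uncovered_right J ω).mul h.measurable.of_uncurry_left)
    (h.abs_uncovered_mul_le_one J ω x)

lemma param_nonneg (h : CoverageKernel P k p) : 0 ≤ p := by
  obtain ⟨x⟩ := nonempty_of_isProbabilityMeasure P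
  exact h.integral_right x ▸ integral_nonneg fun y => h.nonneg x y

lemma param_le_one (h : CoverageKernel P k p) : p ≤ 1 := by
  obtain ⟨x⟩ := nonempty_of_isProbabilityMeasure P
  exact h.integral_right x ▸ (le_abs_self _).trans
    (abs_integral_le_of_forall_abs_le (h.abs_le_one x))

lemma one_sub_pow_nonneg (h : CoverageKernel P k p) (m : ℕ) : 0 ≤ (1 - p) ^ m :=
  pow_nonneg (sub_nonneg.2 h.param_le_one) m

lemma one_sub_pow_le_one (h : CoverageKernel P k p) (m : ℕ) : (1 - p) ^ m ≤ 1 :=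
  pow_le_one₀ (sub_nonneg.2 h.param_le_one) (sub_le_self _ h.param_nonneg)

lemma overlap_le (h : CoverageKernel P k p) (x x' : X) : overlap P k x x' ≤ p := by
  rw [← h.integral_right x]
  exact integral_mono (h.integrable_mul x x') (h.integrable_right x)
    fun _ => mul_le_of_le_one_right (h.nonneg _ _) (h.le_one _ _)

lemma abs_overlap_le (h : CoverageKernel P k p) (x x' : X) : |overlap P k x x'| ≤ p :=
  (abs_of_nonneg (h.overlap_nonneg x x')).trans_le (h.overlap_le x x')

lemma vacancy_le_one (h : CoverageKernel P k p) (J : Finset (Fin n)) (ω : Fin n → X) :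
    vacancy P k J ω ≤ 1 :=
  (le_abs_self _).trans (abs_integral_le_of_forall_abs_le (h.abs_uncovered_le_one J ω))

lemma newCover_le (h : CoverageKernel P k p) (J : Finset (Fin n)) (j : Fin n) (ω : Fin n → X) :
    newCover P k J j ω ≤ p := by
  rw [← h.integral_right (ω j)]
  exact integral_mono (h.integrable_uncovered_mul J ω (ω j)) (h.integrable_right _)
    fun _ => mul_le_of_le_one_left (h.nonneg _ _) (h.uncovered_le_one _ _ _)

lemma abs_newCover_sub_mul_vacancy_le (h : CoverageKernel P k p) (J : Finset (Fin n))
    (j : Fin n) (ω : Fin n → X) : |newCover P k J j ω - p * vacancy P k J ω| ≤ p :=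
  abs_sub_le_of_nonneg_of_le (h.newCover_nonneg J j ω) (h.newCover_le J j ω)
    (mul_nonneg h.param_nonneg (h.vacancy_nonneg J ω))
    (mul_le_of_le_one_right h.param_nonneg (h.vacancy_le_one J ω))

lemma abs_coverIncrement_le_pow_mul (h : CoverageKernel P k p) (J : Finset (Fin n)) (j : Fin n)
    (ω : Fin n → X) : |coverIncrement P k p J j ω| ≤ (1 - p) ^ (n - 1 - (j : ℕ)) * p := by
  rw [coverIncrement, abs_mul, abs_of_nonneg (h.one_sub_pow_nonneg _)]
  exact mul_le_mul_of_nonneg_left (h.abs_newCover_sub_mul_vacancy_le J j ω)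
    (h.one_sub_pow_nonneg _)

lemma abs_coverIncrement_le (h : CoverageKernel P k p) (J : Finset (Fin n)) (j : Fin n)
    (ω : Fin n → X) : |coverIncrement P k p J j ω| ≤ p :=
  (h.abs_coverIncrement_le_pow_mul J j ω).trans
    (mul_le_of_le_one_left h.param_nonneg (h.one_sub_pow_le_one _))

lemma sum_abs_coverIncrement_le (h : CoverageKernel P k p) (ω : Fin n → X) :
    ∑ j, |coverIncrement P k p {i | i < j} j ω| ≤ 1 - (1 - p) ^ n :=
  calc ∑ j, |coverIncrement P k p {i | i < j} j ω|
      ≤ ∑ j : Fin n, (1 - p) ^ (n - 1 - (j : ℕ)) * p :=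
        Finset.sum_le_sum fun j _ => h.abs_coverIncrement_le_pow_mul _ j ω
    _ = (∑ i ∈ Finset.range n, (1 - p) ^ i) * p := by
        rw [Fin.sum_univ_eq_sum_range (fun j => (1 - p) ^ (n - 1 - j) * p), ← Finset.sum_mul,
          Finset.sum_range_reflect (fun j => (1 - p) ^ j)]
    _ = 1 - (1 - p) ^ n := by linarith [geom_sum_mul (1 - p) n]

lemma abs_coverIncrement_mul_newCover_le (h : CoverageKernel P k p) (J J' : Finset (Fin n))
    (j : Fin n) (ω : Fin n → X) : |coverIncrement P k p J j ω * newCover P k J' j ω| ≤ p ^ 2 := by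
  rw [abs_mul, abs_of_nonneg (h.newCover_nonneg J' j ω), sq]
  exact mul_le_mul (h.abs_coverIncrement_le J j ω) (h.newCover_le J' j ω)
    (h.newCover_nonneg J' j ω) h.param_nonneg

end Bounds

section Measurability

variable {P : Measure X} [SFinite P] {k : X → X → ℝ} {p : ℝ}

lemma measurable_vacancy (h : CoverageKernel P k p) (J : Finset (Fin n)) :
    Measurable (vacancy P k J) :=
  (h.measurable_uncovered J).stronglyMeasurable.integral_prod_right'.measurable

lemma measurable_coverage (h : CoverageKernel P k p) : Measurable (coverage (n := n) P k) :=
  (h.measurable_vacancy _).const_sub 1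

lemma measurable_newCover (h : CoverageKernel P k p) (J : Finset (Fin n)) (j : Fin n) :
    Measurable (newCover P k J j) :=
  ((h.measurable_uncovered J).mul
    (h.measurable_eval j)).stronglyMeasurable.integral_prod_right'.measurable

lemma measurable_overlap (h : CoverageKernel P k p) :
    Measurable fun z : X × X => overlap P k z.1 z.2 := by
  have hmul : Measurable fun w : (X × X) × X => k w.1.1 w.2 * k w.1.2 w.2 :=
    (h.measurable.comp (measurable_fst.fst.prodMk measurable_snd)).mul
      (h.measurable.comp (measurable_fst.snd.prodMk measurable_snd))
  exact hmul.stronglyMeasurable.integral_prod_right'.measurable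

lemma measurable_overlap_eval (h : CoverageKernel P k p) (i j : Fin n) :
    Measurable fun ω : Fin n → X => overlap P k (ω i) (ω j) :=
  h.measurable_overlap.comp (f := fun ω : Fin n → X => (ω i, ω j))
    ((measurable_pi_apply i).prodMk (measurable_pi_apply j))

lemma measurable_coverIncrement (h : CoverageKernel P k p) (J : Finset (Fin n)) (j : Fin n) :
    Measurable (coverIncrement P k p J j) :=
  ((h.measurable_newCover J j).sub ((h.measurable_vacancy J).const_mul p)).const_mul _

lemma measurable_steinSum (h : CoverageKernel P k p) (S : Finset (Fin n)) :
    Measurable (steinSum P k p S) :=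
  Finset.measurable_sum _ fun j _ =>
    (h.measurable_coverIncrement _ j).mul (h.measurable_newCover _ j)

end Measurability

end CoverageKernel

end Coverage

namespace CoverageKernel

variable {X : Type*} [MeasurableSpace X] {n : ℕ} {P : Measure X} [IsProbabilityMeasure P]
  {k : X → X → ℝ} {p : ℝ}

section Removal

lemma vacancy_insert (h : CoverageKernel P k p) {J : Finset (Fin n)} {j : Fin n} (hj : j ∉ J)
    (ω : Fin n → X) : vacancy P k (insert j J) ω = vacancy P k J ω - newCover P k J j ω := by
  rw [vacancy, vacancy, newCover, ← integral_sub (h.integrable_uncovered J ω)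
    (h.integrable_uncovered_mul J ω _)]
  congr 1 with y
  rw [uncovered, Finset.prod_insert hj, ← uncovered]
  ring

lemma coverage_sub_newCover (h : CoverageKernel P k p) (j : Fin n) (ω : Fin n → X) :
    coverage P k ω - newCover P k (Finset.univ.erase j) j ω =
      1 - vacancy P k (Finset.univ.erase j) ω := by
  have hinsert := h.vacancy_insert (Finset.notMem_erase j Finset.univ) ω
  rw [Finset.insert_erase (Finset.mem_univ j)] at hinsert
  rw [coverage, hinsert]
  ring

lemma abs_vacancy_sub_erase_le (h : CoverageKernel P k p) (J : Finset (Fin n)) (l : Fin n)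
    (ω : Fin n → X) : |vacancy P k J ω - vacancy P k (J.erase l) ω| ≤ p := by
  have hinteg := (h.integrable_uncovered J ω).sub (h.integrable_uncovered (J.erase l) ω)
  rw [vacancy, vacancy, ← integral_sub (h.integrable_uncovered J ω) (h.integrable_uncovered _ ω),
    ← h.integral_right (ω l)]
  exact abs_integral_le_integral_abs.trans
    (integral_mono hinteg.abs (h.integrable_right _) (h.abs_uncovered_sub_erase_le J l ω))

lemma abs_newCover_sub_erase_le (h : CoverageKernel P k p) (J : Finset (Fin n)) (j l : Fin n)
    (ω : Fin n → X) :
    |newCover P k J j ω - newCover P k (J.erase l) j ω| ≤ overlap P k (ω j) (ω l) := by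
  have hinteg := (h.integrable_uncovered_mul J ω (ω j)).sub
    (h.integrable_uncovered_mul (J.erase l) ω (ω j))
  rw [newCover, newCover, ← integral_sub (h.integrable_uncovered_mul J ω _)
    (h.integrable_uncovered_mul _ ω _)]
  refine abs_integral_le_integral_abs.trans
    (integral_mono hinteg.abs (h.integrable_mul _ _) fun y => ?_)
  beta_reduce
  rw [← sub_mul, abs_mul, abs_of_nonneg (h.nonneg (ω j) y), mul_comm]
  exact mul_le_mul_of_nonneg_left (h.abs_uncovered_sub_erase_le J l ω y) (h.nonneg _ _)

lemma abs_coverIncrement_sub_erase_le (h : CoverageKernel P k p) (J : Finset (Fin n))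
    (j l : Fin n) (ω : Fin n → X) :
    |coverIncrement P k p J j ω - coverIncrement P k p (J.erase l) j ω| ≤
      overlap P k (ω j) (ω l) + p * p := by
  rw [coverIncrement, coverIncrement, ← mul_sub, abs_mul, abs_of_nonneg (h.one_sub_pow_nonneg _)]
  refine (mul_le_of_le_one_left (abs_nonneg _) (h.one_sub_pow_le_one _)).trans ?_
  rw [sub_sub_sub_comm, ← mul_sub]
  refine (abs_sub _ _).trans (add_le_add (h.abs_newCover_sub_erase_le J j l ω) ?_)
  rw [abs_mul, abs_of_nonneg h.param_nonneg]
  exact mul_le_mul_of_nonneg_left (h.abs_vacancy_sub_erase_le J l ω) h.param_nonneg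

lemma abs_coverIncrement_mul_newCover_sub_erase_le (h : CoverageKernel P k p)
    (J J' : Finset (Fin n)) (j l : Fin n) (ω : Fin n → X) :
    |coverIncrement P k p J j ω * newCover P k J' j ω -
      coverIncrement P k p (J.erase l) j ω * newCover P k (J'.erase l) j ω| ≤
      2 * p * overlap P k (ω j) (ω l) + p ^ 3 := by
  set D := coverIncrement P k p J j ω
  set D' := coverIncrement P k p (J.erase l) j ω
  set H := newCover P k J' j ω
  set H' := newCover P k (J'.erase l) j ω
  have hH : |H| ≤ p :=
    (abs_of_nonneg (h.newCover_nonneg _ _ _)).trans_le (h.newCover_le _ _ _)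
  have hD := h.abs_coverIncrement_sub_erase_le J j l ω
  calc |D * H - D' * H'| = |(D - D') * H + D' * (H - H')| := by congr 1; ring
    _ ≤ |D - D'| * |H| + |D'| * |H - H'| := by
        simpa only [abs_mul] using abs_add_le ((D - D') * H) (D' * (H - H'))
    _ ≤ (overlap P k (ω j) (ω l) + p * p) * p + p * overlap P k (ω j) (ω l) :=
        add_le_add
          (mul_le_mul hD hH (abs_nonneg _) ((abs_nonneg _).trans hD))
          (mul_le_mul (h.abs_coverIncrement_le _ _ _) (h.abs_newCover_sub_erase_le J' j l ω)
            (abs_nonneg _) h.param_nonneg)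
    _ = _ := by ring

lemma abs_steinSum_le (h : CoverageKernel P k p) (S : Finset (Fin n)) (ω : Fin n → X) :
    |steinSum P k p S ω| ≤ n * p ^ 2 :=
  calc |steinSum P k p S ω| ≤ ∑ _j ∈ S, p ^ 2 :=
        (Finset.abs_sum_le_sum_abs _ _).trans
          (Finset.sum_le_sum fun j _ => h.abs_coverIncrement_mul_newCover_le _ _ j ω)
    _ ≤ ∑ _j : Fin n, p ^ 2 :=
        Finset.sum_le_sum_of_subset_of_nonneg S.subset_univ fun _ _ _ => sq_nonneg p
    _ = n * p ^ 2 := by simp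

lemma abs_steinSum_sub_erase_le (h : CoverageKernel P k p) {S : Finset (Fin n)} {l : Fin n}
    (hl : l ∈ S) (ω : Fin n → X) :
    |steinSum P k p S ω - steinSum P k p (S.erase l) ω| ≤
      p ^ 2 + n * p ^ 3 + 2 * p * overlapSum P k (S.erase l) l ω := by
  set t : Finset (Fin n) → Fin n → ℝ := fun S j =>
    coverIncrement P k p {i ∈ S | i < j} j ω * newCover P k (S.erase j) j ω with ht
  have hterm (j : Fin n) :
      |t S j - t (S.erase l) j| ≤ 2 * p * overlap P k (ω j) (ω l) + p ^ 3 := by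
    simp only [ht, Finset.filter_erase, Finset.erase_right_comm (a := l)]
    exact h.abs_coverIncrement_mul_newCover_sub_erase_le _ _ j l ω
  have hcard : ((S.erase l).card : ℝ) ≤ n := by
    exact_mod_cast (Finset.card_le_univ _).trans_eq (Fintype.card_fin n)
  calc |steinSum P k p S ω - steinSum P k p (S.erase l) ω|
      = |t S l + ∑ j ∈ S.erase l, (t S j - t (S.erase l) j)| := by
        rw [Finset.sum_sub_distrib, ← add_sub_assoc, Finset.add_sum_erase _ _ hl]
        rfl
    _ ≤ p ^ 2 + ∑ j ∈ S.erase l, (2 * p * overlap P k (ω j) (ω l) + p ^ 3) :=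
        (abs_add_le _ _).trans (add_le_add (h.abs_coverIncrement_mul_newCover_le _ _ l ω)
          ((Finset.abs_sum_le_sum_abs _ _).trans (Finset.sum_le_sum fun j _ => hterm j)))
    _ = p ^ 2 + (S.erase l).card * p ^ 3 + 2 * p * overlapSum P k (S.erase l) l ω := by
        rw [Finset.sum_add_distrib, ← Finset.mul_sum, Finset.sum_const, nsmul_eq_mul, overlapSum]
        ring
    _ ≤ _ := by
        have hp := h.param_nonneg
        gcongr

end Removal

section OverlapMoments

lemma integral_overlap_left (h : CoverageKernel P k p) (x' : X) :
    ∫ x, overlap P k x x' ∂P = p ^ 2 := by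
  have hmul : Measurable fun z : X × X => k z.1 z.2 * k x' z.2 :=
    h.measurable.mul (h.measurable.of_uncurry_left.comp measurable_snd)
  have hinteg : Integrable (fun z : X × X => k z.1 z.2 * k x' z.2) (P.prod P) :=
    integrable_of_measurable_of_abs_le (C := 1) hmul fun z => by
      rw [abs_mul]
      exact mul_le_one₀ (h.abs_le_one _ _) (abs_nonneg _) (h.abs_le_one _ _)
  simp only [overlap]
  rw [integral_integral_swap hinteg]
  simp only [integral_mul_const, h.integral_left, integral_const_mul, h.integral_right, sq]

lemma integral_overlap_eval (h : CoverageKernel P k p) {i l : Fin n} (hil : i ≠ l) :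
    ∫ ω, overlap P k (ω i) (ω l) ∂(Measure.pi fun _ : Fin n => P) = p ^ 2 := by
  rw [integral_pi_eq_integral_integral_update _ i (h.measurable_overlap_eval i l)
    fun ω => h.abs_overlap_le _ _]
  simp [Function.update_of_ne hil.symm, h.integral_overlap_left]

lemma abs_overlap_mul_overlap_le (h : CoverageKernel P k p) (x₁ x₂ x₃ x₄ : X) :
    |overlap P k x₁ x₂ * overlap P k x₃ x₄| ≤ p * p := by
  rw [abs_mul]
  exact mul_le_mul (h.abs_overlap_le _ _) (h.abs_overlap_le _ _) (abs_nonneg _) h.param_nonneg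

lemma integrable_overlap_mul_overlap_eval (h : CoverageKernel P k p) (i j l : Fin n) :
    Integrable (fun ω => overlap P k (ω i) (ω l) * overlap P k (ω j) (ω l))
      (Measure.pi fun _ : Fin n => P) :=
  integrable_of_measurable_of_abs_le
    ((h.measurable_overlap_eval i l).mul (h.measurable_overlap_eval j l))
    fun _ => h.abs_overlap_mul_overlap_le _ _ _ _

lemma integral_overlap_sq_eval_le (h : CoverageKernel P k p) {i l : Fin n} (hil : i ≠ l) :
    ∫ ω, overlap P k (ω i) (ω l) * overlap P k (ω i) (ω l) ∂(Measure.pi fun _ : Fin n => P) ≤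
      p ^ 3 :=
  calc ∫ ω, overlap P k (ω i) (ω l) * overlap P k (ω i) (ω l) ∂(Measure.pi fun _ : Fin n => P)
      ≤ ∫ ω, p * overlap P k (ω i) (ω l) ∂(Measure.pi fun _ : Fin n => P) :=
        integral_mono (h.integrable_overlap_mul_overlap_eval i i l)
          ((integrable_of_measurable_of_abs_le (h.measurable_overlap_eval i l)
            fun _ => h.abs_overlap_le _ _).const_mul p)
          fun _ => mul_le_mul_of_nonneg_right (h.overlap_le _ _) (h.overlap_nonneg _ _)
    _ = p ^ 3 := by rw [integral_const_mul, h.integral_overlap_eval hil]; ring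

lemma integral_overlap_mul_overlap_eval (h : CoverageKernel P k p) {i j l : Fin n} (hil : i ≠ l)
    (hjl : j ≠ l) (hij : i ≠ j) :
    ∫ ω, overlap P k (ω i) (ω l) * overlap P k (ω j) (ω l) ∂(Measure.pi fun _ : Fin n => P) =
      p ^ 4 := by
  have hmul : Measurable fun ω : Fin n → X => overlap P k (ω i) (ω l) * overlap P k (ω j) (ω l) :=
    (h.measurable_overlap_eval i l).mul (h.measurable_overlap_eval j l)
  rw [integral_pi_eq_integral_integral_update _ i hmul
    fun _ => h.abs_overlap_mul_overlap_le _ _ _ _]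
  simp only [Function.update_self, Function.update_of_ne hil.symm, Function.update_of_ne hij.symm,
    integral_mul_const, h.integral_overlap_left, integral_const_mul, h.integral_overlap_eval hjl]
  ring

lemma memLp_overlapSum (h : CoverageKernel P k p) (S : Finset (Fin n)) (l : Fin n) :
    MemLp (overlapSum P k S l) 2 (Measure.pi fun _ : Fin n => P) :=
  memLp_finsetSum S fun j _ => memLp_of_measurable_of_abs_le (h.measurable_overlap_eval j l)
    fun _ => h.abs_overlap_le _ _

lemma integral_overlapSum_sq_le (h : CoverageKernel P k p) {S : Finset (Fin n)} {l : Fin n}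
    (hl : l ∉ S) :
    ∫ ω, overlapSum P k S l ω ^ 2 ∂(Measure.pi fun _ : Fin n => P) ≤
      n ^ 2 * p ^ 4 + n * p ^ 3 := by
  have hp := h.param_nonneg
  have hcard : (S.card : ℝ) ≤ n := by
    exact_mod_cast S.card_le_univ.trans_eq (Fintype.card_fin n)
  have hinteg (i j : Fin n) := h.integrable_overlap_mul_overlap_eval i j l
  have hmoment (i j : Fin n) (hi : i ∈ S) (hj : j ∈ S) :
      ∫ ω, overlap P k (ω i) (ω l) * overlap P k (ω j) (ω l) ∂(Measure.pi fun _ : Fin n => P) ≤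
        p ^ 4 + if i = j then p ^ 3 else 0 := by
    have hil : i ≠ l := ne_of_mem_of_not_mem hi hl
    have hjl : j ≠ l := ne_of_mem_of_not_mem hj hl
    split_ifs with hij
    · subst hij
      exact (h.integral_overlap_sq_eval_le hil).trans (le_add_of_nonneg_left (by positivity))
    · rw [h.integral_overlap_mul_overlap_eval hil hjl hij, add_zero]
  calc ∫ ω, overlapSum P k S l ω ^ 2 ∂(Measure.pi fun _ : Fin n => P)
      = ∑ i ∈ S, ∑ j ∈ S, ∫ ω, overlap P k (ω i) (ω l) * overlap P k (ω j) (ω l)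
          ∂(Measure.pi fun _ : Fin n => P) := by
        simp only [overlapSum, sq, Finset.sum_mul_sum]
        rw [integral_finsetSum _ fun i _ => integrable_finsetSum _ fun j _ => hinteg i j]
        simp_rw [integral_finsetSum _ fun j _ => hinteg _ j]
    _ ≤ ∑ i ∈ S, ∑ j ∈ S, (p ^ 4 + if i = j then p ^ 3 else 0) :=
        Finset.sum_le_sum fun i hi => Finset.sum_le_sum fun j hj => hmoment i j hi hj
    _ = (S.card : ℝ) ^ 2 * p ^ 4 + S.card * p ^ 3 := by
        simp only [Finset.sum_add_distrib, Finset.sum_const, nsmul_eq_mul, Finset.sum_ite_eq,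
          Finset.sum_ite_mem, Finset.inter_self]
        ring
    _ ≤ n ^ 2 * p ^ 4 + n * p ^ 3 := by gcongr

end OverlapMoments

end CoverageKernel

namespace CoverageKernel

variable {X : Type*} [MeasurableSpace X] {n : ℕ} {P : Measure X} [IsProbabilityMeasure P]
  {k : X → X → ℝ} {p : ℝ}

lemma integral_newCover_update (h : CoverageKernel P k p) {J : Finset (Fin n)} {j : Fin n}
    (hj : j ∉ J) (ω : Fin n → X) :
    ∫ x, newCover P k J j (Function.update ω j x) ∂P = p * vacancy P k J ω := by
  have hmul : Measurable fun z : X × X => uncovered k J ω z.2 * k z.1 z.2 :=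
    ((h.measurable_uncovered_right J ω).comp measurable_snd).mul h.measurable
  have hinteg : Integrable (fun z : X × X => uncovered k J ω z.2 * k z.1 z.2) (P.prod P) :=
    integrable_of_measurable_of_abs_le hmul fun z => h.abs_uncovered_mul_le_one J ω z.1 z.2
  simp only [newCover, uncovered_update hj, Function.update_self]
  rw [integral_integral_swap hinteg]
  simp only [integral_const_mul, h.integral_left, integral_mul_const, vacancy, mul_comm]

lemma integral_coverIncrement_update (h : CoverageKernel P k p) {J : Finset (Fin n)} {j : Fin n}
    (hj : j ∉ J) (ω : Fin n → X) :
    ∫ x, coverIncrement P k p J j (Function.update ω j x) ∂P = 0 := by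
  have hinteg : Integrable (fun x => newCover P k J j (Function.update ω j x)) P :=
    integrable_of_measurable_of_abs_le
      ((h.measurable_newCover J j).comp (measurable_update ω))
      fun x => (abs_of_nonneg (h.newCover_nonneg _ _ _)).trans_le (h.newCover_le _ _ _)
  simp only [coverIncrement, vacancy_update hj]
  rw [integral_const_mul, integral_sub hinteg (integrable_const _), h.integral_newCover_update hj,
    integral_const, probReal_univ, one_smul, sub_self, mul_zero]

lemma abs_coverIncrement_mul_le (h : CoverageKernel P k p) (J : Finset (Fin n)) (j : Fin n)
    (ω : Fin n → X) {x K : ℝ} (hx : |x| ≤ K) : |coverIncrement P k p J j ω * x| ≤ p * K := by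
  rw [abs_mul]
  exact mul_le_mul (h.abs_coverIncrement_le J j ω) hx (abs_nonneg _) h.param_nonneg

lemma integral_coverIncrement_mul_eq_zero (h : CoverageKernel P k p) {J : Finset (Fin n)}
    {j : Fin n} (hj : j ∉ J) {F : (Fin n → X) → ℝ} (hF : Measurable F) {K : ℝ}
    (hK : ∀ ω, |F ω| ≤ K) (hFj : ∀ ω x, F (Function.update ω j x) = F ω) :
    ∫ ω, coverIncrement P k p J j ω * F ω ∂(Measure.pi fun _ => P) = 0 := by
  have hmul : Measurable fun ω => coverIncrement P k p J j ω * F ω :=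
    (h.measurable_coverIncrement J j).mul hF
  rw [integral_pi_eq_integral_integral_update _ j hmul
    fun ω => h.abs_coverIncrement_mul_le J j ω (hK ω)]
  simp only [hFj, integral_mul_const, h.integral_coverIncrement_update hj, zero_mul, integral_zero]

lemma sum_coverIncrement (h : CoverageKernel P k p) (ω : Fin n → X) :
    ∑ j, coverIncrement P k p {i | i < j} j ω = coverage P k ω - (1 - (1 - p) ^ n) := by
  set A : ℕ → ℝ := fun m => (1 - p) ^ (n - m) * vacancy P k {i : Fin n | (i : ℕ) < m} ω with hA
  have hstep (j : Fin n) : coverIncrement P k p {i | i < j} j ω = A j - A (j + 1) := by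
    have hinsert : ({i : Fin n | (i : ℕ) < j + 1} : Finset (Fin n)) =
        insert j ({i | i < j} : Finset (Fin n)) := by
      ext i
      simp [Order.lt_add_one_iff, le_iff_eq_or_lt, Fin.ext_iff]
    have hexp : n - (j : ℕ) = n - 1 - j + 1 := by omega
    have hexp' : n - ((j : ℕ) + 1) = n - 1 - j := by omega
    simp only [hA, hinsert, Fin.val_fin_lt]
    rw [h.vacancy_insert (by simp), hexp', hexp, pow_succ, coverIncrement]
    ring
  simp_rw [hstep]
  rw [← Finset.sum_range fun m => A m - A (m + 1), Finset.sum_range_sub']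
  simp [hA, coverage, vacancy, uncovered]

theorem integral_coverage_sub_mul_comp (h : CoverageKernel P k p) {f : ℝ → ℝ} (hf : Measurable f)
    {K : ℝ} (hK : ∀ x ∈ Icc 0 1, |f x| ≤ K) :
    ∫ ω, (coverage P k ω - (1 - (1 - p) ^ n)) * f (coverage P k ω)
        ∂(Measure.pi fun _ : Fin n => P) =
      ∫ ω, ∑ j, coverIncrement P k p {i | i < j} j ω *
        (f (coverage P k ω) - f (coverage P k ω - newCover P k (Finset.univ.erase j) j ω))
        ∂(Measure.pi fun _ : Fin n => P) := by
  have hfK (J : Finset (Fin n)) (ω : Fin n → X) : |f (1 - vacancy P k J ω)| ≤ K :=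
    hK _ ⟨sub_nonneg.2 (h.vacancy_le_one J ω), sub_le_self _ (h.vacancy_nonneg J ω)⟩
  have hfm (J : Finset (Fin n)) : Measurable fun ω => f (1 - vacancy P k J ω) :=
    hf.comp ((h.measurable_vacancy J).const_sub 1)
  have hinteg (j : Fin n) (J : Finset (Fin n)) :
      Integrable (fun ω => coverIncrement P k p {i | i < j} j ω * f (1 - vacancy P k J ω))
        (Measure.pi fun _ : Fin n => P) :=
    integrable_of_measurable_of_abs_le ((h.measurable_coverIncrement _ j).mul (hfm J))
      fun ω => h.abs_coverIncrement_mul_le _ j ω (hfK J ω)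
  have hcenter (j : Fin n) : ∫ ω, coverIncrement P k p {i | i < j} j ω *
      f (1 - vacancy P k (Finset.univ.erase j) ω) ∂(Measure.pi fun _ : Fin n => P) = 0 :=
    h.integral_coverIncrement_mul_eq_zero (by simp) (hfm _) (hfK _) fun ω x => by
      rw [vacancy_update (Finset.notMem_erase j _)]
  simp_rw [h.coverage_sub_newCover, ← h.sum_coverIncrement, mul_sub, Finset.sum_sub_distrib,
    Finset.sum_mul, coverage]
  rw [integral_sub (integrable_finsetSum _ fun j _ => hinteg j _)
    (integrable_finsetSum _ fun j _ => hinteg j _),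
    integral_finsetSum (f := fun j ω => coverIncrement P k p {i | i < j} j ω *
      f (1 - vacancy P k (Finset.univ.erase j) ω)) _ fun j _ => hinteg j _,
    Finset.sum_eq_zero fun j _ => hcenter j, sub_zero]

lemma memLp_coverage (h : CoverageKernel P k p) :
    MemLp (coverage P k) 2 (Measure.pi fun _ : Fin n => P) := by
  refine memLp_of_measurable_of_abs_le h.measurable_coverage (K := 1) fun ω => ?_
  rw [coverage, abs_of_nonneg (sub_nonneg.2 (h.vacancy_le_one _ ω))]
  exact sub_le_self _ (h.vacancy_nonneg _ ω)

lemma integral_coverage (h : CoverageKernel P k p) :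
    ∫ ω, coverage P k ω ∂(Measure.pi fun _ : Fin n => P) = 1 - (1 - p) ^ n := by
  have hstein := h.integral_coverage_sub_mul_comp (n := n) (f := fun _ => 1) measurable_const
    (K := 1) (by simp)
  simp only [mul_one, sub_self, mul_zero, Finset.sum_const_zero, integral_zero] at hstein
  rw [integral_sub (h.memLp_coverage.integrable (by norm_num)) (integrable_const _),
    integral_const, probReal_univ, one_smul] at hstein
  linarith

lemma integral_steinSum (h : CoverageKernel P k p) :
    ∫ ω, steinSum P k p Finset.univ ω ∂(Measure.pi fun _ : Fin n => P) =
      Var[coverage P k; Measure.pi fun _ : Fin n => P] := by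
  have hbound (x : ℝ) (hx : x ∈ Icc (0 : ℝ) 1) : |x - (1 - (1 - p) ^ n)| ≤ 1 :=
    abs_sub_le_of_nonneg_of_le hx.1 hx.2 (sub_nonneg.2 (h.one_sub_pow_le_one n))
      (sub_le_self _ (h.one_sub_pow_nonneg n))
  have hstein := h.integral_coverage_sub_mul_comp (n := n) (measurable_id.sub_const _) hbound
  simp only [id, sub_sub_sub_cancel_right, sub_sub_cancel] at hstein
  rw [variance_eq_integral h.measurable_coverage.aemeasurable, h.integral_coverage]
  simp only [sq, steinSum, hstein]

lemma integral_steinSum_sub_erase_sq_le (h : CoverageKernel P k p) (l : Fin n) :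
    ∫ ω, (steinSum P k p Finset.univ ω - steinSum P k p (Finset.univ.erase l) ω) ^ 2
      ∂(Measure.pi fun _ : Fin n => P) ≤
      2 * (p ^ 2 + n * p ^ 3) ^ 2 + 8 * p ^ 2 * (n ^ 2 * p ^ 4 + n * p ^ 3) := by
  set R := overlapSum P k (Finset.univ.erase l) l
  have hR : Integrable (fun ω => 8 * p ^ 2 * R ω ^ 2) (Measure.pi fun _ : Fin n => P) :=
    (h.memLp_overlapSum (Finset.univ.erase l) l).integrable_sq.const_mul _
  have hpoint (ω : Fin n → X) :
      (steinSum P k p Finset.univ ω - steinSum P k p (Finset.univ.erase l) ω) ^ 2 ≤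
        2 * (p ^ 2 + n * p ^ 3) ^ 2 + 8 * p ^ 2 * R ω ^ 2 :=
    calc _ ≤ (p ^ 2 + n * p ^ 3 + 2 * p * R ω) ^ 2 :=
          sq_le_sq' (neg_le_of_abs_le (h.abs_steinSum_sub_erase_le (Finset.mem_univ l) ω))
            (le_of_abs_le (h.abs_steinSum_sub_erase_le (Finset.mem_univ l) ω))
      _ ≤ 2 * ((p ^ 2 + n * p ^ 3) ^ 2 + (2 * p * R ω) ^ 2) := add_sq_le
      _ = _ := by ring
  refine (integral_mono_of_nonneg (ae_of_all _ fun _ => sq_nonneg _)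
    ((integrable_const _).fun_add hR) (ae_of_all _ hpoint)).trans ?_
  rw [integral_add (integrable_const _) hR, integral_const, probReal_univ, one_smul,
    integral_const_mul]
  gcongr
  exact h.integral_overlapSum_sq_le (Finset.notMem_erase l _)

theorem variance_steinSum_le (h : CoverageKernel P k p) :
    Var[steinSum P k p Finset.univ; Measure.pi fun _ : Fin n => P] ≤
      n * (2 * (p ^ 2 + n * p ^ 3) ^ 2 + 8 * p ^ 2 * (n ^ 2 * p ^ 4 + n * p ^ 3)) := by
  refine (variance_pi_le_sum_integral_sub_sq P (n * p ^ 2) n (h.measurable_steinSum _)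
    (h.abs_steinSum_le _) (fun l => h.measurable_steinSum (Finset.univ.erase l))
    (fun _ => h.abs_steinSum_le _) fun l => steinSum_update (Finset.notMem_erase l _)).trans ?_
  exact (Finset.sum_le_sum fun l _ => h.integral_steinSum_sub_erase_sq_le l).trans_eq <| by
    rw [Finset.sum_const, Finset.card_univ, Fintype.card_fin, nsmul_eq_mul]

end CoverageKernel

namespace CoverageKernel

variable {X : Type*} [MeasurableSpace X] {n : ℕ} {P : Measure X} [IsProbabilityMeasure P]
  {k : X → X → ℝ} {p : ℝ}

section NormalApproximation

theorem steinCoupling (h : CoverageKernel P k p) {σ : ℝ} (hσ : 0 < σ) :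
    SteinCoupling (Measure.pi fun _ : Fin n => P)
      (fun ω => (coverage P k ω - (1 - (1 - p) ^ n)) / σ)
      (fun j ω => coverIncrement P k p {i | i < j} j ω / σ)
      (fun j ω => newCover P k (Finset.univ.erase j) j ω / σ) ((1 - (1 - p) ^ n) / σ) (p / σ) where
  measurable := (h.measurable_coverage.sub_const _).div_const σ
  integrable :=
    ((h.memLp_coverage.integrable (by norm_num)).sub (integrable_const _)).div_const σ
  measurable_weight j := (h.measurable_coverIncrement _ j).div_const σ
  measurable_shift j := (h.measurable_newCover _ j).div_const σ
  sum_abs_weight_le ω := by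
    simp_rw [abs_div, abs_of_pos hσ, ← Finset.sum_div]
    exact div_le_div_of_nonneg_right (h.sum_abs_coverIncrement_le ω) hσ.le
  shift_mem_Icc j ω := ⟨div_nonneg (h.newCover_nonneg _ j ω) hσ.le,
    div_le_div_of_nonneg_right (h.newCover_le _ j ω) hσ.le⟩
  integral_mul_eq f hf hfb := by
    obtain ⟨C, hC⟩ := hfb
    have hstein := h.integral_coverage_sub_mul_comp (n := n)
      (f := fun x => f ((x - (1 - (1 - p) ^ n)) / σ) / σ)
      ((hf.measurable.comp ((measurable_id.sub_const _).div_const σ)).div_const σ) (K := C / σ)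
      fun x _ => by
        rw [abs_div, abs_of_pos hσ]
        exact div_le_div_of_nonneg_right (hC _) hσ.le
    convert hstein using 3 with ω
    · ring
    · refine Finset.sum_congr rfl fun j _ => ?_
      rw [← sub_div, sub_right_comm]
      ring

lemma integral_abs_coverage_sub_div_le_one (h : CoverageKernel P k p)
    (hv : 0 < Var[coverage P k; Measure.pi fun _ : Fin n => P]) :
    ∫ ω, |(coverage P k ω - (1 - (1 - p) ^ n)) /
      √Var[coverage P k; Measure.pi fun _ : Fin n => P]| ∂(Measure.pi fun _ : Fin n => P) ≤ 1 := by
  have hσ := Real.sqrt_pos.2 hv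
  simp_rw [abs_div, abs_of_pos hσ]
  rw [integral_div, div_le_one hσ, ← h.integral_coverage]
  exact integral_abs_sub_integral_le_sqrt_variance h.memLp_coverage

lemma integral_abs_one_sub_sum_le (h : CoverageKernel P k p) {v : ℝ}
    (hv : v = Var[coverage P k; Measure.pi fun _ : Fin n => P]) (hv0 : 0 < v) :
    ∫ ω, |1 - ∑ j, coverIncrement P k p {i | i < j} j ω / √v *
      (newCover P k (Finset.univ.erase j) j ω / √v)| ∂(Measure.pi fun _ : Fin n => P) ≤
      √(n * (2 * (p ^ 2 + n * p ^ 3) ^ 2 + 8 * p ^ 2 * (n ^ 2 * p ^ 4 + n * p ^ 3))) / v := by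
  have hsum (ω : Fin n → X) : |1 - ∑ j, coverIncrement P k p {i | i < j} j ω / √v *
      (newCover P k (Finset.univ.erase j) j ω / √v)| = |steinSum P k p Finset.univ ω - v| / v := by
    simp_rw [div_mul_div_comm, Real.mul_self_sqrt hv0.le, ← Finset.sum_div]
    rw [abs_sub_comm, ← abs_of_pos hv0, ← abs_div, abs_of_pos hv0, sub_div, div_self hv0.ne']
    rfl
  simp_rw [hsum]
  rw [integral_div]
  refine div_le_div_of_nonneg_right ?_ hv0.le
  rw [hv, ← h.integral_steinSum]
  exact (integral_abs_sub_integral_le_sqrt_variance (memLp_of_measurable_of_abs_le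
    (h.measurable_steinSum _) (h.abs_steinSum_le _))).trans (Real.sqrt_le_sqrt
      h.variance_steinSum_le)

theorem kolmogorovDist_le (h : CoverageKernel P k p) (hp : 0 < p) (hn : n ≠ 0) {v : ℝ}
    (hv : v = Var[coverage P k; Measure.pi fun _ : Fin n => P]) (hv0 : 0 < v) :
    kolmogorovDist ((Measure.pi fun _ : Fin n => P).map
        fun ω => (coverage P k ω - (1 - (1 - p) ^ n)) / √v) stdGauss ≤
      (√(2 / 5 * ((1 - (1 - p) ^ n) / √v * (p / √v) ^ 2)) +
        √(2 * ((1 - (1 - p) ^ n) / √v * (p / √v) ^ 2) +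
          √(n * (2 * (p ^ 2 + n * p ^ 3) ^ 2 + 8 * p ^ 2 * (n ^ 2 * p ^ 4 + n * p ^ 3))) / v))
        ^ 2 := by
  have hσ : 0 < √v := Real.sqrt_pos.2 hv0
  have hmean : 0 < 1 - (1 - p) ^ n :=
    sub_pos.2 (pow_lt_one₀ (sub_nonneg.2 h.param_le_one) (sub_lt_self 1 hp) hn)
  refine (h.steinCoupling hσ).kolmogorovDist_le (div_pos hmean hσ) (div_pos hp hσ) ?_
    (h.integral_abs_one_sub_sum_le hv hv0)
  subst hv
  exact h.integral_abs_coverage_sub_div_le_one hv0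

end NormalApproximation

section Variance

lemma integral_one_sub_mul_one_sub (h : CoverageKernel P k p) (hsymm : ∀ x y, k x y = k y x)
    (y z : X) : ∫ x, (1 - k x y) * (1 - k x z) ∂P = 1 - 2 * p + overlap P k y z := by
  have hexpand (x : X) :
      (1 - k x y) * (1 - k x z) = (1 - k x y - k x z) + k y x * k z x := by
    rw [hsymm y x, hsymm z x]
    ring
  have hone_sub : Integrable (fun x => 1 - k x y) P :=
    (integrable_const _).sub (h.integrable_left y)
  have hone_sub_sub : Integrable (fun x => 1 - k x y - k x z) P :=
    hone_sub.sub (h.integrable_left z)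
  simp_rw [hexpand]
  rw [integral_add hone_sub_sub (h.integrable_mul y z), integral_sub hone_sub
    (h.integrable_left z), integral_sub (integrable_const _) (h.integrable_left y),
    h.integral_left, h.integral_left, integral_const, probReal_univ, one_smul, overlap]
  ring

lemma integral_uncovered_mul_uncovered (h : CoverageKernel P k p)
    (hsymm : ∀ x y, k x y = k y x) (y z : X) :
    ∫ ω, uncovered k Finset.univ ω y * uncovered k Finset.univ ω z
        ∂(Measure.pi fun _ : Fin n => P) = (1 - 2 * p + overlap P k y z) ^ n := by
  simp only [uncovered, ← Finset.prod_mul_distrib]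
  rw [integral_fintype_prod_eq_pow (fun x => (1 - k x y) * (1 - k x z)), Fintype.card_fin,
    h.integral_one_sub_mul_one_sub hsymm]

lemma integral_vacancy_sq (h : CoverageKernel P k p) (hsymm : ∀ x y, k x y = k y x) :
    ∫ ω, vacancy P k Finset.univ ω ^ 2 ∂(Measure.pi fun _ : Fin n => P) =
      ∫ y, ∫ z, (1 - 2 * p + overlap P k y z) ^ n ∂P ∂P := by
  have hinteg : Integrable (fun w : (Fin n → X) × (X × X) =>
      uncovered k Finset.univ w.1 w.2.1 * uncovered k Finset.univ w.1 w.2.2)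
      ((Measure.pi fun _ => P).prod (P.prod P)) :=
    integrable_of_measurable_of_abs_le h.measurable_uncovered_mul_uncovered
      fun w => h.abs_uncovered_mul_uncovered_le_one w.1 w.2.1 w.2.2
  have hinteg' : Integrable (fun z : X × X => (1 - 2 * p + overlap P k z.1 z.2) ^ n)
      (P.prod P) := by
    simpa only [h.integral_uncovered_mul_uncovered hsymm] using hinteg.integral_prod_right
  calc ∫ ω, vacancy P k Finset.univ ω ^ 2 ∂(Measure.pi fun _ : Fin n => P)
      = ∫ ω, ∫ z : X × X, uncovered k Finset.univ ω z.1 * uncovered k Finset.univ ω z.2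
          ∂(P.prod P) ∂(Measure.pi fun _ : Fin n => P) := by
        congr 1 with ω
        rw [integral_prod_mul (uncovered k Finset.univ ω) (uncovered k Finset.univ ω), sq, vacancy]
    _ = ∫ z : X × X, (1 - 2 * p + overlap P k z.1 z.2) ^ n ∂(P.prod P) := by
        rw [integral_integral_swap hinteg]
        simp only [h.integral_uncovered_mul_uncovered hsymm]
    _ = _ := integral_prod _ hinteg'

theorem variance_coverage (h : CoverageKernel P k p) (hsymm : ∀ x y, k x y = k y x) :
    Var[coverage P k; Measure.pi fun _ : Fin n => P] =
      ∫ y, ∫ z, (1 - 2 * p + overlap P k y z) ^ n ∂P ∂P - (1 - p) ^ (2 * n) := by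
  have hvacancy : MemLp (vacancy P k (Finset.univ : Finset (Fin n))) 2
      (Measure.pi fun _ : Fin n => P) :=
    memLp_of_measurable_of_abs_le (h.measurable_vacancy _) fun ω =>
      (abs_of_nonneg (h.vacancy_nonneg _ ω)).trans_le (h.vacancy_le_one _ ω)
  have hmean : ∫ ω, vacancy P k (Finset.univ : Finset (Fin n)) ω
      ∂(Measure.pi fun _ : Fin n => P) = (1 - p) ^ n := by
    have hcoverage := h.integral_coverage (n := n)
    simp only [coverage] at hcoverage
    rw [integral_sub (integrable_const _) (hvacancy.integrable (by norm_num)), integral_const,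
      probReal_univ, one_smul] at hcoverage
    linarith
  calc Var[coverage P k; Measure.pi fun _ : Fin n => P]
      = Var[vacancy P k (Finset.univ : Finset (Fin n)); Measure.pi fun _ : Fin n => P] :=
        variance_const_sub hvacancy.aestronglyMeasurable 1
    _ = _ := by
        rw [variance_eq_sub hvacancy, hmean, ← h.integral_vacancy_sq hsymm, ← pow_mul, mul_comm n]
        rfl

end Variance

end CoverageKernel

/-! ### The flat torus -/

section Wrap

/-- The representative of `t` modulo `L` in `[-L/2, L/2)`. -/
def wrap (L t : ℝ) : ℝ := t - round (L⁻¹ * t) * L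

lemma wrap_eq_toIcoMod {L : ℝ} (hL : 0 < L) (t : ℝ) : wrap L t = toIcoMod hL (-(L / 2)) t := by
  have hdiv : (t - -(L / 2)) / L = L⁻¹ * t + 1 / 2 := by
    field_simp
    ring
  rw [wrap, toIcoMod, toIcoDiv_eq_floor, hdiv, ← round_eq, zsmul_eq_mul]

lemma wrap_mem_Ico {L : ℝ} (hL : 0 < L) (t : ℝ) : wrap L t ∈ Ico (-(L / 2)) (L / 2) := by
  have h := toIcoMod_mem_Ico hL (-(L / 2)) t
  rwa [← wrap_eq_toIcoMod, neg_add_eq_sub, sub_half] at h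

lemma wrap_eq_self {L : ℝ} (hL : 0 < L) {t : ℝ} (ht : t ∈ Ico (-(L / 2)) (L / 2)) :
    wrap L t = t := by
  rw [wrap_eq_toIcoMod hL, toIcoMod_eq_self, neg_add_eq_sub, sub_half]
  exact ht

lemma periodic_wrap {L : ℝ} (hL : 0 < L) : Function.Periodic (wrap L) L := fun t => by
  rw [wrap_eq_toIcoMod hL, wrap_eq_toIcoMod hL, toIcoMod_add_right]

lemma measurable_wrap (L : ℝ) : Measurable (wrap L) := by
  have hround : Measurable fun t : ℝ => (round (L⁻¹ * t) : ℝ) := by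
    simp_rw [round_eq]
    exact measurable_from_top.comp
      (Int.measurable_floor.comp ((measurable_id.const_mul L⁻¹).add_const _))
  exact measurable_id.sub (hround.mul_const L)

lemma iInf_abs_sub_int_mul {L : ℝ} (hL : 0 < L) (t : ℝ) :
    ⨅ k : ℤ, |t - k * L| = |wrap L t| := by
  refine le_antisymm (ciInf_le ⟨0, forall_mem_range.2 fun _ => abs_nonneg _⟩ (round (L⁻¹ * t)))
    (le_ciInf fun k => ?_)
  have hscale (m : ℤ) : |t - m * L| = |L⁻¹ * t - m| * L := by
    rw [← abs_of_pos hL, ← abs_mul, abs_of_pos hL, sub_mul, mul_right_comm,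
      inv_mul_cancel₀ hL.ne', one_mul]
  rw [wrap, hscale, hscale]
  exact mul_le_mul_of_nonneg_right (round_le _ k) hL.le

lemma iInf_abs_neg_sub_int_mul (L t : ℝ) : ⨅ k : ℤ, |-t - k * L| = ⨅ k : ℤ, |t - k * L| := by
  rw [← (Equiv.neg ℤ).iInf_comp]
  refine iInf_congr fun k => ?_
  rw [← abs_neg, Equiv.neg_apply, Int.cast_neg]
  ring_nf

lemma volume_inter_Ico_eq_of_periodic {L : ℝ} (hL : 0 < L) {s : Set ℝ} (hs : MeasurableSet s)
    (hper : Function.Periodic (· ∈ s) L) (a b : ℝ) :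
    volume (s ∩ Ico a (a + L)) = volume (s ∩ Ico b (b + L)) := by
  have hIoc (c : ℝ) : volume (s ∩ Ico c (c + L)) = volume (s ∩ Ioc c (c + L)) :=
    measure_congr ((ae_eq_refl _).inter Ico_ae_eq_Ioc)
  rw [hIoc, hIoc]
  refine (isAddFundamentalDomain_Ioc hL a).measure_set_eq (isAddFundamentalDomain_Ioc hL b) hs ?_
  rintro ⟨_, m, rfl⟩
  ext t
  change m • L + t ∈ s ↔ t ∈ s
  rw [add_comm]
  exact (hper.zsmul m t).to_iff

lemma measurePreserving_wrap_sub {L : ℝ} (hL : 0 < L) (x : ℝ) :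
    MeasurePreserving (fun y => wrap L (y - x)) (volume.restrict (Ico 0 L))
      (volume.restrict (Ico (-(L / 2)) (L / 2))) := by
  have hmeas : Measurable fun y => wrap L (y - x) :=
    (measurable_wrap L).comp (measurable_id.sub_const x)
  refine ⟨hmeas, Measure.ext fun s hs => ?_⟩
  have hper : Function.Periodic (· ∈ (fun y => wrap L (y - x)) ⁻¹' s) L := fun y => by
    simp only [mem_preimage, add_sub_right_comm, periodic_wrap hL (y - x)]
  have hwindow : (fun y => wrap L (y - x)) ⁻¹' s ∩ Ico (x - L / 2) (x - L / 2 + L) =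
      (fun y => y - x) ⁻¹' (s ∩ Ico (-(L / 2)) (L / 2)) := by
    ext y
    have hy : y ∈ Ico (x - L / 2) (x - L / 2 + L) ↔ y - x ∈ Ico (-(L / 2)) (L / 2) := by
      simp only [mem_Ico]
      constructor <;> rintro ⟨_, _⟩ <;> constructor <;> linarith
    simp only [mem_inter_iff, mem_preimage, hy]
    exact and_congr_left fun h => by rw [wrap_eq_self hL h]
  have hshift := volume_inter_Ico_eq_of_periodic hL (hmeas hs) hper 0 (x - L / 2)
  rw [zero_add] at hshift
  rw [Measure.map_apply hmeas hs, Measure.restrict_apply (hmeas hs), Measure.restrict_apply hs,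
    hshift, hwindow]
  exact (measurePreserving_sub_right volume x).measure_preimage
    (hs.inter measurableSet_Ico).nullMeasurableSet

end Wrap

section Torus

variable {d : ℕ} {L : ℝ}

/-- The displacement from `x` to `y` on the torus, as a vector of the centered box. -/
def wrapDiff (L : ℝ) (x y : Fin d → ℝ) : EuclideanSpace ℝ (Fin d) :=
  WithLp.toLp 2 fun i => wrap L (y i - x i)

/-- The cube `[-L/2, L/2)^d`. -/
def centeredBox (d : ℕ) (L : ℝ) : Set (EuclideanSpace ℝ (Fin d)) :=
  WithLp.ofLp ⁻¹' Set.univ.pi fun _ => Ico (-(L / 2)) (L / 2)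

lemma measurable_wrapDiff (L : ℝ) :
    Measurable fun z : (Fin d → ℝ) × (Fin d → ℝ) => wrapDiff L z.1 z.2 :=
  (PiLp.volume_preserving_toLp (Fin d)).measurable.comp
    (measurable_pi_iff.2 fun _ => (measurable_wrap L).comp (by fun_prop))

lemma measurePreserving_wrapDiff (hL : 0 < L) (x : Fin d → ℝ) :
    MeasurePreserving (wrapDiff L x) (volume.restrict (box d L))
      (volume.restrict (centeredBox d L)) := by
  have hpi : MeasurePreserving (fun (y : Fin d → ℝ) i => wrap L (y i - x i))
      (volume.restrict (box d L))
      (volume.restrict (Set.univ.pi fun _ => Ico (-(L / 2)) (L / 2))) := by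
    rw [box, volume_pi, Measure.restrict_pi_pi, Measure.restrict_pi_pi]
    exact measurePreserving_pi _ _ fun i => measurePreserving_wrap_sub hL (x i)
  have hmeas : MeasurableSet (centeredBox d L) :=
    (PiLp.volume_preserving_ofLp (Fin d)).measurable
      (MeasurableSet.univ_pi fun _ => measurableSet_Ico)
  exact ((PiLp.volume_preserving_toLp (Fin d)).restrict_preimage hmeas).comp hpi

lemma setIntegral_box_comp_wrapDiff (hL : 0 < L) (x : Fin d → ℝ)
    {F : EuclideanSpace ℝ (Fin d) → ℝ} (hF : Measurable F) :
    ∫ y in box d L, F (wrapDiff L x y) = ∫ w in centeredBox d L, F w := by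
  have hpres := measurePreserving_wrapDiff hL x
  rw [← hpres.map_eq, integral_map hpres.measurable.aemeasurable hF.aestronglyMeasurable]

lemma torDist_eq_norm_wrapDiff (hL : 0 < L) (x y : Fin d → ℝ) :
    torDist L x y = ‖wrapDiff L x y‖ := by
  rw [torDist, EuclideanSpace.norm_eq]
  congr! 3 with i
  rw [← neg_sub (y i) (x i), iInf_abs_neg_sub_int_mul, iInf_abs_sub_int_mul hL, Real.norm_eq_abs,
    wrapDiff]

lemma torDist_comm (L : ℝ) (x y : Fin d → ℝ) : torDist L x y = torDist L y x := by
  simp only [torDist, ← neg_sub (y _) (x _), iInf_abs_neg_sub_int_mul]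

lemma measurable_torDist (hL : 0 < L) :
    Measurable fun z : (Fin d → ℝ) × (Fin d → ℝ) => torDist L z.1 z.2 := by
  simp_rw [torDist_eq_norm_wrapDiff hL]
  exact (measurable_wrapDiff L).norm

lemma closedBall_subset_centeredBox {r : ℝ} (hr : 2 * r < L) :
    closedBall (0 : EuclideanSpace ℝ (Fin d)) r ⊆ centeredBox d L := fun w hw i _ => by
  have hi := (PiLp.norm_apply_le w i).trans (mem_closedBall_zero_iff.1 hw)
  rw [Real.norm_eq_abs, abs_le] at hi
  constructor <;> linarith

lemma measureReal_box (hL : 0 ≤ L) : volume.real (box d L) = L ^ d := by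
  simp [box, Measure.real, Real.volume_pi_Ico, ENNReal.toReal_ofReal hL]

lemma measureReal_centeredBox (hL : 0 < L) : volume.real (centeredBox d L) = L ^ d := by
  have h := setIntegral_box_comp_wrapDiff (d := d) hL 0 (F := fun _ => 1) measurable_const
  rwa [setIntegral_const, setIntegral_const, smul_eq_mul, smul_eq_mul, mul_one, mul_one,
    measureReal_box hL.le, eq_comm] at h

lemma isProbabilityMeasure_uniformBox (d : ℕ) (hL : 0 < L) :
    IsProbabilityMeasure (uniformBox d L) := ⟨by
  have hL' : L.toNNReal ^ d ≠ 0 := pow_ne_zero _ (Real.toNNReal_pos.2 hL).ne'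
  rw [uniformBox, Measure.smul_apply, Measure.restrict_apply_univ, box, Real.volume_pi_Ico]
  simp only [sub_zero, Finset.prod_const, Finset.card_univ, Fintype.card_fin]
  rw [ENNReal.smul_def, smul_eq_mul, ENNReal.coe_inv hL', ENNReal.coe_pow, ENNReal.ofReal]
  exact ENNReal.inv_mul_cancel (by exact_mod_cast hL') (by finiteness)⟩

lemma integral_uniformBox (hL : 0 ≤ L) (f : (Fin d → ℝ) → ℝ) :
    ∫ y, f y ∂uniformBox d L = (∫ y in box d L, f y) / L ^ d := by
  rw [uniformBox, integral_smul_nnreal_measure, NNReal.smul_def, NNReal.coe_inv, NNReal.coe_pow,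
    Real.coe_toNNReal L hL, smul_eq_mul, inv_mul_eq_div]

end Torus

/-! ### Lens volumes -/

section Lens

variable {E : Type*} [NormedAddCommGroup E] [MeasurableSpace E]

/-- The volume of the intersection of the balls of radius `ρ` centred at `0` and at `w`. -/
def lensVolume (μ : Measure E) (ρ : ℝ) (w : E) : ℝ :=
  μ.real (closedBall 0 ρ ∩ closedBall w ρ)

lemma lensVolume_nonneg (μ : Measure E) (ρ : ℝ) (w : E) : 0 ≤ lensVolume μ ρ w :=
  measureReal_nonneg

lemma lensVolume_le [ProperSpace E] (μ : Measure E) [IsFiniteMeasureOnCompacts μ] (ρ : ℝ) (w : E) :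
    lensVolume μ ρ w ≤ μ.real (closedBall 0 ρ) :=
  measureReal_mono inter_subset_left measure_closedBall_lt_top.ne

lemma lensVolume_eq_zero (μ : Measure E) {ρ : ℝ} {w : E} (hw : 2 * ρ < ‖w‖) :
    lensVolume μ ρ w = 0 := by
  rw [lensVolume, (closedBall_disjoint_closedBall (by
    rw [dist_zero_left]
    linarith)).inter_eq, measureReal_empty]

lemma setIntegral_comp_lensVolume (μ : Measure E) {ρ : ℝ} {s : Set E}
    (hs : closedBall 0 (2 * ρ) ⊆ s) {F : ℝ → ℝ} (hF0 : F 0 = 0) :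
    ∫ w in s, F (lensVolume μ ρ w) ∂μ = ∫ w, F (lensVolume μ ρ w) ∂μ :=
  setIntegral_eq_integral_of_forall_compl_eq_zero fun w hw => by
    rw [lensVolume_eq_zero μ (not_le.1 (mt mem_closedBall_zero_iff.2 (notMem_subset hs hw))), hF0]

variable [BorelSpace E]

lemma integrable_indicator_closedBall [ProperSpace E] (μ : Measure E)
    [IsFiniteMeasureOnCompacts μ] (ρ : ℝ) :
    Integrable ((closedBall (0 : E) ρ).indicator (1 : E → ℝ)) μ :=
  (integrable_indicator_iff measurableSet_closedBall).2
    (integrableOn_const measure_closedBall_lt_top.ne)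

open scoped Convolution in
lemma lensVolume_eq_convolution (μ : Measure E) (ρ : ℝ) :
    lensVolume μ ρ = (closedBall 0 ρ).indicator 1 ⋆[ContinuousLinearMap.mul ℝ ℝ, μ]
      (closedBall 0 ρ).indicator 1 := by
  ext w
  rw [convolution_mul, lensVolume,
    ← integral_indicator_one (measurableSet_closedBall.inter measurableSet_closedBall)]
  congr 1 with u
  rw [inter_indicator_one, Pi.mul_apply]
  congr 1
  simp only [indicator, mem_closedBall, dist_zero_right, dist_comm u w, dist_eq_norm w u,
    Pi.one_apply]

variable [SecondCountableTopology E]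

lemma measurable_lensVolume (μ : Measure E) [SFinite μ] (ρ : ℝ) :
    Measurable (lensVolume μ ρ) := by
  have hlens : MeasurableSet {z : E × E | ‖z.2‖ ≤ ρ ∧ dist z.2 z.1 ≤ ρ} :=
    (measurableSet_le measurable_snd.norm measurable_const).inter
      (measurableSet_le (measurable_snd.dist measurable_fst) measurable_const)
  have h := (measurable_measure_prodMk_left (ν := μ) hlens).ennreal_toReal
  convert h using 2 with w
  rw [lensVolume, Measure.real]
  congr 2
  ext u
  simp

variable [ProperSpace E] (μ : Measure E) [IsFiniteMeasureOnCompacts μ] [SFinite μ]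
  [μ.IsAddLeftInvariant] (ρ : ℝ)

lemma integrable_lensVolume : Integrable (lensVolume μ ρ) μ := by
  have h := integrable_indicator_closedBall μ ρ
  exact lensVolume_eq_convolution μ ρ ▸ h.integrable_convolution _ h

lemma integral_lensVolume : ∫ w, lensVolume μ ρ w ∂μ = μ.real (closedBall 0 ρ) ^ 2 := by
  have h := integrable_indicator_closedBall μ ρ
  rw [lensVolume_eq_convolution, integral_convolution _ h h, ContinuousLinearMap.mul_apply',
    integral_indicator_one measurableSet_closedBall, sq]

end Lens

section TorusKernel

variable {d : ℕ} {L ρ : ℝ}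

lemma phi_eq_measureReal_closedBall (d : ℕ) (hρ : 0 ≤ ρ) :
    phi d ρ = volume.real (closedBall (0 : EuclideanSpace ℝ (Fin d)) ρ) := by
  rw [Measure.real, Measure.addHaar_closedBall' _ _ hρ, ENNReal.toReal_mul,
    ENNReal.toReal_ofReal (by positivity), finrank_euclideanSpace_fin, mul_comm, phi, unitBallVol]

lemma phi_pos (d : ℕ) (hρ : 0 < ρ) : 0 < phi d ρ :=
  phi_eq_measureReal_closedBall d hρ.le ▸
    ENNReal.toReal_pos (measure_closedBall_pos _ _ hρ).ne' measure_closedBall_lt_top.ne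

/-- The indicator of the event that `y` lies in the toroidal ball of radius `ρ` around `x`. -/
def torKernel (L ρ : ℝ) (x y : Fin d → ℝ) : ℝ := if torDist L x y ≤ ρ then 1 else 0

lemma torKernel_comm (L ρ : ℝ) (x y : Fin d → ℝ) : torKernel L ρ x y = torKernel L ρ y x := by
  rw [torKernel, torDist_comm, torKernel]

lemma torKernel_eq_indicator (hL : 0 < L) (ρ : ℝ) (x y : Fin d → ℝ) :
    torKernel L ρ x y = (closedBall 0 ρ).indicator 1 (wrapDiff L x y) := by
  simp only [torKernel, torDist_eq_norm_wrapDiff hL, indicator, mem_closedBall_zero_iff,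
    Pi.one_apply]

lemma integral_torKernel (hρ : 0 ≤ ρ) (hL : 2 * ρ < L) (x : Fin d → ℝ) :
    ∫ y, torKernel L ρ x y ∂uniformBox d L = phi d ρ / L ^ d := by
  have hL0 : 0 < L := by linarith
  simp_rw [integral_uniformBox hL0.le, torKernel_eq_indicator hL0]
  rw [setIntegral_box_comp_wrapDiff hL0 x (measurable_one.indicator measurableSet_closedBall),
    integral_indicator_one measurableSet_closedBall, measureReal_restrict_apply
      measurableSet_closedBall, inter_eq_left.2 (closedBall_subset_centeredBox hL),
    phi_eq_measureReal_closedBall d hρ]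

lemma coverageKernel_torKernel (hρ : 0 ≤ ρ) (hL : 2 * ρ < L) :
    CoverageKernel (uniformBox d L) (torKernel L ρ) (phi d ρ / L ^ d) where
  measurable := Measurable.ite
    (measurableSet_le (measurable_torDist (by linarith)) measurable_const) measurable_const
    measurable_const
  nonneg x y := by unfold torKernel; split_ifs <;> norm_num
  le_one x y := by unfold torKernel; split_ifs <;> norm_num
  integral_right := integral_torKernel hρ hL
  integral_left y := by simp_rw [torKernel_comm L ρ _ y, integral_torKernel hρ hL]

lemma exists_wrap_sub_eq (L s t : ℝ) : ∃ m : ℤ, wrap L (s - t) = wrap L s - wrap L t + m * L :=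
  ⟨round (L⁻¹ * s) - round (L⁻¹ * t) - round (L⁻¹ * (s - t)), by
    simp only [wrap, Int.cast_sub]
    ring⟩

lemma wrap_sub_eq (hL : 0 < L) {s t : ℝ} (hs : |wrap L s| < L / 4)
    (h : |wrap L (s - t)| < L / 4 ∨ |wrap L s - wrap L t| < L / 2) :
    wrap L (s - t) = wrap L s - wrap L t := by
  obtain ⟨m, hm⟩ := exists_wrap_sub_eq L s t
  obtain ⟨hl, hr⟩ := wrap_mem_Ico hL (s - t)
  obtain ⟨hl', hr'⟩ := wrap_mem_Ico hL t
  rw [abs_lt] at hs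
  have hmL : |(m : ℝ) * L| < L := by
    rw [abs_lt]
    rcases h with h | h <;> rw [abs_lt] at h <;> constructor <;> linarith
  have hm0 : m = 0 := by
    rw [abs_mul, abs_of_pos hL] at hmL
    exact Int.abs_lt_one_iff.1 (by exact_mod_cast (mul_lt_iff_lt_one_left hL).1 hmL)
  rw [hm, hm0, Int.cast_zero, zero_mul, add_zero]

lemma norm_wrapDiff_le_iff (hL : 4 * ρ < L) {x y u : Fin d → ℝ} (hu : ‖wrapDiff L x u‖ ≤ ρ) :
    ‖wrapDiff L y u‖ ≤ ρ ↔ ‖wrapDiff L x u - wrapDiff L x y‖ ≤ ρ := by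
  have hL0 : 0 < L := by linarith [norm_nonneg (wrapDiff L x u)]
  have hdiff (h : ‖wrapDiff L y u‖ ≤ ρ ∨ ‖wrapDiff L x u - wrapDiff L x y‖ ≤ ρ) :
      wrapDiff L y u = wrapDiff L x u - wrapDiff L x y := by
    ext i
    have hcoord {w : EuclideanSpace ℝ (Fin d)} (hw : ‖w‖ ≤ ρ) : |w i| < L / 4 :=
      (PiLp.norm_apply_le w i).trans_lt (by linarith)
    have hi := wrap_sub_eq hL0 (s := u i - x i) (t := y i - x i) (hcoord hu)
    rw [sub_sub_sub_cancel_right] at hi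
    exact hi (h.imp hcoord fun h => (hcoord h).trans (by linarith))
  exact ⟨fun h => hdiff (Or.inl h) ▸ h, fun h => (hdiff (Or.inr h)).symm ▸ h⟩

lemma overlap_torKernel (hρ : 0 ≤ ρ) (hL : 4 * ρ < L) (x y : Fin d → ℝ) :
    overlap (uniformBox d L) (torKernel L ρ) x y =
      lensVolume volume ρ (wrapDiff L x y) / L ^ d := by
  have hL0 : 0 < L := by linarith
  set lens := closedBall (0 : EuclideanSpace ℝ (Fin d)) ρ ∩ closedBall (wrapDiff L x y) ρ with hlens
  have hlens_meas : MeasurableSet lens := measurableSet_closedBall.inter measurableSet_closedBall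
  have hprod (u : Fin d → ℝ) :
      torKernel L ρ x u * torKernel L ρ y u = lens.indicator 1 (wrapDiff L x u) := by
    rw [torKernel_eq_indicator hL0, torKernel_eq_indicator hL0, hlens, inter_indicator_one,
      Pi.mul_apply]
    by_cases hu : ‖wrapDiff L x u‖ ≤ ρ
    · simp only [indicator, mem_closedBall, dist_eq_norm, sub_zero, norm_wrapDiff_le_iff hL hu,
        Pi.one_apply]
    · rw [indicator_of_notMem (mt mem_closedBall_zero_iff.1 hu), zero_mul, zero_mul]
  simp_rw [overlap, hprod, integral_uniformBox hL0.le]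
  rw [setIntegral_box_comp_wrapDiff hL0 x (measurable_one.indicator hlens_meas),
    integral_indicator_one hlens_meas, measureReal_restrict_apply hlens_meas, inter_eq_left.2
      (inter_subset_left.trans (closedBall_subset_centeredBox (by linarith))), lensVolume]

lemma coverage_torKernel (hL : 0 < L) {n : ℕ} (ω : Fin n → Fin d → ℝ) :
    coverage (uniformBox d L) (torKernel L ρ) ω =
      volume.real (⋃ i, torBall L (ω i) ρ) / L ^ d := by
  have := isProbabilityMeasure_uniformBox d hL
  set covered : Set (Fin d → ℝ) := ⋃ i, {y | torDist L (ω i) y ≤ ρ} with hcovered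
  have hdist (x : Fin d → ℝ) : Measurable (torDist L x) :=
    (measurable_torDist hL).of_uncurry_left (f := torDist L)
  have hmeas : MeasurableSet covered :=
    MeasurableSet.iUnion fun i => measurableSet_le (hdist (ω i)) measurable_const
  have huncovered : uncovered (torKernel L ρ) Finset.univ ω = coveredᶜ.indicator 1 := by
    ext y
    by_cases hy : y ∈ covered
    · obtain ⟨i, hi⟩ := mem_iUnion.1 hy
      rw [indicator_of_notMem (by simpa using hy)]
      exact Finset.prod_eq_zero (Finset.mem_univ i)
        (by rw [torKernel, if_pos (mem_ofPred.1 hi), sub_self])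
    · rw [indicator_of_mem (mem_compl hy)]
      refine Finset.prod_eq_one fun i _ => ?_
      have hi : ¬torDist L (ω i) y ≤ ρ := fun hi => hy (mem_iUnion.2 ⟨i, hi⟩)
      rw [torKernel, if_neg hi, sub_zero]
  have hballs : ⋃ i, torBall L (ω i) ρ = box d L ∩ covered := by
    simp only [hcovered, inter_iUnion, torBall, ofPred_and, ofPred_mem_eq]
  rw [coverage, vacancy, huncovered, integral_indicator_one hmeas.compl, probReal_compl_eq_one_sub
    hmeas, sub_sub_cancel, hballs, inter_comm, ← measureReal_restrict_apply hmeas,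
    ← integral_indicator_one hmeas, integral_uniformBox hL.le, integral_indicator_one hmeas]

end TorusKernel

section SideLen

variable {d n : ℕ}

lemma sideLen_pow (hd : d ≠ 0) (n : ℕ) : sideLen d n ^ d = n :=
  Real.rpow_inv_natCast_pow n.cast_nonneg hd

lemma sideLen_pos (d : ℕ) (hn : n ≠ 0) : 0 < sideLen d n :=
  Real.rpow_pos_of_pos (by positivity) _

lemma tendsto_sideLen (hd : d ≠ 0) : Tendsto (sideLen d) atTop atTop :=
  (tendsto_rpow_atTop (by positivity)).comp tendsto_natCast_atTop_atTop

lemma coveredVol_eq_mul_coverage (hd : d ≠ 0) (hn : n ≠ 0) (ρ : ℝ) (ω : Fin n → Fin d → ℝ) :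
    coveredVol d n ρ ω =
      n * coverage (uniformBox d (sideLen d n)) (torKernel (sideLen d n) ρ) ω := by
  rw [coverage_torKernel (sideLen_pos d hn), sideLen_pow hd, mul_div_cancel₀ _ (by positivity),
    coveredVol, Measure.real]

end SideLen

/-! ### The limiting variance -/

section PowerLimits

lemma nat_mul_pow_mul_sub_le_pow_sub_pow {a b : ℝ} (hb : 0 ≤ b) (hab : b ≤ a) (n : ℕ) :
    n * b ^ (n - 1) * (a - b) ≤ a ^ n - b ^ n := by
  rcases hab.eq_or_lt with rfl | hab
  · simp
  have h := (convexOn_pow n).le_slope_of_hasDerivAt hb (hb.trans hab.le) hab (hasDerivAt_pow n b)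
  rwa [slope_def_field, le_div_iff₀ (sub_pos.2 hab)] at h

lemma pow_sub_pow_le_nat_mul_pow_mul_sub {a b : ℝ} (hb : 0 ≤ b) (hab : b ≤ a) (n : ℕ) :
    a ^ n - b ^ n ≤ n * a ^ (n - 1) * (a - b) := by
  rcases hab.eq_or_lt with rfl | hab
  · simp
  have h := (convexOn_pow n).slope_le_of_hasDerivAt hb (hb.trans hab.le) hab (hasDerivAt_pow n a)
  rwa [slope_def_field, div_le_iff₀ (sub_pos.2 hab)] at h

lemma tendsto_one_add_pow_pred_exp_of_tendsto {g : ℕ → ℝ} {t : ℝ}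
    (hg : Tendsto (fun n : ℕ => n * g n) atTop (𝓝 t)) :
    Tendsto (fun n => (1 + g n) ^ (n - 1)) atTop (𝓝 (Real.exp t)) := by
  have hg0 : Tendsto g atTop (𝓝 0) := by
    have h := (tendsto_inv_atTop_nhds_zero_nat (𝕜 := ℝ)).mul hg
    rw [zero_mul] at h
    refine h.congr' ?_
    filter_upwards [eventually_ne_atTop 0] with n hn
    rw [inv_mul_cancel_left₀ (Nat.cast_ne_zero.2 hn)]
  have hone : Tendsto (fun n => 1 + g n) atTop (𝓝 1) := by simpa using hg0.const_add 1
  have hquot := (Real.tendsto_one_add_pow_exp_of_tendsto hg).div hone one_ne_zero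
  rw [div_one] at hquot
  refine hquot.congr' ?_
  filter_upwards [eventually_ne_atTop 0, hone.eventually_ne one_ne_zero] with n hn hne
  rw [Pi.div_apply, div_eq_iff hne, pow_sub_one_mul hn]

-- With `b = 1 - 2c/n ≤ a = (1 - c/n)²` and `n² (a - b) = c²`, convexity of `x ↦ xⁿ` traps
-- `n (aⁿ - bⁿ)` between `c² bⁿ⁻¹` and `c² aⁿ⁻¹`.
lemma tendsto_mul_one_sub_two_mul_div_pow_sub (c : ℝ) :
    Tendsto (fun n : ℕ => (n : ℝ) * ((1 - 2 * (c / n)) ^ n - (1 - c / n) ^ (2 * n))) atTop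
      (𝓝 (-(c ^ 2 * Real.exp (-(2 * c))))) := by
  have hb : Tendsto (fun n : ℕ => (1 + -(2 * (c / n))) ^ (n - 1)) atTop
      (𝓝 (Real.exp (-(2 * c)))) := by
    refine tendsto_one_add_pow_pred_exp_of_tendsto (tendsto_const_nhds.congr' ?_)
    filter_upwards [eventually_ne_atTop 0] with n hn
    field_simp
  have ha : Tendsto (fun n : ℕ => (1 + (-(2 * (c / n)) + (c / n) ^ 2)) ^ (n - 1)) atTop
      (𝓝 (Real.exp (-(2 * c)))) := by
    have h := (tendsto_const_div_atTop_nhds_zero_nat (c ^ 2)).const_add (-(2 * c))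
    rw [add_zero] at h
    refine tendsto_one_add_pow_pred_exp_of_tendsto (h.congr' ?_)
    filter_upwards [eventually_ne_atTop 0] with n hn
    field_simp
  refine tendsto_of_tendsto_of_tendsto_of_le_of_le' (ha.const_mul (c ^ 2)).neg
    (hb.const_mul (c ^ 2)).neg ?_ ?_
  all_goals
    filter_upwards [eventually_ne_atTop 0,
      (tendsto_const_div_atTop_nhds_zero_nat c).eventually_le_const one_half_pos] with n hn hc
    have hb0 : 0 ≤ 1 + -(2 * (c / n)) := by linarith
    have hab : 1 + -(2 * (c / n)) ≤ 1 + (-(2 * (c / n)) + (c / n) ^ 2) := by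
      linarith [sq_nonneg (c / n)]
    have hc2 : (n : ℝ) * (n * (c / n) ^ 2) = c ^ 2 := by field_simp
    have hsq : 1 + (-(2 * (c / n)) + (c / n) ^ 2) = (1 - c / n) ^ 2 := by ring
    rw [pow_mul, ← hsq, sub_eq_add_neg 1 (2 * (c / n)), ← neg_sub, mul_neg, neg_le_neg_iff, ← hc2,
      mul_assoc]
    refine mul_le_mul_of_nonneg_left ?_ n.cast_nonneg
  · linarith [pow_sub_pow_le_nat_mul_pow_mul_sub hb0 hab n]
  · linarith [nat_mul_pow_mul_sub_le_pow_sub_pow hb0 hab n]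

end PowerLimits

section LensIntegrals

variable {E : Type*} [NormedAddCommGroup E] [MeasurableSpace E] [BorelSpace E]
  [SecondCountableTopology E] [ProperSpace E] (μ : Measure E) [IsFiniteMeasureOnCompacts μ]
  [SFinite μ] (ρ : ℝ)

lemma integrable_comp_lensVolume {F : ℝ → ℝ} (hF : Continuous F) (hF0 : F 0 = 0) :
    Integrable (fun w => F (lensVolume μ ρ w)) μ := by
  obtain ⟨C, hC⟩ := (isCompact_Icc (a := 0) (b := μ.real (closedBall (0 : E) ρ))
    ).exists_bound_of_continuousOn hF.continuousOn
  have hsupp : Function.support (fun w => F (lensVolume μ ρ w)) ⊆ closedBall 0 (2 * ρ) :=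
    fun w hw => mem_closedBall_zero_iff.2 <| le_of_not_gt fun h => hw <| by
      simp only [lensVolume_eq_zero μ h, hF0]
  refine (integrableOn_iff_integrable_of_support_subset hsupp).1 ?_
  exact Measure.integrableOn_of_bounded measure_closedBall_lt_top.ne
    (hF.measurable.comp (measurable_lensVolume μ ρ)).aestronglyMeasurable
    (ae_of_all _ fun w => hC _ ⟨lensVolume_nonneg μ ρ w, lensVolume_le μ ρ w⟩)

lemma integral_exp_lensVolume_sub_one_sub_pos [μ.IsAddLeftInvariant] [μ.IsOpenPosMeasure]
    (hρ : 0 < ρ) : 0 < ∫ w, (Real.exp (lensVolume μ ρ w) - 1 - lensVolume μ ρ w) ∂μ := by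
  have hinteg : Integrable (fun w => Real.exp (lensVolume μ ρ w) - 1 - lensVolume μ ρ w) μ :=
    integrable_comp_lensVolume μ ρ (F := fun l => Real.exp l - 1 - l) (by fun_prop) (by simp)
  have hnonneg (w : E) : 0 ≤ Real.exp (lensVolume μ ρ w) - 1 - lensVolume μ ρ w := by
    linarith [Real.add_one_le_exp (lensVolume μ ρ w)]
  have hsupp : Function.support (fun w => Real.exp (lensVolume μ ρ w) - 1 - lensVolume μ ρ w) =
      Function.support (lensVolume μ ρ) := by
    ext w
    refine not_congr ⟨fun h => ?_, fun h => by simp [h]⟩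
    by_contra hne
    linarith [Real.add_one_lt_exp hne]
  rw [integral_pos_iff_support_of_nonneg hnonneg hinteg, hsupp,
    ← integral_pos_iff_support_of_nonneg (lensVolume_nonneg μ ρ) (integrable_lensVolume μ ρ),
    integral_lensVolume]
  exact pow_pos (ENNReal.toReal_pos (measure_closedBall_pos μ 0 hρ).ne'
    measure_closedBall_lt_top.ne) 2

end LensIntegrals

section Polar

variable {d : ℕ} {ρ : ℝ}

lemma norm_unitVec (hd : d ≠ 0) : ‖unitVec d‖ = 1 := by
  rw [unitVec, dif_pos hd.pos, PiLp.norm_single, norm_one]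

lemma omegaVol_norm (hd : d ≠ 0) (w : EuclideanSpace ℝ (Fin d)) :
    omegaVol d ‖w‖ =
      volume.real (closedBall (0 : EuclideanSpace ℝ (Fin d)) 1 ∪ closedBall w 1) := by
  have hnorm : ‖w‖ = ‖‖w‖ • unitVec d‖ := by
    rw [norm_smul, norm_unitVec hd, norm_norm, mul_one]
  set R := Submodule.reflection (ℝ ∙ (w - ‖w‖ • unitVec d))ᗮ
  have hpre : R ⁻¹' (closedBall 0 1 ∪ closedBall (‖w‖ • unitVec d) 1) =
      closedBall 0 1 ∪ closedBall w 1 := by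
    rw [← Submodule.reflection_sub hnorm, preimage_union, LinearIsometryEquiv.preimage_closedBall,
      LinearIsometryEquiv.preimage_closedBall, LinearIsometryEquiv.symm_apply_apply, map_zero]
  rw [omegaVol, ← hpre, Measure.real, R.measurePreserving.measure_preimage
    (measurableSet_closedBall.union measurableSet_closedBall).nullMeasurableSet]

open scoped Pointwise in
lemma lensVolume_smul (hd : d ≠ 0) (hρ : 0 ≤ ρ) (w : EuclideanSpace ℝ (Fin d)) :
    lensVolume volume ρ (ρ • w) = 2 * phi d ρ - ρ ^ d * omegaVol d ‖w‖ := by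
  have hinter := measureReal_union_add_inter (μ := volume)
    (s := closedBall (0 : EuclideanSpace ℝ (Fin d)) ρ) (t := closedBall (ρ • w) ρ)
    measurableSet_closedBall measure_closedBall_lt_top.ne measure_closedBall_lt_top.ne
  rw [Measure.addHaar_real_closedBall_center volume (ρ • w),
    ← phi_eq_measureReal_closedBall d hρ] at hinter
  have hunion : closedBall (0 : EuclideanSpace ℝ (Fin d)) ρ ∪ closedBall (ρ • w) ρ =
      ρ • (closedBall 0 1 ∪ closedBall w 1) := by
    rw [Set.smul_set_union, _root_.smul_closedBall _ _ zero_le_one,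
      _root_.smul_closedBall _ _ zero_le_one, smul_zero, Real.norm_of_nonneg hρ, mul_one]
  have hscale : volume.real (closedBall (0 : EuclideanSpace ℝ (Fin d)) ρ ∪ closedBall (ρ • w) ρ) =
      ρ ^ d * omegaVol d ‖w‖ := by
    rw [omegaVol_norm hd, hunion, Measure.real, Measure.addHaar_smul_of_nonneg _ hρ,
      ENNReal.toReal_mul, ENNReal.toReal_ofReal (by positivity), finrank_euclideanSpace_fin,
      Measure.real]
  rw [lensVolume]
  linarith

lemma setIntegral_closedBall_fun_norm (hd : d ≠ 0) {r : ℝ} (hr : 0 ≤ r) (f : ℝ → ℝ) :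
    ∫ w in closedBall (0 : EuclideanSpace ℝ (Fin d)) r, f ‖w‖ =
      d * unitBallVol d * ∫ t in (0 : ℝ)..r, f t * t ^ (d - 1) := by
  have : Nonempty (Fin d) := ⟨⟨0, hd.pos⟩⟩
  have hball : (closedBall (0 : EuclideanSpace ℝ (Fin d)) r).indicator (fun w => f ‖w‖) =
      fun w => (Iic r).indicator f ‖w‖ := by
    ext w
    simp only [indicator, mem_closedBall_zero_iff, mem_Iic]
  have hline (y : ℝ) : y ^ (d - 1) • (Iic r).indicator f y =
      (Iic r).indicator (fun t => f t * t ^ (d - 1)) y := by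
    simp only [indicator, smul_eq_mul, mul_ite, mul_zero, mul_comm]
  rw [← integral_indicator measurableSet_closedBall, hball,
    integral_fun_norm_addHaar volume ((Iic r).indicator f), finrank_euclideanSpace_fin]
  simp_rw [hline]
  rw [setIntegral_indicator measurableSet_Iic, Ioi_inter_Iic, ← intervalIntegral.integral_of_le hr,
    ← Measure.addHaar_real_closedBall_eq_addHaar_real_ball, nsmul_eq_mul, smul_eq_mul, mul_assoc,
    unitBallVol, Measure.real]

open scoped Pointwise in
lemma setIntegral_exp_lensVolume (hd : d ≠ 0) (hρ : 0 < ρ) :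
    ∫ w in closedBall (0 : EuclideanSpace ℝ (Fin d)) (2 * ρ), Real.exp (lensVolume volume ρ w) =
      Real.exp (2 * phi d ρ) * (ρ ^ d * Jint 2 d ρ) := by
  have hball : closedBall (0 : EuclideanSpace ℝ (Fin d)) (2 * ρ) = ρ • closedBall 0 2 := by
    rw [_root_.smul_closedBall _ _ zero_le_two, smul_zero, Real.norm_of_nonneg hρ.le, mul_comm]
  have hscale := Measure.setIntegral_comp_smul_of_pos (volume : Measure (EuclideanSpace ℝ (Fin d)))
    (fun w => Real.exp (lensVolume volume ρ w)) (closedBall 0 2) hρ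
  rw [← hball, finrank_euclideanSpace_fin, smul_eq_mul, inv_mul_eq_div,
    eq_div_iff (pow_pos hρ d).ne'] at hscale
  simp_rw [← hscale, lensVolume_smul hd hρ.le, sub_eq_add_neg, Real.exp_add, integral_const_mul]
  rw [setIntegral_closedBall_fun_norm hd zero_le_two fun t => Real.exp (-(ρ ^ d * omegaVol d t)),
    Jint]
  ring

lemma gV_eq_integral (hd : d ≠ 0) (hρ : 0 < ρ) :
    gV d ρ = Real.exp (-(2 * phi d ρ)) *
      ((∫ w : EuclideanSpace ℝ (Fin d), (Real.exp (lensVolume volume ρ w) - 1)) - phi d ρ ^ 2) := by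
  set B := closedBall (0 : EuclideanSpace ℝ (Fin d)) (2 * ρ) with hB
  have hinteg : Integrable (fun w : EuclideanSpace ℝ (Fin d) =>
      Real.exp (lensVolume volume ρ w) - 1) :=
    integrable_comp_lensVolume volume ρ (F := fun l => Real.exp l - 1) (by fun_prop) (by simp)
  have hconst : IntegrableOn (fun _ => (1 : ℝ)) B := integrableOn_const measure_closedBall_lt_top.ne
  have hvol : volume.real B = 2 ^ d * phi d ρ := by
    rw [hB, ← phi_eq_measureReal_closedBall d (by positivity), phi, phi]
    ring
  have hsupp : ∫ w in B, (Real.exp (lensVolume volume ρ w) - 1) =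
      ∫ w, (Real.exp (lensVolume volume ρ w) - 1) :=
    setIntegral_comp_lensVolume volume subset_rfl (F := fun l => Real.exp l - 1) (by simp)
  have hadd := integral_add hinteg.integrableOn hconst
  simp only [sub_add_cancel, setIntegral_const, smul_eq_mul, mul_one] at hadd
  rw [hB, setIntegral_exp_lensVolume hd hρ, ← hB, hsupp, hvol] at hadd
  rw [gV, ← sub_eq_iff_eq_add.2 hadd, Real.exp_neg]
  field_simp
  ring

lemma gV_pos (hd : d ≠ 0) (hρ : 0 < ρ) : 0 < gV d ρ := by
  have hpos := integral_exp_lensVolume_sub_one_sub_pos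
    (volume : Measure (EuclideanSpace ℝ (Fin d))) ρ hρ
  rw [integral_sub (integrable_comp_lensVolume volume ρ (F := fun l => Real.exp l - 1)
      (by fun_prop) (by simp)) (integrable_lensVolume volume ρ), integral_lensVolume,
    ← phi_eq_measureReal_closedBall d hρ.le] at hpos
  rw [gV_eq_integral hd hρ]
  exact mul_pos (Real.exp_pos _) hpos

end Polar

section VarianceLimit

variable {d : ℕ} {ρ : ℝ}

lemma pow_mul_variance_coverage_torKernel {L : ℝ} (hρ : 0 ≤ ρ) (hL : 4 * ρ < L) (n : ℕ) :
    L ^ d * Var[coverage (uniformBox d L) (torKernel L ρ);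
        Measure.pi fun _ : Fin n => uniformBox d L] =
      (∫ w : EuclideanSpace ℝ (Fin d),
        ((1 - 2 * (phi d ρ / L ^ d) + lensVolume volume ρ w / L ^ d) ^ n -
          (1 - 2 * (phi d ρ / L ^ d)) ^ n)) +
      L ^ d * ((1 - 2 * (phi d ρ / L ^ d)) ^ n - (1 - phi d ρ / L ^ d) ^ (2 * n)) := by
  have hL0 : 0 < L := by linarith
  have := isProbabilityMeasure_uniformBox d hL0
  rw [(coverageKernel_torKernel hρ (by linarith)).variance_coverage (torKernel_comm L ρ)]
  set b : ℝ := 1 - 2 * (phi d ρ / L ^ d)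
  set F : ℝ → ℝ := fun l => (b + l / L ^ d) ^ n - b ^ n with hF
  have hF0 : F 0 = 0 := by simp only [hF, zero_div, add_zero, sub_self]
  have hinner (y : Fin d → ℝ) :
      ∫ z, (b + overlap (uniformBox d L) (torKernel L ρ) y z) ^ n ∂uniformBox d L =
        (∫ w in centeredBox d L, (b + lensVolume volume ρ w / L ^ d) ^ n) / L ^ d := by
    simp_rw [overlap_torKernel hρ hL, integral_uniformBox hL0.le]
    rw [setIntegral_box_comp_wrapDiff hL0 y
      ((((measurable_lensVolume volume ρ).div_const _).const_add b).pow_const n)]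
  have hsplit : ∫ w in centeredBox d L, (b + lensVolume volume ρ w / L ^ d) ^ n =
      (∫ w : EuclideanSpace ℝ (Fin d), F (lensVolume volume ρ w)) + L ^ d * b ^ n := by
    have hvol := measureReal_centeredBox (d := d) hL0
    have hconst : IntegrableOn (fun _ => b ^ n) (centeredBox d L) :=
      integrableOn_const fun htop => by
        rw [Measure.real, htop, ENNReal.toReal_top] at hvol
        exact (pow_pos hL0 d).ne hvol
    have hadd : ∫ w in centeredBox d L, (F (lensVolume volume ρ w) + b ^ n) = _ := integral_add
      (integrable_comp_lensVolume volume ρ (F := F) (by fun_prop) hF0).integrableOn hconst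
    rw [setIntegral_comp_lensVolume volume (closedBall_subset_centeredBox (by linarith)) hF0,
      setIntegral_const, hvol, smul_eq_mul] at hadd
    simpa only [hF, sub_add_cancel] using hadd
  simp_rw [hinner]
  rw [integral_const, probReal_univ, one_smul, mul_sub, mul_div_cancel₀ _ (pow_pos hL0 d).ne',
    hsplit]
  ring

lemma abs_pow_sub_pow_le_of_abs_le_one {a b : ℝ} (ha : |a| ≤ 1) (hb : |b| ≤ 1) (n : ℕ) :
    |a ^ n - b ^ n| ≤ n * |a - b| := by
  refine (abs_pow_sub_pow_le a b n).trans ?_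
  rw [mul_comm (|a - b|)]
  exact mul_le_of_le_one_right (by positivity) (pow_le_one₀ (by positivity) (max_le ha hb))

lemma tendsto_integral_pow_lensVolume_sub_pow (d : ℕ) (hρ : 0 ≤ ρ) :
    Tendsto (fun n : ℕ => ∫ w : EuclideanSpace ℝ (Fin d),
        ((1 - 2 * (phi d ρ / n) + lensVolume volume ρ w / n) ^ n - (1 - 2 * (phi d ρ / n)) ^ n))
      atTop (𝓝 (Real.exp (-(2 * phi d ρ)) *
        ∫ w : EuclideanSpace ℝ (Fin d), (Real.exp (lensVolume volume ρ w) - 1))) := by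
  rw [← integral_const_mul]
  refine tendsto_integral_filter_of_dominated_convergence (lensVolume volume ρ) ?_ ?_
    (integrable_lensVolume volume ρ) (ae_of_all _ fun w => ?_)
  · filter_upwards with n
    exact ((((measurable_lensVolume volume ρ).div_const _).const_add _).pow_const n).sub_const _
      |>.aestronglyMeasurable
  · filter_upwards [(tendsto_const_div_atTop_nhds_zero_nat (phi d ρ)).eventually_le_const
      one_half_pos, eventually_ne_atTop 0] with n hn hn0
    filter_upwards with w
    have hn' : (0 : ℝ) < n := by positivity
    have hlens0 := lensVolume_nonneg volume ρ w
    have hlens : lensVolume volume ρ w / n ≤ phi d ρ / n := by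
      rw [phi_eq_measureReal_closedBall d hρ]
      exact div_le_div_of_nonneg_right (lensVolume_le volume ρ w) hn'.le
    have hquot : 0 ≤ lensVolume volume ρ w / n := by positivity
    calc _ ≤ n * |1 - 2 * (phi d ρ / n) + lensVolume volume ρ w / n - (1 - 2 * (phi d ρ / n))| :=
          abs_pow_sub_pow_le_of_abs_le_one (abs_le.2 ⟨by linarith, by linarith⟩)
            (abs_le.2 ⟨by linarith, by linarith⟩) n
      _ = lensVolume volume ρ w := by
          rw [add_sub_cancel_left, abs_of_nonneg hquot, mul_div_cancel₀ _ hn'.ne']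
  · have hconst := Real.tendsto_one_add_div_pow_exp (-(2 * phi d ρ))
    have hlens := Real.tendsto_one_add_div_pow_exp (-(2 * phi d ρ) + lensVolume volume ρ w)
    rw [mul_sub_one, ← Real.exp_add]
    refine (hlens.sub hconst).congr fun n => ?_
    ring

lemma variance_coveredVol (hd : d ≠ 0) {n : ℕ} (hn : n ≠ 0) (ρ : ℝ) :
    Var[coveredVol d n ρ; binppLaw d n] =
      n ^ 2 * Var[coverage (uniformBox d (sideLen d n)) (torKernel (sideLen d n) ρ);
        binppLaw d n] := by
  rw [← variance_const_mul]
  exact congrArg (Var[·; binppLaw d n]) (funext fun ω => coveredVol_eq_mul_coverage hd hn ρ ω)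

theorem tendsto_variance_coveredVol_div (hd : d ≠ 0) (hρ : 0 < ρ) :
    Tendsto (fun n : ℕ => Var[coveredVol d n ρ; binppLaw d n] / n) atTop (𝓝 (gV d ρ)) := by
  have hlim := (tendsto_integral_pow_lensVolume_sub_pow d hρ.le).add
    (tendsto_mul_one_sub_two_mul_div_pow_sub (phi d ρ))
  have hgV : Real.exp (-(2 * phi d ρ)) * (∫ w : EuclideanSpace ℝ (Fin d),
      (Real.exp (lensVolume volume ρ w) - 1)) + -(phi d ρ ^ 2 * Real.exp (-(2 * phi d ρ))) =
      gV d ρ := by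
    rw [gV_eq_integral hd hρ]
    ring
  rw [hgV] at hlim
  refine hlim.congr' ?_
  filter_upwards [eventually_ne_atTop 0, (tendsto_sideLen hd).eventually_gt_atTop (4 * ρ)] with n
    hn hL
  have hvar := pow_mul_variance_coverage_torKernel (d := d) hρ.le hL n
  rw [sideLen_pow hd] at hvar
  rw [← hvar, variance_coveredVol hd hn, sq, mul_assoc,
    mul_div_cancel_left₀ _ (Nat.cast_ne_zero.2 hn)]
  rfl

end VarianceLimit

/-! ### The limiting bound -/

section NormalApproximation

lemma kolDist_eq_kolmogorovDist {Ω : Type*} [MeasurableSpace Ω] {P : Measure Ω}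
    [IsProbabilityMeasure P] {X : Ω → ℝ} (hX : AEMeasurable X P) :
    kolDist P X =
      kolmogorovDist (P.map fun ω => (X ω - ∫ x, X x ∂P) / √(Var[X; P])) stdGauss := by
  have hstd : AEMeasurable (fun ω => (X ω - ∫ x, X x ∂P) / √(Var[X; P])) P :=
    (hX.sub_const _).div_const _
  have := Measure.isProbabilityMeasure_map hstd
  refine iSup_congr fun t => ?_
  rw [cdf_eq_real, cdf_eq_real, map_measureReal_apply_of_aemeasurable hstd measurableSet_Iic]
  rfl

lemma kolDist_const_mul {Ω : Type*} [MeasurableSpace Ω] (P : Measure Ω) (X : Ω → ℝ) {c : ℝ}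
    (hc : 0 < c) : kolDist P (fun ω => c * X ω) = kolDist P X := by
  simp only [kolDist, integral_const_mul, variance_const_mul, ← mul_sub,
    Real.sqrt_mul (sq_nonneg c), Real.sqrt_sq hc.le, mul_div_mul_left _ _ hc.ne']

lemma kolDist_nonneg {Ω : Type*} [MeasurableSpace Ω] (P : Measure Ω) (X : Ω → ℝ) :
    0 ≤ kolDist P X :=
  Real.iSup_nonneg fun _ => abs_nonneg _

/-- The bound obtained for `√n * D_V` when the mean covered fraction is `s` and the variance of
the covered volume is `n * v`. -/
def normalApproxBound (φ s v : ℝ) : ℝ :=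
  (√(2 / 5 * (s * φ ^ 2 / √v ^ 3)) +
    √(2 * (s * φ ^ 2 / √v ^ 3) + √(2 * φ ^ 4 * (1 + 6 * φ + 5 * φ ^ 2)) / v)) ^ 2

lemma normalApproxBound_nat_mul {n v φ : ℝ} (hn : 0 < n) (hv : 0 < v) (hφ : 0 ≤ φ) (s : ℝ) :
    normalApproxBound φ s (n * v) =
      √n * (√(2 / 5 * (s / √v * (φ / n / √v) ^ 2)) + √(2 * (s / √v * (φ / n / √v) ^ 2) +
        √(n * (2 * ((φ / n) ^ 2 + n * (φ / n) ^ 3) ^ 2 +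
          8 * (φ / n) ^ 2 * (n ^ 2 * (φ / n) ^ 4 + n * (φ / n) ^ 3))) / v)) ^ 2 := by
  obtain ⟨a, ha, rfl⟩ : ∃ a, 0 < a ∧ a ^ 2 = n := ⟨√n, Real.sqrt_pos.2 hn, Real.sq_sqrt hn.le⟩
  obtain ⟨b, hb, rfl⟩ : ∃ b, 0 < b ∧ b ^ 2 = v := ⟨√v, Real.sqrt_pos.2 hv, Real.sq_sqrt hv.le⟩
  have hquad : a ^ 2 * (2 * ((φ / a ^ 2) ^ 2 + a ^ 2 * (φ / a ^ 2) ^ 3) ^ 2 +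
        8 * (φ / a ^ 2) ^ 2 * ((a ^ 2) ^ 2 * (φ / a ^ 2) ^ 4 + a ^ 2 * (φ / a ^ 2) ^ 3)) =
      2 * φ ^ 4 * (1 + 6 * φ + 5 * φ ^ 2) / (a ^ 3) ^ 2 := by
    field_simp
    ring
  have hcubic : s * φ ^ 2 / (a * b) ^ 3 = a * (s / b * (φ / a ^ 2 / b) ^ 2) := by
    field_simp
  have hlinear (c : ℝ) : c / (a * b) ^ 2 = a * (c / a ^ 3 / b ^ 2) := by
    field_simp
  rw [normalApproxBound, ← mul_pow, Real.sqrt_sq (by positivity), hquad,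
    Real.sqrt_div (by positivity), Real.sqrt_sq (by positivity : 0 ≤ a ^ 3), Real.sqrt_sq ha.le,
    Real.sqrt_sq hb.le, hcubic, hlinear, mul_left_comm, mul_left_comm 2, ← mul_add,
    Real.sqrt_mul ha.le, Real.sqrt_mul ha.le, ← mul_add, mul_pow, Real.sq_sqrt ha.le]

theorem sqrt_mul_kolDist_coveredVol_le {d n : ℕ} {ρ : ℝ} (hd : d ≠ 0) (hn : n ≠ 0) (hρ : 0 < ρ)
    (hL : 2 * ρ < sideLen d n) (hvar : 0 < Var[coveredVol d n ρ; binppLaw d n]) :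
    √n * kolDist (binppLaw d n) (coveredVol d n ρ) ≤
      normalApproxBound (phi d ρ) (1 - (1 - phi d ρ / n) ^ n)
        (Var[coveredVol d n ρ; binppLaw d n] / n) := by
  have := isProbabilityMeasure_uniformBox d (sideLen_pos d hn)
  have : IsProbabilityMeasure (binppLaw d n) := by
    unfold binppLaw
    infer_instance
  have hn' : (0 : ℝ) < n := by positivity
  have hφ := phi_pos d hρ
  have h := coverageKernel_torKernel (d := d) hρ.le hL
  rw [sideLen_pow hd] at h
  set X : (Fin n → Fin d → ℝ) → ℝ := coverage (uniformBox d (sideLen d n))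
    (torKernel (sideLen d n) ρ)
  rw [variance_coveredVol hd hn] at hvar ⊢
  have hvarX : 0 < Var[X; binppLaw d n] := pos_of_mul_pos_right hvar (by positivity)
  rw [funext fun ω => coveredVol_eq_mul_coverage hd hn ρ ω, kolDist_const_mul _ _ hn',
    kolDist_eq_kolmogorovDist h.measurable_coverage.aemeasurable, sq, mul_assoc,
    mul_div_cancel_left₀ _ hn'.ne', normalApproxBound_nat_mul hn' hvarX hφ.le]
  have hmean : ∫ ω, X ω ∂binppLaw d n = _ := h.integral_coverage
  rw [hmean]
  exact mul_le_mul_of_nonneg_left (h.kolmogorovDist_le (by positivity) hn rfl hvarX)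
    (Real.sqrt_nonneg _)

end NormalApproximation

section LimitingBound

lemma le_one_sub_exp_neg_mul_one_add (x : ℝ) : x ≤ (1 - Real.exp (-x)) * (1 + x) := by
  have h := mul_le_mul_of_nonneg_left (Real.add_one_le_exp x) (Real.exp_pos (-x)).le
  rw [← Real.exp_add, neg_add_cancel, Real.exp_zero] at h
  linarith

lemma two_le_two_mul_sub_div_sub {x c : ℝ} (hc : 0 ≤ c) (hx : c < x) :
    2 ≤ (2 * x - c) / (x - c) := by
  rw [le_div_iff₀ (sub_pos.2 hx)]
  linarith

lemma le_etaV {d n : ℕ} {ρ : ℝ} (hd : d ≠ 0) (hρ : 0 < ρ) (hn : 6 ^ d * phi d ρ < n)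
    (hn' : 3 * 2 ^ d * phi d ρ < n) :
    2 * phi d ρ ^ 2 * (4 * phi d ρ + 1) ^ 2 * (1 + 18 * phi d ρ + 72 * phi d ρ ^ 2) ≤
      etaV d n ρ := by
  have hφ := phi_pos d hρ
  have hfrac := two_le_two_mul_sub_div_sub (by positivity) hn
  have hfrac' : 0 ≤ (2 * n - 3 * 2 ^ d * phi d ρ) / (n - 3 * 2 ^ d * phi d ρ) :=
    zero_le_two.trans (two_le_two_mul_sub_div_sub (by positivity) hn')
  have hpow2 : (2 : ℝ) ≤ 2 ^ d := le_self_pow₀ one_le_two hd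
  have hpow3 : (3 : ℝ) ≤ 3 ^ d := le_self_pow₀ (by norm_num) hd
  have hpow6 : (6 : ℝ) ≤ 6 ^ d := le_self_pow₀ (by norm_num) hd
  have hpow36 : (6 : ℝ) ^ 2 ≤ 6 ^ (2 * d) := pow_le_pow_right₀ (by norm_num) (by lia)
  have hthree : (4 : ℝ) ≤ 3 ^ d + 1 := by linarith
  have hlinear : (18 : ℝ) ≤ (2 ^ d + 1) * 6 ^ d := by nlinarith
  have hquadratic : (72 : ℝ) ≤
      (2 * n - 6 ^ d * phi d ρ) / (n - 6 ^ d * phi d ρ) * 6 ^ (2 * d) := by nlinarith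
  rw [etaV]
  refine le_add_of_le_of_nonneg ?_ (by positivity)
  gcongr

lemma le_of_tendsto_etaV {d : ℕ} {ρ η : ℝ} (hd : d ≠ 0) (hρ : 0 < ρ)
    (hη : Tendsto (fun n => etaV d n ρ) atTop (𝓝 η)) :
    2 * phi d ρ ^ 2 * (4 * phi d ρ + 1) ^ 2 * (1 + 18 * phi d ρ + 72 * phi d ρ ^ 2) ≤ η := by
  refine ge_of_tendsto hη ?_
  have hcast := tendsto_natCast_atTop_atTop (R := ℝ)
  filter_upwards [hcast.eventually_gt_atTop (6 ^ d * phi d ρ),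
    hcast.eventually_gt_atTop (3 * 2 ^ d * phi d ρ)] with n hn hn'
  exact le_etaV hd hρ hn hn'

lemma sqrt_le_one_sub_exp_neg_mul_sqrt {φ η : ℝ} (hφ : 0 ≤ φ)
    (hη : 2 * φ ^ 2 * (4 * φ + 1) ^ 2 * (1 + 18 * φ + 72 * φ ^ 2) ≤ η) :
    √(2 * φ ^ 4 * (1 + 6 * φ + 5 * φ ^ 2)) ≤ (1 - Real.exp (-φ)) * √η := by
  set s := 1 - Real.exp (-φ)
  have hs : 0 ≤ s := sub_nonneg.2 (Real.exp_le_one_iff.2 (neg_nonpos.2 hφ))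
  have hφs : φ ≤ s * (1 + φ) := le_one_sub_exp_neg_mul_one_add φ
  rw [← Real.sqrt_sq hs, ← Real.sqrt_mul (sq_nonneg s)]
  refine Real.sqrt_le_sqrt ?_
  calc 2 * φ ^ 4 * (1 + 6 * φ + 5 * φ ^ 2)
      = 2 * φ ^ 2 * φ ^ 2 * (1 + 6 * φ + 5 * φ ^ 2) := by ring
    _ ≤ 2 * φ ^ 2 * (s * (1 + φ)) ^ 2 * (1 + 18 * φ + 72 * φ ^ 2) := by gcongr <;> norm_num
    _ = s ^ 2 * (2 * φ ^ 2 * (1 * φ + 1) ^ 2 * (1 + 18 * φ + 72 * φ ^ 2)) := by ring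
    _ ≤ s ^ 2 * (2 * φ ^ 2 * (4 * φ + 1) ^ 2 * (1 + 18 * φ + 72 * φ ^ 2)) := by gcongr; norm_num
    _ ≤ s ^ 2 * η := by gcongr

lemma normalApproxBound_le {φ s v r : ℝ} (hφ : 0 ≤ φ) (hs : 0 ≤ s) (hv : 0 < v)
    (hr : √(2 * φ ^ 4 * (1 + 6 * φ + 5 * φ ^ 2)) ≤ s * r) :
    normalApproxBound φ s v ≤
      s / (5 * v) * (√(11 * φ ^ 2 / √v + 5 * r) + 2 * φ / v ^ ((1 : ℝ) / 4)) ^ 2 := by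
  obtain ⟨q, hq, rfl⟩ : ∃ q : ℝ, 0 < q ∧ q ^ 4 = v :=
    ⟨v ^ ((1 : ℝ) / 4), Real.rpow_pos_of_pos hv _, by
      rw [one_div]
      exact_mod_cast Real.rpow_inv_natCast_pow hv.le (n := 4) (by norm_num)⟩
  have hsqrt : √(q ^ 4) = q ^ 2 := by
    rw [Real.sqrt_eq_iff_mul_self_eq_of_pos (by positivity)]
    ring
  have hroot : (q ^ 4) ^ ((1 : ℝ) / 4) = q := by
    rw [one_div]
    exact_mod_cast Real.pow_rpow_inv_natCast hq.le (n := 4) (by norm_num)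
  rw [normalApproxBound, hsqrt, hroot]
  set c := √(2 * φ ^ 4 * (1 + 6 * φ + 5 * φ ^ 2))
  set A := s * φ ^ 2 / (q ^ 2) ^ 3 with hA
  have hA0 : 0 ≤ A := by positivity
  have hcr : c / q ^ 4 ≤ s * r / q ^ 4 := by gcongr
  have hfirst : s / (5 * q ^ 4) * (11 * φ ^ 2 / q ^ 2 + 5 * r) =
      11 / 5 * A + s * r / q ^ 4 := by
    rw [hA]
    field_simp
  have hsecond : s / (5 * q ^ 4) * (2 * φ / q) ^ 2 = 4 / 5 * A := by
    rw [hA]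
    field_simp
    ring
  have hscale : 0 ≤ s / (5 * q ^ 4) := by positivity
  calc (√(2 / 5 * A) + √(2 * A + c / q ^ 4)) ^ 2
      ≤ (√(4 / 5 * A) + √(11 / 5 * A + s * r / q ^ 4)) ^ 2 := by
        gcongr <;> linarith only [hA0, hcr]
    _ = s / (5 * q ^ 4) * (√(11 * φ ^ 2 / q ^ 2 + 5 * r) + 2 * φ / q) ^ 2 := by
        rw [← hfirst, ← hsecond, Real.sqrt_mul hscale, Real.sqrt_mul hscale,
          Real.sqrt_sq (by positivity), ← mul_add, mul_pow, Real.sq_sqrt hscale, add_comm]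

lemma tendsto_normalApproxBound {ι : Type*} {l : Filter ι} (φ : ℝ) {s v : ι → ℝ} {s₀ v₀ : ℝ}
    (hv₀ : 0 < v₀) (hs : Tendsto s l (𝓝 s₀)) (hv : Tendsto v l (𝓝 v₀)) :
    Tendsto (fun i => normalApproxBound φ (s i) (v i)) l (𝓝 (normalApproxBound φ s₀ v₀)) := by
  have hcubic := (hs.mul_const (φ ^ 2)).div (hv.sqrt.pow 3) (by positivity)
  exact ((hcubic.const_mul _).sqrt.add
    ((hcubic.const_mul 2).add (tendsto_const_nhds.div hv hv₀.ne')).sqrt).pow 2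

lemma tendsto_one_sub_one_sub_div_pow (x : ℝ) :
    Tendsto (fun n : ℕ => 1 - (1 - x / n) ^ n) atTop (𝓝 (1 - Real.exp (-x))) := by
  simpa only [neg_div, ← sub_eq_add_neg] using
    (Real.tendsto_one_add_div_pow_exp (-x)).const_sub 1

end LimitingBound

/-- (3.5) of Theorem 2.3: asymptotic upper bound on `n^{1/2} D_V`, where
`η_V(ρ) := lim_{n→∞} η_V(n,ρ)`. -/
theorem limsup_kolDist_coveredVol (d : ℕ) (hd : 1 ≤ d) (ρ : ℝ) (hρ : 0 < ρ)
    (ηlim : ℝ) (hη : Tendsto (fun n : ℕ => etaV d n ρ) atTop (nhds ηlim)) :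
    limsup (fun n : ℕ => Real.sqrt n * kolDist (binppLaw d n) (coveredVol d n ρ)) atTop ≤
      (1 - Real.exp (-phi d ρ)) / (5 * gV d ρ) *
        (Real.sqrt (11 * phi d ρ ^ 2 / Real.sqrt (gV d ρ) + 5 * Real.sqrt ηlim) +
            2 * phi d ρ / gV d ρ ^ ((1 : ℝ) / 4)) ^ 2 := by
  have hd0 : d ≠ 0 := Nat.one_le_iff_ne_zero.1 hd
  have hφ := (phi_pos d hρ).le
  have hg := gV_pos hd0 hρ
  have hvar := tendsto_variance_coveredVol_div hd0 hρ
  have hlim := tendsto_normalApproxBound (phi d ρ) hg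
    (tendsto_one_sub_one_sub_div_pow (phi d ρ)) hvar
  have hbound : ∀ᶠ n : ℕ in atTop, √n * kolDist (binppLaw d n) (coveredVol d n ρ) ≤
      normalApproxBound (phi d ρ) (1 - (1 - phi d ρ / n) ^ n)
        (Var[coveredVol d n ρ; binppLaw d n] / n) := by
    filter_upwards [eventually_ne_atTop 0, (tendsto_sideLen hd0).eventually_gt_atTop (2 * ρ),
      hvar.eventually_const_lt hg] with n hn hL hpos
    exact sqrt_mul_kolDist_coveredVol_le hd0 hn hρ hL
      ((div_pos_iff_of_pos_right (by positivity)).1 hpos)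
  refine (limsup_le_limsup hbound ?_ hlim.isBoundedUnder_le).trans (hlim.limsup_eq.trans_le ?_)
  · exact isCoboundedUnder_le_of_le (x := 0) atTop fun n =>
      mul_nonneg (Real.sqrt_nonneg _) (kolDist_nonneg _ _)
  · exact normalApproxBound_le hφ (sub_nonneg.2 (Real.exp_le_one_iff.2 (neg_nonpos.2 hφ))) hg
      (sqrt_le_one_sub_exp_neg_mul_sqrt hφ (le_of_tendsto_etaV hd0 hρ hη))

end
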